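/- arXiv:2305.12294 — 2 statements merged into one kernel-verified Lean document; each statement's English description precedes it below -/
import Mathlib

section
/- Let M be an o-minimal structure, let A ⊆ M be an infinite definable set, and fix a formula φ(x;y). For a definable type p(x) over M, let p|_{φ,A}(x) = {φ(x;a) : a ∈ A^{|y|}, φ(x;a) ∈ p(x)} denote its restriction to instances of φ with parameters from A. Then the set {p|_{φ,A}(x) : p(x) ∈ S_x^def(M)} of all such restrictions has cardinality at most |A|. -/
open FirstOrder FirstOrder.Language Set Cardinal Filter Topology

universe u

/-- A subset of a linear order is a finite union of points and open intervals
with endpoints in `M ∪ {-∞, +∞}` (lower endpoints in `WithBot M = M ∪ {-∞}`,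
upper endpoints in `WithTop M = M ∪ {+∞}`). -/
def IsFinUnionPointsIntervals {M : Type*} [LinearOrder M] (s : Set M) : Prop :=
  ∃ (P : Finset M) (I : Finset (WithBot M × WithTop M)),
    s = ↑P ∪ ⋃ p ∈ I, {x : M | p.1 < (x : WithBot M) ∧ (x : WithTop M) < p.2}

/-- `M` is an o-minimal `L`-structure: the language defines the linear order of `M`,
which is dense and without endpoints, and every subset of `M` definable with parameters
is a finite union of points and open intervals with endpoints in `M ∪ {-∞, +∞}`. -/
structure IsOMinimal (L : FirstOrder.Language) (M : Type*) [L.Structure M] [LinearOrder M] :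
    Prop where
  denselyOrdered : DenselyOrdered M
  noMinOrder : NoMinOrder M
  noMaxOrder : NoMaxOrder M
  definable_lt : (∅ : Set M).Definable L {x : Fin 2 → M | x 0 < x 1}
  tame : ∀ s : Set M, (Set.univ : Set M).Definable₁ L s → IsFinUnionPointsIntervals s

/-- Given a formula `φ(x;y)` of `L` (with `x` an `m`-tuple and `y` an `n`-tuple) and a tuple
`b ∈ M^n` of parameters, the sentence `φ(x;b)` of the language `L[[M]][[Fin m]]` obtained by
substituting the constants `b` for the variables `y` (complete types over `M` in variables
`x` are maximal consistent sets of such sentences). -/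
noncomputable def paramSentence {L : FirstOrder.Language} {M : Type*} [L.Structure M]
    {m n : ℕ} (φ : L.Formula (Fin m ⊕ Fin n)) (b : Fin n → M) :
    (L[[M]])[[Fin m]].Sentence :=
  Formula.equivSentence
    (((L.lhomWithConstants M).onFormula φ).subst
      (Sum.elim Term.var fun j => (L.con (b j)).term))

/-- A complete type `p(x)` over `M` is definable if, for every formula `φ(x;y)`, there are a
formula `ψ(y;z)` and a tuple `c ∈ M^|z|` with `{b ∈ M^|y| : φ(x;b) ∈ p} = ψ(M^|y|; c)`. -/
def IsDefinableType {L : FirstOrder.Language} {M : Type*} [L.Structure M] {m : ℕ}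
    (p : (L[[M]].completeTheory M).CompleteType (Fin m)) : Prop :=
  ∀ (n : ℕ) (φ : L.Formula (Fin m ⊕ Fin n)),
    ∃ (k : ℕ) (ψ : L.Formula (Fin n ⊕ Fin k)) (c : Fin k → M),
      {b : Fin n → M | paramSentence φ b ∈ p} =
        {b : Fin n → M | ψ.Realize (Sum.elim b c)}

/-- The restriction `p|_{φ,A}` of a type `p(x)` over `M` to the instances of `φ(x;y)` with
parameters from `A`: the set of sentences `φ(x;a)` with `a ∈ A^|y|` and `φ(x;a) ∈ p`. -/
noncomputable def restrictTo {L : FirstOrder.Language} {M : Type*} [L.Structure M] (A : Set M)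
    {m n : ℕ} (φ : L.Formula (Fin m ⊕ Fin n))
    (p : (L[[M]].completeTheory M).CompleteType (Fin m)) :
    Set ((L[[M]])[[Fin m]].Sentence) :=
  {σ | ∃ b : Fin n → M, (∀ i, b i ∈ A) ∧ σ = paramSentence φ b ∧ σ ∈ p}

/-!
A definable type is a definable ultrafilter `p` on `Mᵐ`, and its restriction to `φ` and `A` is
determined by the trace `{b ∈ Aⁿ | φ(M; b) ∈ p}`. Traces are counted by induction on `m`. By uniform
finiteness the fibres of `φ` in the first variable have boundedly many frontier points. Cutting at
the least of them, `x₁ = f(x₂, …, xₘ; b)`, lowers the bound, so it suffices to count the sets of `b`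
with `f(x₂, …, xₘ; b) < x₁` (or `≤`) in `p`. Such a set is an initial segment of `Aⁿ` for the
preorder that compares `f(·; b)` and `f(·; b')` at the type of `(x₂, …, xₘ)`; by the induction
hypothesis at most `|A|` such preorders occur, up to their restriction to `Aⁿ`.

The definable initial segments `C` of a definable total preorder on `Aⁿ` are counted by induction on
`n`. If `C` is cofinally met by a single fibre of the first coordinate, it comes from `Aⁿ⁻¹`.
Otherwise, over some interval `T`, `C` is approached only as the first coordinate tends to one end
of `T`. The cuts that such `C` induce in the parts of `Aⁿ` lying over proper subintervals of `T ∩ A`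
form a definable tree, whose nodes are subsets of `Aⁿ`. With more than `|A|` branches, some node
would contain nodes of its own minimal dimension at infinitely many levels, hence have larger
dimension.
-/

namespace OMinimal

open Matrix (vecCons vecTail)

/-! ### Definable predicates and maps -/

/-- An identification of `Γ` with a finite Cartesian power of `M`. It lets definability be stated
for subsets of `M × M`, `(Fin n → M) × M`, …, instead of only for sets of tuples. -/
class Coordinates (M Γ : Type*) where
  index : Type
  finite_index : Finite index
  equiv : Γ ≃ (index → M)

attribute [instance] Coordinates.finite_index

instance Coordinates.self (M : Type*) : Coordinates M M :=
  ⟨Unit, inferInstance, (Equiv.funUnique Unit M).symm⟩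

instance Coordinates.pi (M : Type*) (ι : Type) [Finite ι] : Coordinates M (ι → M) :=
  ⟨ι, inferInstance, Equiv.refl _⟩

instance Coordinates.prod (M Γ Δ : Type*) [c : Coordinates M Γ] [d : Coordinates M Δ] :
    Coordinates M (Γ × Δ) :=
  ⟨c.index ⊕ d.index, inferInstance,
    (c.equiv.prodCongr d.equiv).trans (Equiv.sumArrowEquivProdArrow _ _ _).symm⟩

section Definability

variable (L : Language) (M : Type*) [L.Structure M]
variable {Γ Δ Θ : Type*} [Coordinates M Γ] [Coordinates M Δ] [Coordinates M Θ]

/-- A predicate on `Γ` that is definable in `M` with parameters, in the coordinates of `Γ`. -/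
def DefPred (P : Γ → Prop) : Prop :=
  (univ : Set M).Definable L {v : Coordinates.index M Γ → M | P (Coordinates.equiv.symm v)}

/-- A map `Γ → Δ` that is definable in `M` with parameters, in the coordinates of `Γ` and `Δ`. -/
def DefMap (f : Γ → Δ) : Prop :=
  (univ : Set M).DefinableMap L fun (v : Coordinates.index M Γ → M) (j : Coordinates.index M Δ) =>
    Coordinates.equiv (f (Coordinates.equiv.symm v)) j

variable {L M}

theorem DefMap.id : DefMap L M fun g : Γ => g := fun _ => by
  simpa using DefinableFun.proj L

theorem DefMap.const (d : Δ) : DefMap L M fun _ : Γ => d :=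
  fun _ => definableFun_const L _ (mem_univ _)

theorem DefMap.fst {f : Γ → Δ × Θ} (hf : DefMap L M f) : DefMap L M fun g => (f g).1 :=
  fun j => hf (Sum.inl j)

theorem DefMap.snd {f : Γ → Δ × Θ} (hf : DefMap L M f) : DefMap L M fun g => (f g).2 :=
  fun j => hf (Sum.inr j)

theorem DefMap.prodMk {f : Γ → Δ} {f' : Γ → Θ} (hf : DefMap L M f) (hf' : DefMap L M f') :
    DefMap L M fun g => (f g, f' g) :=
  Sum.rec hf hf'

theorem DefMap.apply {ι : Type} [Finite ι] {f : Γ → ι → M} (hf : DefMap L M f) (i : ι) :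
    DefMap L M fun g => f g i :=
  fun _ => hf i

theorem DefMap.pi {ι : Type} [Finite ι] {f : Γ → ι → M} (hf : ∀ i, DefMap L M fun g => f g i) :
    DefMap L M f :=
  fun i => hf i ()

theorem DefMap.vecCons {n : ℕ} {f : Γ → M} {f' : Γ → Fin n → M} (hf : DefMap L M f)
    (hf' : DefMap L M f') : DefMap L M fun g => Matrix.vecCons (f g) (f' g) :=
  DefMap.pi (Fin.cases hf hf'.apply)

theorem DefMap.vecTail {n : ℕ} {f : Γ → Fin (n + 1) → M} (hf : DefMap L M f) :
    DefMap L M fun g => Matrix.vecTail (f g) :=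
  DefMap.pi fun i => hf.apply i.succ

theorem DefMap.append {m n : ℕ} {f : Γ → Fin m → M} {f' : Γ → Fin n → M} (hf : DefMap L M f)
    (hf' : DefMap L M f') :
    DefMap L M fun g => Fin.append (f g) (f' g) :=
  DefMap.pi (Fin.addCases (by simpa using hf.apply)
    (by simpa only [Fin.append_right] using hf'.apply))

theorem DefMap.comp {f : Δ → Θ} {f' : Γ → Δ} (hf : DefMap L M f) (hf' : DefMap L M f') :
    DefMap L M fun g => f (f' g) := fun j => by
  simpa using (hf j).comp hf'

theorem DefPred.comp {P : Δ → Prop} {f : Γ → Δ} (hP : DefPred L M P) (hf : DefMap L M f) :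
    DefPred L M fun g => P (f g) := by
  simpa [DefPred] using hP.preimage_map hf

theorem DefMap.of_graph {f : Γ → M} (hf : DefPred L M fun p : Γ × M => f p.1 = p.2) :
    DefMap L M f := fun _ =>
  Definable.preimage_comp (Sum.elim some fun _ => none) hf

theorem DefPred.mem {s : Set Δ} {f : Γ → Δ} (hs : DefPred L M (· ∈ s)) (hf : DefMap L M f) :
    DefPred L M fun g => f g ∈ s :=
  hs.comp hf

theorem DefPred.rel {R : Δ → Θ → Prop} {f : Γ → Δ} {f' : Γ → Θ}
    (hR : DefPred L M fun p : Δ × Θ => R p.1 p.2) (hf : DefMap L M f) (hf' : DefMap L M f') :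
    DefPred L M fun g => R (f g) (f' g) :=
  hR.comp (hf.prodMk hf')

theorem DefPred.weaken {P : Γ → Δ → Prop} (hP : DefPred L M fun p : Γ × Δ => P p.1 p.2) :
    DefPred L M fun p : (Γ × Θ) × Δ => P p.1.1 p.2 :=
  hP.comp (DefMap.id.fst.fst.prodMk DefMap.id.snd)

theorem DefPred.congr {P Q : Γ → Prop} (hP : DefPred L M P) (h : ∀ g, Q g ↔ P g) :
    DefPred L M Q := by
  rwa [funext fun g => propext (h g)]

theorem DefPred.and {P Q : Γ → Prop} (hP : DefPred L M P) (hQ : DefPred L M Q) :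
    DefPred L M fun g => P g ∧ Q g :=
  Definable.inter hP hQ

theorem DefPred.or {P Q : Γ → Prop} (hP : DefPred L M P) (hQ : DefPred L M Q) :
    DefPred L M fun g => P g ∨ Q g :=
  Definable.union hP hQ

theorem DefPred.not {P : Γ → Prop} (hP : DefPred L M P) : DefPred L M fun g => ¬P g :=
  Definable.compl hP

theorem DefPred.imp {P Q : Γ → Prop} (hP : DefPred L M P) (hQ : DefPred L M Q) :
    DefPred L M fun g => P g → Q g :=
  (hP.not.or hQ).congr fun _ => imp_iff_not_or

theorem DefPred.const (p : Prop) : DefPred L M fun _ : Γ => p := by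
  by_cases hp : p
  · simp [DefPred, hp, definable_univ]
  · simp [DefPred, hp, definable_empty]

theorem DefPred.exists {P : Γ → Δ → Prop} (hP : DefPred L M fun p : Γ × Δ => P p.1 p.2) :
    DefPred L M fun g => ∃ d, P g d := by
  have h := Definable.exists_of_finite (β := Coordinates.index M Δ) hP
  have heq (v : Coordinates.index M Γ → M) :
      (∃ d, P (Coordinates.equiv.symm v) d) ↔
        ∃ w : Coordinates.index M Δ → M, P (Coordinates.equiv.symm v) (Coordinates.equiv.symm w) :=
    Coordinates.equiv.symm.surjective.exists
  simp only [DefPred, heq]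
  exact h

theorem DefPred.forall {P : Γ → Δ → Prop} (hP : DefPred L M fun p : Γ × Δ => P p.1 p.2) :
    DefPred L M fun g => ∀ d, P g d :=
  (DefPred.exists (P := fun g d => ¬P g d) hP.not).not.congr fun _ => not_exists_not.symm

theorem DefPred.forall_of_finite {ι : Type*} [Finite ι] {P : ι → Γ → Prop}
    (hP : ∀ i, DefPred L M (P i)) : DefPred L M fun g => ∀ i, P i g := by
  have h := definable_iInter_of_finite hP
  rwa [← Set.ofPred_forall] at h

theorem DefPred.eq {f f' : Γ → Δ} (hf : DefMap L M f) (hf' : DefMap L M f') :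
    DefPred L M fun g => f g = f' g := by
  have h : DefPred L M fun g => ∀ j : Coordinates.index M Δ,
      Coordinates.equiv (f g) j = Coordinates.equiv (f' g) j :=
    DefPred.forall_of_finite fun j => DefinableFun.ofPred_eq (hf j) (hf' j)
  simpa only [← funext_iff, Coordinates.equiv.apply_eq_iff_eq] using h

end Definability

/-! ### Order and germs -/

section Order

theorem eventually_nhds_iff_nhdsLT_nhdsGT {X : Type*} [LinearOrder X] [TopologicalSpace X]
    {P : X → Prop} {x : X} :
    (∀ᶠ y in 𝓝 x, P y) ↔ (∀ᶠ y in 𝓝[<] x, P y) ∧ P x ∧ ∀ᶠ y in 𝓝[>] x, P y := by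
  rw [← nhdsNE_sup_pure x, ← nhdsLT_sup_nhdsGT, eventually_sup, eventually_sup, eventually_pure]
  tauto

variable {L : Language} {M : Type*} [L.Structure M] [LinearOrder M]
variable {Γ : Type*} [Coordinates M Γ]

/-- The order of `M` is definable. -/
class DefinableOrder (L : Language) (M : Type*) [L.Structure M] [LinearOrder M] : Prop where
  definable_lt : DefPred L M fun p : M × M => p.1 < p.2

variable [DefinableOrder L M]

theorem DefPred.lt {f f' : Γ → M} (hf : DefMap L M f) (hf' : DefMap L M f') :
    DefPred L M fun g => f g < f' g :=
  DefinableOrder.definable_lt.comp (hf.prodMk hf')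

theorem DefPred.le {f f' : Γ → M} (hf : DefMap L M f) (hf' : DefMap L M f') :
    DefPred L M fun g => f g ≤ f' g :=
  (DefPred.lt hf' hf).not.congr fun _ => not_lt.symm

theorem DefPred.eventually_atBot [Nonempty M] {P : Γ → M → Prop}
    (hP : DefPred L M fun p : Γ × M => P p.1 p.2) : DefPred L M fun g => ∀ᶠ y in atBot, P g y :=
  (DefPred.exists (Δ := M) (P := fun g b => ∀ y, y ≤ b → P g y)
    (.forall (.imp (.le DefMap.id.snd DefMap.id.fst.snd)
      hP.weaken))).congr fun _ => Filter.eventually_atBot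

variable [TopologicalSpace M] [OrderTopology M]

theorem DefPred.eventually_nhdsGT [NoMaxOrder M] {f : Γ → M} {P : Γ → M → Prop}
    (hf : DefMap L M f) (hP : DefPred L M fun p : Γ × M => P p.1 p.2) :
    DefPred L M fun g => ∀ᶠ y in 𝓝[>] f g, P g y := by
  refine (DefPred.exists (Δ := M) (P := fun g b => f g < b ∧ ∀ y, f g < y ∧ y < b → P g y)
    (.and (.lt (hf.comp DefMap.id.fst) DefMap.id.snd) (.forall (.imp (.and (.lt ?_ ?_) (.lt ?_ ?_))
      hP.weaken)))).congr fun g => mem_nhdsGT_iff_exists_Ioo_subset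
  exacts [hf.comp DefMap.id.fst.fst, DefMap.id.snd, DefMap.id.snd, DefMap.id.fst.snd]

theorem DefPred.eventually_nhdsLT [NoMinOrder M] {f : Γ → M} {P : Γ → M → Prop}
    (hf : DefMap L M f) (hP : DefPred L M fun p : Γ × M => P p.1 p.2) :
    DefPred L M fun g => ∀ᶠ y in 𝓝[<] f g, P g y := by
  refine (DefPred.exists (Δ := M) (P := fun g b => b < f g ∧ ∀ y, b < y ∧ y < f g → P g y)
    (.and (.lt DefMap.id.snd (hf.comp DefMap.id.fst)) (.forall (.imp (.and (.lt ?_ ?_) (.lt ?_ ?_))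
      hP.weaken)))).congr fun g => mem_nhdsLT_iff_exists_Ioo_subset
  exacts [DefMap.id.fst.snd, DefMap.id.snd, DefMap.id.snd, hf.comp DefMap.id.fst.fst]

theorem DefPred.eventually_nhds [NoMinOrder M] [NoMaxOrder M] {f : Γ → M} {P : Γ → M → Prop}
    (hf : DefMap L M f) (hP : DefPred L M fun p : Γ × M => P p.1 p.2) :
    DefPred L M fun g => ∀ᶠ y in 𝓝 (f g), P g y :=
  ((DefPred.eventually_nhdsLT hf hP).and ((hP.comp (DefMap.id.prodMk hf)).and
    (DefPred.eventually_nhdsGT hf hP))).congr fun _ => eventually_nhds_iff_nhdsLT_nhdsGT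

theorem DefPred.mem_interior [NoMinOrder M] [NoMaxOrder M] {f : Γ → M} {P : Γ → M → Prop}
    (hf : DefMap L M f) (hP : DefPred L M fun p : Γ × M => P p.1 p.2) :
    DefPred L M fun g => f g ∈ interior {y | P g y} :=
  (DefPred.eventually_nhds hf hP).congr fun _ => mem_interior_iff_mem_nhds

theorem DefPred.mem_frontier [NoMinOrder M] [NoMaxOrder M] {f : Γ → M} {P : Γ → M → Prop}
    (hf : DefMap L M f) (hP : DefPred L M fun p : Γ × M => P p.1 p.2) :
    DefPred L M fun g => f g ∈ frontier {y | P g y} :=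
  ((DefPred.mem_interior hf hP.not).not.and (DefPred.mem_interior hf hP).not).congr fun _ => by
    rw [frontier, closure_eq_compl_interior_compl, Set.mem_sdiff, mem_compl_iff, compl_ofPred]

end Order

/-! ### One-variable consequences of o-minimality -/

/-- The two consequences of o-minimality that the argument rests on: definable subsets of `M` have
finite frontier, and `M` is definably complete. -/
class TameOrder (L : Language) (M : Type*) [L.Structure M] [LinearOrder M] [TopologicalSpace M]
    [OrderTopology M] [DenselyOrdered M] [NoMinOrder M] [NoMaxOrder M] : Prop
    extends DefinableOrder L M where
  finite_frontier {s : Set M} : DefPred L M (· ∈ s) → (frontier s).Finite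
  exists_isLUB {s : Set M} : DefPred L M (· ∈ s) → s.Nonempty → BddAbove s → ∃ c, IsLUB s c

section OneVariable

variable {L : Language} {M : Type*} [L.Structure M] [LinearOrder M] [TopologicalSpace M]
  [OrderTopology M] [DenselyOrdered M] [NoMinOrder M] [NoMaxOrder M] [TameOrder L M]
variable {s : Set M}

theorem exists_isGLB (hs : DefPred L M (· ∈ s)) (hne : s.Nonempty) (hbdd : BddBelow s) :
    ∃ c, IsGLB s c := by
  have hlow : DefPred L M (· ∈ lowerBounds s) :=
    DefPred.forall (P := fun b y => y ∈ s → b ≤ y)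
      ((hs.comp DefMap.id.snd).imp (.le DefMap.id.fst DefMap.id.snd))
  obtain ⟨c, hc⟩ := TameOrder.exists_isLUB hlow hbdd hne.bddAbove_lowerBounds
  exact ⟨c, isLUB_lowerBounds.1 hc⟩

theorem mem_of_mem_of_disjoint_frontier {a b : M} (hs : DefPred L M (· ∈ s)) (hab : a ≤ b)
    (hfr : Disjoint (Icc a b) (frontier s)) (ha : a ∈ s) : b ∈ s := by
  have hT : DefPred L M (· ∈ {z | a ≤ z ∧ z ≤ b ∧ ∀ y, a ≤ y ∧ y ≤ z → y ∈ s}) :=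
    .and (.le (.const a) .id) (.and (.le .id (.const b)) (.forall (.imp (.and
      (.le (.const a) DefMap.id.snd) (.le DefMap.id.snd DefMap.id.fst)) (hs.comp DefMap.id.snd))))
  set T := {z | a ≤ z ∧ z ≤ b ∧ ∀ y, a ≤ y ∧ y ≤ z → y ∈ s}
  have haT : a ∈ T := ⟨le_rfl, hab, fun y hy => le_antisymm hy.1 hy.2 ▸ ha⟩
  obtain ⟨c, hc⟩ := TameOrder.exists_isLUB hT ⟨a, haT⟩ ⟨b, fun z hz => hz.2.1⟩
  have hac : a ≤ c := hc.1 haT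
  have hcb : c ≤ b := hc.2 fun z hz => hz.2.1
  have hcl : c ∈ closure s :=
    closure_mono (fun z hz => hz.2.2 z ⟨hz.1, le_rfl⟩) (hc.mem_closure ⟨a, haT⟩)
  have hinterior : c ∈ interior s := by
    by_contra h
    exact disjoint_left.1 hfr ⟨hac, hcb⟩ ⟨hcl, h⟩
  obtain ⟨l, r, ⟨hlc, hcr⟩, hlr⟩ :=
    mem_nhds_iff_exists_Ioo_subset.1 (mem_interior_iff_mem_nhds.1 hinterior)
  obtain ⟨t, ht, hlt, -⟩ := hc.exists_between hlc
  have hstep (d : M) (had : a ≤ d) (hdb : d ≤ b) (hdr : d < r) : d ∈ T := by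
    refine ⟨had, hdb, fun y hy => ?_⟩
    by_cases hyt : y ≤ t
    exacts [ht.2.2 y ⟨hy.1, hyt⟩, hlr ⟨hlt.trans (not_le.1 hyt), hy.2.trans_lt hdr⟩]
  rcases hcb.eq_or_lt with rfl | hcb
  · exact (hstep c hac le_rfl hcr).2.2 c ⟨hac, le_rfl⟩
  · obtain ⟨d, hcd, hd⟩ := exists_between (lt_min hcb hcr)
    obtain ⟨hdb, hdr⟩ := lt_min_iff.1 hd
    exact absurd (hc.1 (hstep d (hac.trans hcd.le) hdb.le hdr)) hcd.not_ge

/-- Definable connectedness of intervals. -/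
theorem mem_iff_mem_of_disjoint_frontier {T : Set M} (hs : DefPred L M (· ∈ s))
    (hT : T.OrdConnected) (hfr : Disjoint T (frontier s)) {a b : M} (ha : a ∈ T) (hb : b ∈ T) :
    a ∈ s ↔ b ∈ s := by
  wlog hab : a ≤ b generalizing a b
  · exact (this hb ha (le_of_not_ge hab)).symm
  have hIcc : Disjoint (Icc a b) (frontier s) := hfr.mono_left (hT.out ha hb)
  refine ⟨mem_of_mem_of_disjoint_frontier hs hab hIcc, fun h => by_contra fun ha' => ?_⟩
  exact mem_of_mem_of_disjoint_frontier (s := sᶜ) hs.not hab (by rwa [frontier_compl]) ha' h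

theorem eventually_mem_or_eventually_notMem_of_ordConnected (hs : DefPred L M (· ∈ s))
    {l : Filter M} [l.NeBot] {T : Set M} (hTl : T ∈ l) (hT : T.OrdConnected)
    (hfr : Disjoint T (frontier s)) : (∀ᶠ y in l, y ∈ s) ∨ ∀ᶠ y in l, y ∉ s := by
  obtain ⟨a, ha⟩ := l.nonempty_of_mem hTl
  by_cases has : a ∈ s
  · exact .inl (mem_of_superset hTl fun b hb =>
      (mem_iff_mem_of_disjoint_frontier hs hT hfr ha hb).1 has)
  · exact .inr (mem_of_superset hTl fun b hb hbs =>
      has ((mem_iff_mem_of_disjoint_frontier hs hT hfr ha hb).2 hbs))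

theorem eventually_nhdsGT_mem_or_notMem (hs : DefPred L M (· ∈ s)) (x : M) :
    (∀ᶠ y in 𝓝[>] x, y ∈ s) ∨ ∀ᶠ y in 𝓝[>] x, y ∉ s := by
  have hfin : Set.univ \ frontier s ∈ 𝓝[>] x :=
    nhdsWithin_mono x (fun _ hy => ne_of_gt hy)
      (nhdsNE_of_nhdsNE_sdiff_finite univ_mem (TameOrder.finite_frontier hs))
  obtain ⟨b, hb, hsub⟩ := mem_nhdsGT_iff_exists_Ioo_subset.1 hfin
  exact eventually_mem_or_eventually_notMem_of_ordConnected hs (Ioo_mem_nhdsGT hb) ordConnected_Ioo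
    (subset_compl_iff_disjoint_right.1 (compl_eq_univ_sdiff (frontier s) ▸ hsub))

theorem eventually_nhdsLT_mem_or_notMem (hs : DefPred L M (· ∈ s)) (x : M) :
    (∀ᶠ y in 𝓝[<] x, y ∈ s) ∨ ∀ᶠ y in 𝓝[<] x, y ∉ s := by
  have hfin : Set.univ \ frontier s ∈ 𝓝[<] x :=
    nhdsWithin_mono x (fun _ hy => ne_of_lt hy)
      (nhdsNE_of_nhdsNE_sdiff_finite univ_mem (TameOrder.finite_frontier hs))
  obtain ⟨b, hb, hsub⟩ := mem_nhdsLT_iff_exists_Ioo_subset.1 hfin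
  exact eventually_mem_or_eventually_notMem_of_ordConnected hs (Ioo_mem_nhdsLT hb) ordConnected_Ioo
    (subset_compl_iff_disjoint_right.1 (compl_eq_univ_sdiff (frontier s) ▸ hsub))

theorem nonempty_interior_of_infinite (hs : DefPred L M (· ∈ s)) (hinf : s.Infinite) :
    (interior s).Nonempty := by
  obtain ⟨x, hx, hxf⟩ := (hinf.sdiff (TameOrder.finite_frontier hs)).nonempty
  exact ⟨x, by_contra fun h => hxf ⟨subset_closure hx, h⟩⟩

theorem exists_Ioo_subset_of_infinite (hs : DefPred L M (· ∈ s)) (hinf : s.Infinite) :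
    ∃ a b, a < b ∧ Ioo a b ⊆ s := by
  obtain ⟨x, hx⟩ := nonempty_interior_of_infinite hs hinf
  obtain ⟨a, b, hab, hsub⟩ := mem_nhds_iff_exists_Ioo_subset.1 (mem_interior_iff_mem_nhds.1 hx)
  exact ⟨a, b, hab.1.trans hab.2, hsub⟩

theorem infinite_iff_exists_Ioo_subset (hs : DefPred L M (· ∈ s)) :
    s.Infinite ↔ ∃ a b, a < b ∧ Ioo a b ⊆ s :=
  ⟨exists_Ioo_subset_of_infinite hs, fun ⟨_, _, hab, h⟩ => (Ioo_infinite hab).mono h⟩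

variable {Γ : Type*} [Coordinates M Γ]

theorem DefPred.infinite {P : Γ → M → Prop} (hP : DefPred L M fun p : Γ × M => P p.1 p.2) :
    DefPred L M fun g => {y | P g y}.Infinite := by
  refine (DefPred.exists (Δ := M) (P := fun g a => ∃ b, a < b ∧ ∀ y, a < y ∧ y < b → P g y)
    (.exists (.and (.lt ?_ ?_) (.forall (.imp (.and (.lt ?_ ?_) (.lt ?_ ?_)) ?_))))).congr
    fun g => infinite_iff_exists_Ioo_subset (hP.comp ((DefMap.const g).prodMk .id))
  exacts [DefMap.id.fst.snd, DefMap.id.snd, DefMap.id.fst.fst.snd, DefMap.id.snd,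
    DefMap.id.snd, DefMap.id.fst.snd, hP.comp (DefMap.id.fst.fst.fst.prodMk DefMap.id.snd)]

theorem DefPred.finite {P : Γ → M → Prop} (hP : DefPred L M fun p : Γ × M => P p.1 p.2) :
    DefPred L M fun g => {y | P g y}.Finite :=
  hP.infinite.not.congr fun _ => not_infinite.symm

end OneVariable

/-- Called without its argument, this proves that a predicate built from definable predicates and
maps of the context is definable: the default value of `h` serves as a definability tactic. -/
theorem defPred {L : Language} {M : Type*} [L.Structure M] {Γ : Type*} [Coordinates M Γ]
    {P : Γ → Prop} (h : DefPred L M P := by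
    try simp +zetaDelta only [Set.mem_ofPred_eq, mem_inter_iff, mem_union, mem_compl_iff,
      Set.mem_sdiff, mem_Iio, mem_Ioi, mem_Iic, mem_Ici, mem_Ioo, mem_Icc, mem_Ico, mem_Ioc,
      mem_singleton_iff, ne_eq, gt_iff_lt, ge_iff_le, Set.Nonempty, subset_def, Filter.Frequently,
      ExistsUnique]
    repeat' with_reducible first
      | assumption
      | exact DefPred.const _
      | exact DefMap.id
      | exact DefMap.const _
      | apply DefMap.fst
      | apply DefMap.snd
      | apply DefMap.prodMk
      | apply DefMap.vecCons
      | apply DefMap.vecTail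
      | apply DefMap.apply
      | apply DefPred.and
      | apply DefPred.or
      | apply DefPred.not
      | apply DefPred.exists
      | apply DefPred.imp
      | apply DefPred.forall
      | apply DefPred.lt
      | apply DefPred.le
      | apply DefPred.eq
      | apply DefPred.eventually_nhdsGT
      | apply DefPred.eventually_nhdsLT
      | apply DefPred.eventually_nhds
      | apply DefPred.eventually_atBot
      | apply DefPred.mem_interior
      | apply DefPred.mem_frontier
      | apply DefPred.infinite
      | apply DefPred.finite
      | refine DefPred.mem (by assumption) ?_
      | refine DefMap.comp (by assumption) ?_
      | refine DefPred.comp (by assumption) ?_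
      | refine DefPred.rel (by assumption) ?_ ?_) : DefPred L M P := h

/-! ### Definable families of subsets of `M` indexed by `M` -/

section Plane

variable {L : Language} {M : Type*} [L.Structure M] [LinearOrder M] [TopologicalSpace M]
  [OrderTopology M] [DenselyOrdered M] [NoMinOrder M] [NoMaxOrder M] [TameOrder L M]

theorem exists_strictMonoOn_of_finite {α : Type*} [LinearOrder α] {f : M → α}
    (hf : DefPred L M fun p : M × M => f p.1 ≤ f p.2) {a b : M} (hab : a < b)
    (hfin : ∀ u ∈ Ioo a b, {v | v ∈ Ioo u b ∧ f v ≤ f u}.Finite) :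
    ∃ d < b, StrictMonoOn f (Ioo d b) := by
  set R : Set M := {u | ∀ v, u < v ∧ v < b → ¬f v ≤ f u}
  have hR : DefPred L M (· ∈ R) :=
    .forall (.imp (.and defPred defPred) (hf.comp (DefMap.id.snd.prodMk DefMap.id.fst)).not)
  have hfreq (c : M) (hc : c < b) : ∃ u ∈ Ioo c b, u ∈ R := by
    obtain ⟨u, hu, hub⟩ := exists_between (max_lt hab hc)
    obtain ⟨hau, hcu⟩ := max_lt_iff.1 hu
    have hfin' := (hfin u ⟨hau, hub⟩).insert u
    obtain ⟨w, hw, hmin⟩ := Set.exists_min_image _ (fun v => toLex (f v, OrderDual.toDual v)) hfin'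
      (insert_nonempty _ _)
    have hw' : w ∈ Ico u b ∧ f w ≤ f u := by
      rcases hw with rfl | hw
      exacts [⟨⟨le_rfl, hub⟩, le_rfl⟩, ⟨⟨hw.1.1.le, hw.1.2⟩, hw.2⟩]
    refine ⟨w, ⟨hcu.trans_le hw'.1.1, hw'.1.2⟩, fun v hv hvw => ?_⟩
    have hle := hmin v (.inr ⟨⟨hw'.1.1.trans_lt hv.1, hv.2⟩, hvw.trans hw'.2⟩)
    rcases Prod.Lex.toLex_le_toLex.1 hle with h | h
    exacts [h.not_ge hvw, h.2.not_gt hv.1]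
  have hev : ∀ᶠ u in 𝓝[<] b, u ∈ R := by
    refine (eventually_nhdsLT_mem_or_notMem hR b).resolve_right fun h => ?_
    obtain ⟨c, hc, hsub⟩ := mem_nhdsLT_iff_exists_Ioo_subset.1 h
    obtain ⟨u, hu, huR⟩ := hfreq c hc
    exact hsub hu huR
  obtain ⟨d, hd, hsub⟩ := mem_nhdsLT_iff_exists_Ioo_subset.1 hev
  exact ⟨d, hd, fun u hu v hv huv => not_le.1 (hsub hu v ⟨huv, hv.2⟩)⟩

theorem finite_setOf_exists_mem_of_upward {W : Set (M × M)} (hW : DefPred L M (· ∈ W)) {h : M → M}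
    (hh : DefMap L M h) (hmono : Monotone h) (hcont : Continuous h)
    (hlt : ∀ s y, (s, y) ∈ W → s < h y)
    (hup : ∀ s s' y, s ≤ s' → s' < h y → (s, y) ∈ W → (s', y) ∈ W)
    (hfin : ∀ s, {y | (s, y) ∈ W}.Finite) : {y | ∃ s, (s, y) ∈ W}.Finite := by
  by_contra hinf
  obtain ⟨a, b, hab, hsub⟩ := exists_Ioo_subset_of_infinite (L := L) defPred hinf
  let f (y : M) : UpperSet M := ⟨{s | h y ≤ s ∨ (s, y) ∈ W}, fun s s' hs h' => by
    rcases le_or_gt (h y) s' with hys' | hys'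
    exacts [.inl hys', .inr (hup s s' y hs hys' (h'.resolve_left (hs.trans_lt hys').not_ge))]⟩
  have mem_f {s y} : s ∈ f y ↔ h y ≤ s ∨ (s, y) ∈ W := Iff.rfl
  have hf : DefPred L M fun p : M × M => f p.1 ≤ f p.2 :=
    DefPred.congr (P := fun p : M × M => ∀ s, (h p.2 ≤ s ∨ (s, p.2) ∈ W) → h p.1 ≤ s ∨ (s, p.1) ∈ W)
      defPred fun _ => Iff.rfl
  obtain ⟨d, hdb, hd⟩ := exists_strictMonoOn_of_finite hf hab fun u hu => by
    obtain ⟨s, hs⟩ := hsub hu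
    refine (hfin s).subset fun v ⟨hv, hvu⟩ => (mem_f.1 (hvu (mem_f.2 (.inr hs)))).resolve_left ?_
    exact ((hlt s u hs).trans_le (hmono hv.1.le)).not_ge
  obtain ⟨v, hv, hvb⟩ := exists_between (max_lt hdb hab)
  obtain ⟨hdv, hav⟩ := max_lt_iff.1 hv
  obtain ⟨s, hs⟩ := hsub ⟨hav, hvb⟩
  have hnear : ∀ᶠ u in 𝓝[<] v, s < h u ∧ d < u ∧ u < v :=
    ((hcont.continuousAt.eventually_const_lt (hlt s v hs)).filter_mono nhdsWithin_le_nhds).and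
      (Ioo_mem_nhdsLT hdv)
  obtain ⟨c, hcv, hc⟩ := mem_nhdsLT_iff_exists_Ioo_subset.1 hnear
  refine Ioo_infinite hcv ((hfin s).subset fun u hu => ?_)
  obtain ⟨hsu, hdu, huv⟩ := hc hu
  have hlt' : f u < f v := hd ⟨hdu, huv.trans hvb⟩ ⟨hdv, hvb⟩ huv
  exact (mem_f.1 (hlt'.le (mem_f.2 (.inr hs)))).resolve_left hsu.not_ge

theorem finite_setOf_infinite_of_pairwise_disjoint {P : Set (M × M)} (hP : DefPred L M (· ∈ P))
    (hdisj : ∀ u u' y, (u, y) ∈ P → (u', y) ∈ P → u = u') :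
    {u | {y | (u, y) ∈ P}.Infinite}.Finite := by
  by_contra hinf
  set D : Set M := {y | ∃ u, y ∈ interior {y | (u, y) ∈ P}}
  have hD : DefPred L M (· ∈ D) := defPred
  have hDo : IsOpen D := by
    simpa only [D, ← mem_iUnion, ofPred_mem_eq] using isOpen_iUnion fun u => isOpen_interior
  have hinterior {u v x : M} (hu : x ∈ interior {y | (u, y) ∈ P})
      (hv : x ∈ interior {y | (v, y) ∈ P}) : u = v :=
    hdisj u v x (interior_subset (s := {y | (u, y) ∈ P}) hu)
      (interior_subset (s := {y | (v, y) ∈ P}) hv)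
  choose! y hy using fun (u : M) (hu : {y | (u, y) ∈ P}.Infinite) =>
    nonempty_interior_of_infinite (L := L) defPred hu
  have hF : (frontier D).Finite := TameOrder.finite_frontier hD
  obtain ⟨u, hu, v, hv, huv, heq⟩ := Set.Infinite.exists_ne_map_eq_of_mapsTo hinf
    (f := fun u => {z ∈ frontier D | z < y u}) (fun u _ => sep_subset _ _) hF.finite_subsets
  wlog hle : y u ≤ y v generalizing u v
  · exact this v hv u hu huv.symm heq.symm (le_of_not_ge hle)
  have hIccD : Icc (y u) (y v) ⊆ D := fun z hz => by
    refine (mem_iff_mem_of_disjoint_frontier hD ordConnected_Icc ?_ (left_mem_Icc.2 hle) hz).1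
      ⟨u, hy u hu⟩
    refine disjoint_left.2 fun z hz hzF => ?_
    have hz' : z ∈ {z ∈ frontier D | z < y v} := ⟨hzF, hz.2.lt_of_ne fun h => by
      rw [hDo.frontier_eq] at hzF
      exact hzF.2 (h ▸ ⟨v, hy v hv⟩)⟩
    exact hz.1.not_gt (heq.symm.le hz').2
  have hfr : Disjoint (Icc (y u) (y v)) (frontier (interior {y | (u, y) ∈ P})) := by
    refine disjoint_left.2 fun z hz hzF => ?_
    obtain ⟨w, hw⟩ := hIccD hz
    rw [isOpen_interior.frontier_eq] at hzF
    obtain ⟨x, hxw, hxu⟩ := mem_closure_iff.1 hzF.1 _ isOpen_interior hw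
    obtain rfl := hinterior hxu hxw
    exact hzF.2 hw
  have hyv := (mem_iff_mem_of_disjoint_frontier (L := L) defPred ordConnected_Icc hfr
    (left_mem_Icc.2 hle) (right_mem_Icc.2 hle)).1 (hy u hu)
  exact huv (hinterior hyv (hy v hv))

theorem finite_setOf_infinite_of_finite {B : Set (M × M)} (hB : DefPred L M (· ∈ B))
    (hfin : ∀ y, {u | (u, y) ∈ B}.Finite) : {u | {y | (u, y) ∈ B}.Infinite}.Finite := by
  -- `P s u y`: over `y`, the first point of `B` after `s` is `u`; so `s` and `y` determine `u`.
  let P (s u y : M) : Prop := s < u ∧ (u, y) ∈ B ∧ ∀ v, s < v ∧ v < u → (v, y) ∉ B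
  have hdisj (s u v y : M) (hu : P s u y) (hv : P s v y) : u = v := by
    by_contra hne
    rcases lt_or_gt_of_ne hne with h | h
    exacts [hv.2.2 u ⟨hu.1, h⟩ hu.2.1, hu.2.2 v ⟨hv.1, h⟩ hv.2.1]
  have hanti (s s' u y : M) (hs : s ≤ s') (hu : s' < u) (h : P s u y) : P s' u y :=
    ⟨hu, h.2.1, fun v hv => h.2.2 v ⟨hs.trans_lt hv.1, hv.2⟩⟩
  have hPs (s : M) : {u | {y | P s u y}.Infinite}.Finite :=
    finite_setOf_infinite_of_pairwise_disjoint (L := L) (P := {p | P s p.1 p.2}) defPred (hdisj s)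
  have hP : {u | ∃ s, {y | P s u y}.Infinite}.Finite :=
    finite_setOf_exists_mem_of_upward (L := L) (h := id)
      (W := {p | {y | P p.1 p.2 y}.Infinite}) defPred .id monotone_id continuous_id
      (fun s u hsu => hsu.nonempty.some_mem.1)
      (fun s s' u hs hu h => h.mono fun y => hanti s s' u y hs hu) hPs
  refine hP.subset fun u hu => by_contra fun hno => hu ?_
  simp only [Set.mem_ofPred_eq, not_exists, not_infinite] at hno
  have hcover : {y | ∃ s, P s u y}.Finite :=
    finite_setOf_exists_mem_of_upward (L := L) (h := fun _ => u)
      (W := {p | P p.1 u p.2}) defPred (.const u) monotone_const continuous_const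
      (fun s y h => h.1) (fun s s' y hs hu => hanti s s' u y hs hu) hno
  refine hcover.subset fun y hy => ?_
  have hev : ∀ᶠ v in 𝓝[<] u, v ∈ Set.univ \ {v | (v, y) ∈ B} :=
    nhdsWithin_mono u (fun _ hv => ne_of_lt hv)
      (nhdsNE_of_nhdsNE_sdiff_finite univ_mem (hfin y))
  obtain ⟨s, hs, hsub⟩ := mem_nhdsLT_iff_exists_Ioo_subset.1 hev
  exact ⟨s, hs, hy, fun v hv => (hsub hv).2⟩

theorem finite_setOf_infinite_frontier {U : Set (M × M)} (hU : DefPred L M (· ∈ U)) :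
    {u | {y | u ∈ frontier {v | (v, y) ∈ U}}.Infinite}.Finite :=
  finite_setOf_infinite_of_finite (L := L) (B := {p | p.1 ∈ frontier {v | (v, p.2) ∈ U}}) defPred
    fun y => TameOrder.finite_frontier (L := L) (s := {v | (v, y) ∈ U}) defPred

theorem infinite_setOf_infinite_swap {B : Set (M × M)} (hB : DefPred L M (· ∈ B))
    (hinf : {u | {y | (u, y) ∈ B}.Infinite}.Infinite) :
    {y | {u | (u, y) ∈ B}.Infinite}.Infinite := by
  intro hfin
  refine hinf ((finite_setOf_infinite_of_finite (L := L)
    (B := {p | p ∈ B ∧ {u | (u, p.2) ∈ B}.Finite}) defPred fun y => ?_).subset fun u hu => ?_)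
  · by_cases hy : {u | (u, y) ∈ B}.Finite
    · exact hy.subset fun u hu => hu.1
    · simp [hy]
  · exact (hu.sdiff hfin).mono fun y hy => ⟨hy.1, not_infinite.1 hy.2⟩

end Plane

/-! ### Dimension -/

section Dimension

/-- `DimGE n Z d` says that `Z ⊆ Mⁿ` has o-minimal dimension at least `d`, by recursion on `n`:
some fibre over the first coordinate has dimension at least `d`, or infinitely many of them have
dimension at least `d - 1`. -/
def DimGE {M : Type*} : (n : ℕ) → Set (Fin n → M) → ℕ → Prop
  | 0, Z, d => Z.Nonempty ∧ d = 0
  | n + 1, Z, d => (∃ a, DimGE n {w | vecCons a w ∈ Z} d) ∨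
      ∃ e, d = e + 1 ∧ {a | DimGE n {w | vecCons a w ∈ Z} e}.Infinite

variable {M : Type*} {n d : ℕ} {Y Z : Set (Fin n → M)}

theorem DimGE.mono (h : DimGE n Z d) (hYZ : Z ⊆ Y) : DimGE n Y d := by
  induction n generalizing d with
  | zero => exact ⟨h.1.mono hYZ, h.2⟩
  | succ n ih =>
    obtain ⟨a, ha⟩ | ⟨e, rfl, he⟩ := h
    · exact .inl ⟨a, ih ha fun w hw => hYZ hw⟩
    · exact .inr ⟨e, rfl, he.mono fun a ha => ih ha fun w hw => hYZ hw⟩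

theorem DimGE.le (h : DimGE n Z d) : d ≤ n := by
  induction n generalizing d with
  | zero => exact h.2.le
  | succ n ih =>
    obtain ⟨a, ha⟩ | ⟨e, rfl, he⟩ := h
    exacts [(ih ha).trans n.le_succ, Nat.succ_le_succ (ih he.nonempty.some_mem)]

theorem dimGE_zero (h : Z.Nonempty) : DimGE n Z 0 := by
  induction n with
  | zero => exact ⟨h, rfl⟩
  | succ n ih =>
    obtain ⟨v, hv⟩ := h
    exact .inl ⟨v 0, ih ⟨vecTail v, (Matrix.cons_head_tail v).symm ▸ hv⟩⟩

theorem dimGE_succ_succ {Z : Set (Fin (n + 1) → M)} :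
    DimGE (n + 1) Z (d + 1) ↔ (∃ a, DimGE n {w | vecCons a w ∈ Z} (d + 1)) ∨
      {a | DimGE n {w | vecCons a w ∈ Z} d}.Infinite := by
  simp [DimGE]

theorem dimGE_succ_self {Z : Set (Fin (n + 1) → M)} :
    DimGE (n + 1) Z (n + 1) ↔ {a | DimGE n {w | vecCons a w ∈ Z} n}.Infinite := by
  rw [dimGE_succ_succ, or_iff_right]
  exact fun ⟨a, ha⟩ => n.not_succ_le_self ha.le

theorem DimGE.union (h : DimGE n (Y ∪ Z) d) : DimGE n Y d ∨ DimGE n Z d := by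
  induction n generalizing d with
  | zero => exact (union_nonempty.1 h.1).imp (⟨·, h.2⟩) (⟨·, h.2⟩)
  | succ n ih =>
    obtain ⟨a, ha⟩ | ⟨e, rfl, he⟩ := h
    · exact (ih ha).imp (.inl ⟨a, ·⟩) (.inl ⟨a, ·⟩)
    · have := he.mono (t := {a | DimGE n {w | vecCons a w ∈ Y} e} ∪
        {a | DimGE n {w | vecCons a w ∈ Z} e}) fun a ha => ih (Y := {w | vecCons a w ∈ Y}) ha
      exact (infinite_union.1 this).imp (.inr ⟨e, rfl, ·⟩) (.inr ⟨e, rfl, ·⟩)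

end Dimension

section DefinableDimension

variable {L : Language} {M : Type u} [L.Structure M] [LinearOrder M] [TopologicalSpace M]
  [OrderTopology M] [DenselyOrdered M] [NoMinOrder M] [NoMaxOrder M] [TameOrder L M]

theorem DefPred.dimGE {Γ : Type u} [Coordinates M Γ] {n : ℕ} {P : Γ → (Fin n → M) → Prop}
    (hP : DefPred L M fun p : Γ × (Fin n → M) => P p.1 p.2) (d : ℕ) :
    DefPred L M fun g => DimGE n {w | P g w} d := by
  induction n generalizing Γ d with
  | zero => exact defPred (P := fun g => (∃ w, P g w) ∧ d = 0)
  | succ n ih =>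
    have hslice (e : ℕ) :
        DefPred L M fun p : Γ × M => DimGE n {w | P p.1 (vecCons p.2 w)} e :=
      ih (P := fun p : Γ × M => fun w => P p.1 (vecCons p.2 w))
        (hP.comp (f := fun q : (Γ × M) × (Fin n → M) => (q.1.1, vecCons q.1.2 q.2))
          (.prodMk DefMap.id.fst.fst (.vecCons DefMap.id.fst.snd DefMap.id.snd))) e
    have hexists : DefPred L M fun g => ∃ a, DimGE n {w | P g (vecCons a w)} d :=
      .exists (hslice d)
    cases d with
    | zero => exact hexists.congr fun g => by simp [DimGE]
    | succ d => exact (hexists.or (.infinite (hslice d))).congr fun g => dimGE_succ_succ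

variable {n d : ℕ} {Z : Set (M × (Fin n → M))}

theorem DimGE.exists_of_finite (hZ : DefPred L M (· ∈ Z))
    (hfin : ∀ w, {b | (b, w) ∈ Z}.Finite) (hinf : {b | DimGE n {w | (b, w) ∈ Z} d}.Infinite) :
    DimGE n {w | ∃ b, (b, w) ∈ Z} (d + 1) := by
  induction n generalizing d with
  | zero =>
    refine absurd ((hfin ![]).subset fun b hb => ?_) hinf
    obtain ⟨w, hw⟩ := hb.1
    exact Subsingleton.elim w ![] ▸ hw
  | succ n ih =>
    let D (e : ℕ) : Set (M × M) := {p | DimGE n {w | (p.1, vecCons p.2 w) ∈ Z} e}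
    have hD (e : ℕ) : DefPred L M (· ∈ D e) := .dimGE defPred e
    have hslice (a : M) (e : ℕ) (h : {b | (b, a) ∈ D e}.Infinite) :
        DimGE n {w | ∃ b, (b, vecCons a w) ∈ Z} (e + 1) :=
      ih (Z := {p | (p.1, vecCons a p.2) ∈ Z}) defPred (fun w => hfin (vecCons a w)) h
    rw [dimGE_succ_succ]
    by_cases hfib : ∃ a, {b | (b, a) ∈ D d}.Infinite
    · exact .inl (hfib.imp fun a ha => hslice a d ha)
    simp only [not_exists, not_infinite] at hfib
    right
    have hcases : {b | ∃ a, (b, a) ∈ D d}.Infinite ∨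
        {b | ∃ e, d = e + 1 ∧ {a | (b, a) ∈ D e}.Infinite}.Infinite := infinite_union.1 hinf
    obtain h | h := hcases
    · have hinf' : {a | ∃ b, (b, a) ∈ D d}.Infinite := fun hA =>
        h ((hA.biUnion fun a _ => hfib a).subset
          fun b ⟨a, hb⟩ => mem_biUnion (show ∃ b, (b, a) ∈ D d from ⟨b, hb⟩) hb)
      refine hinf'.mono ?_
      rintro a ⟨b, hb⟩
      exact hb.mono fun w hw => ⟨b, hw⟩
    · obtain ⟨b, e, rfl, -⟩ := h.nonempty
      simp only [Nat.add_right_cancel_iff, exists_eq_left'] at h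
      exact (infinite_setOf_infinite_swap (hD e) h).mono fun a ha => hslice a e ha

theorem finite_setOf_dimGE_self (hZ : DefPred L M (· ∈ Z))
    (hfin : ∀ w, {b | (b, w) ∈ Z}.Finite) : {b | DimGE n {w | (b, w) ∈ Z} n}.Finite :=
  not_infinite.1 fun h => n.not_succ_le_self (DimGE.exists_of_finite hZ hfin h).le

end DefinableDimension

/-! ### Local behaviour of one-parameter families -/

section OneParameter

variable {L : Language} {M : Type*} [L.Structure M] [LinearOrder M] [TopologicalSpace M]
  [OrderTopology M] [DenselyOrdered M] [NoMinOrder M] [NoMaxOrder M] [TameOrder L M]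

theorem nhdsGT_le_cofinite {X : Type*} [LinearOrder X] [TopologicalSpace X] [OrderTopology X]
    (x : X) : 𝓝[>] x ≤ cofinite :=
  (nhdsGT_le_nhdsNE x).trans (nhdsNE_le_cofinite x)

theorem nhdsLT_le_cofinite {X : Type*} [LinearOrder X] [TopologicalSpace X] [OrderTopology X]
    (x : X) : 𝓝[<] x ≤ cofinite :=
  (nhdsLT_le_nhdsNE x).trans (nhdsNE_le_cofinite x)

theorem notMem_frontier_iff_eventually {X : Type*} [TopologicalSpace X] {s : Set X} {x : X} :
    x ∉ frontier s ↔ ∀ᶠ y in 𝓝 x, (y ∈ s ↔ x ∈ s) := by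
  by_cases hs : x ∈ s
  · simp [hs, mem_frontier_iff_notMem_interior hs, mem_interior_iff_mem_nhds, Filter.Eventually]
  · rw [← frontier_compl, mem_frontier_iff_notMem_interior hs]
    simp [hs, mem_interior_iff_mem_nhds, Filter.Eventually, compl_def]

theorem eventually_cofinite_eventually_nhds_iff {P : M → Prop} (hP : DefPred L M P) :
    ∀ᶠ u₀ in cofinite, ∀ᶠ u in 𝓝 u₀, (P u ↔ P u₀) := by
  filter_upwards [(TameOrder.finite_frontier (s := {y | P y}) hP).compl_mem_cofinite] with u₀ hu₀
  exact notMem_frontier_iff_eventually.1 hu₀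

theorem eventually_cofinite₂_eventually_nhds_iff {P : M → M → Prop}
    (hP : DefPred L M fun p : M × M => P p.1 p.2) :
    ∀ᶠ u₀ in cofinite, ∀ᶠ y in cofinite, ∀ᶠ u in 𝓝 u₀, (P u y ↔ P u₀ y) := by
  filter_upwards [(finite_setOf_infinite_frontier (U := {p | P p.1 p.2}) hP).compl_mem_cofinite]
    with u₀ hu₀
  filter_upwards [(not_infinite.1 hu₀).compl_mem_cofinite] with y hy
  exact notMem_frontier_iff_eventually.1 hy

theorem eventually_cofinite_continuousAt {f : M → M} (hf : DefMap L M f) :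
    ∀ᶠ u in cofinite, ContinuousAt f u := by
  filter_upwards [eventually_cofinite₂_eventually_nhds_iff (L := L) (P := fun u y => f u ≤ y)
    defPred] with u₀ hu₀
  refine tendsto_order.2 ⟨fun a ha => ?_, fun b hb => ?_⟩
  · obtain ⟨y, ⟨hay, hy⟩, hev⟩ :=
      (Eventually.and (Ioo_mem_nhdsLT ha) (nhdsLT_le_cofinite _ hu₀)).exists
    filter_upwards [hev] with u hu
    exact hay.trans (not_le.1 (hu.not.2 hy.not_ge))
  · obtain ⟨y, ⟨hy, hyb⟩, hev⟩ :=
      (Eventually.and (Ioo_mem_nhdsGT hb) (nhdsGT_le_cofinite _ hu₀)).exists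
    filter_upwards [hev] with u hu
    exact (hu.2 hy.le).trans_lt hyb

/-- Near `(u₀, y)` the set `S`, viewed as a family of sets `{s | (u, s) ∈ S}`, is either empty or
the graph of a function of `u` that is continuous at `u₀`. -/
def IsNormalAt (S : Set (M × M)) (u₀ y : M) : Prop :=
  ∃ a b, a < y ∧ y < b ∧
    ((u₀, y) ∉ S → ∀ᶠ u in 𝓝 u₀, ∀ s, s ∈ Ioo a b → (u, s) ∉ S) ∧
    ((u₀, y) ∈ S → ∀ c d, a < c ∧ c < y ∧ y < d ∧ d < b →
      ∀ᶠ u in 𝓝 u₀, ∃! s, s ∈ Ioo c d ∧ (u, s) ∈ S)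

variable {S : Set (M × M)}

theorem exists_defMap_isLeast [Nonempty M] {Γ : Type*} [Coordinates M Γ] {B : Set (Γ × M)}
    (hB : DefPred L M (· ∈ B)) :
    ∃ f : Γ → M, DefMap L M f ∧ ∀ g, {y | (g, y) ∈ B}.Finite → {y | (g, y) ∈ B}.Nonempty →
      IsLeast {y | (g, y) ∈ B} (f g) := by
  classical
  obtain ⟨y₀⟩ := ‹Nonempty M›
  let f (g : Γ) : M := if h : ∃ y, IsLeast {y | (g, y) ∈ B} y then h.choose else y₀
  have hleast (g : Γ) (h : ∃ y, IsLeast {y | (g, y) ∈ B} y) : IsLeast {y | (g, y) ∈ B} (f g) := by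
    simpa only [f, dif_pos h] using h.choose_spec
  have hnone (g : Γ) (h : ¬∃ y, IsLeast {y | (g, y) ∈ B} y) : f g = y₀ := dif_neg h
  refine ⟨f, .of_graph ?_, fun g hfin hne => hleast g ?_⟩
  · have hgraph : DefPred L M fun p : Γ × M => ((p ∈ B ∧ ∀ z, (p.1, z) ∈ B → p.2 ≤ z) ∨
      (¬∃ y, (p.1, y) ∈ B ∧ ∀ z, (p.1, z) ∈ B → y ≤ z) ∧ p.2 = y₀) := defPred
    refine hgraph.congr fun ⟨g, y⟩ => ⟨?_, ?_⟩
    · dsimp only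
      rintro rfl
      by_cases h : ∃ y, IsLeast {y | (g, y) ∈ B} y
      exacts [.inl (hleast g h), .inr ⟨h, hnone g h⟩]
    · rintro (h | ⟨h, hy⟩)
      exacts [(hleast g ⟨y, h⟩).unique h, (hnone g h).trans hy.symm]
  · obtain ⟨y, hy, hmin⟩ := exists_min_image _ id hfin hne
    exact ⟨y, hy, hmin⟩

theorem eventually_cofinite_exists_gap_above (hS : DefPred L M (· ∈ S))
    (hfin : ∀ u, {y | (u, y) ∈ S}.Finite) {f : M → M} (hf : DefMap L M f) :
    ∀ᶠ u₀ in cofinite, ∃ b, f u₀ < b ∧ ∀ᶠ u in 𝓝 u₀, ∀ s, (u, s) ∈ S → f u < s → b < s := by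
  filter_upwards [eventually_cofinite₂_eventually_nhds_iff (L := L)
    (P := fun u y => ∀ s, (u, s) ∈ S → f u < s → y < s) defPred] with u₀ hu₀
  have hgap : ∀ᶠ b in 𝓝[>] f u₀, ∀ s ∈ {y | (u₀, y) ∈ S}, f u₀ < s → b < s := by
    refine (eventually_all_finite (hfin u₀)).2 fun s _ => ?_
    by_cases hs : f u₀ < s
    · filter_upwards [Ioo_mem_nhdsGT hs] with b hb _ using hb.2
    · simp [hs]
  obtain ⟨b, hb, hgapb, hev⟩ :=
    (eventually_mem_nhdsWithin.and (hgap.and (nhdsGT_le_cofinite _ hu₀))).exists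
  exact ⟨b, hb, hev.mono fun u hu => hu.2 hgapb⟩

theorem eventually_cofinite_exists_gap_below (hS : DefPred L M (· ∈ S))
    (hfin : ∀ u, {y | (u, y) ∈ S}.Finite) {f : M → M} (hf : DefMap L M f) :
    ∀ᶠ u₀ in cofinite, ∃ a, a < f u₀ ∧ ∀ᶠ u in 𝓝 u₀, ∀ s, (u, s) ∈ S → s < f u → s < a := by
  filter_upwards [eventually_cofinite₂_eventually_nhds_iff (L := L)
    (P := fun u y => ∀ s, (u, s) ∈ S → s < f u → s < y) defPred] with u₀ hu₀
  have hgap : ∀ᶠ a in 𝓝[<] f u₀, ∀ s ∈ {y | (u₀, y) ∈ S}, s < f u₀ → s < a := by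
    refine (eventually_all_finite (hfin u₀)).2 fun s _ => ?_
    by_cases hs : s < f u₀
    · filter_upwards [Ioo_mem_nhdsLT hs] with a ha _ using ha.1
    · simp [hs]
  obtain ⟨a, ha, hgapa, hev⟩ :=
    (eventually_mem_nhdsWithin.and (hgap.and (nhdsLT_le_cofinite _ hu₀))).exists
  exact ⟨a, ha, hev.mono fun u hu => hu.2 hgapa⟩

theorem eventually_cofinite_isNormalAt_apply (hS : DefPred L M (· ∈ S))
    (hfin : ∀ u, {y | (u, y) ∈ S}.Finite) {f : M → M} (hf : DefMap L M f) :
    ∀ᶠ u in cofinite, IsNormalAt S u (f u) := by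
  filter_upwards [eventually_cofinite_exists_gap_above hS hfin hf,
    eventually_cofinite_exists_gap_below hS hfin hf, eventually_cofinite_continuousAt hf,
    eventually_cofinite_eventually_nhds_iff (L := L) (P := fun u => (u, f u) ∈ S) defPred]
    with u₀ ⟨b, hb, habove⟩ ⟨a, ha, hbelow⟩ hcont hmem
  have hunique : ∀ᶠ u in 𝓝 u₀, ∀ s, s ∈ Ioo a b → (u, s) ∈ S → s = f u := by
    filter_upwards [habove, hbelow] with u hu hu' s hs hsS
    rcases lt_trichotomy s (f u) with h | h | h
    exacts [absurd (hu' s hsS h) hs.1.not_gt, h, absurd (hu s hsS h) hs.2.not_gt]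
  refine ⟨a, b, ha, hb, fun hnot => ?_, fun hin c d ⟨hac, hc, hd, hdb⟩ => ?_⟩
  · filter_upwards [hunique, hmem] with u hu hu' s hs hsS
    exact hnot (hu'.1 (hu s hs hsS ▸ hsS))
  · filter_upwards [hunique, hmem, hcont (Ioo_mem_nhds hc hd)] with u hu hu' hfu
    exact ⟨f u, ⟨hfu, hu'.2 hin⟩, fun s hs => hu s ⟨hac.trans hs.1.1, hs.1.2.trans hdb⟩ hs.2⟩

theorem eventually_cofinite_forall_isNormalAt (hS : DefPred L M (· ∈ S))
    (hfin : ∀ u, {y | (u, y) ∈ S}.Finite) : ∀ᶠ u in cofinite, ∀ y, IsNormalAt S u y := by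
  cases isEmpty_or_nonempty M
  · simp
  let B : Set (M × M) := {p | ¬IsNormalAt S p.1 p.2}
  have hB : DefPred L M (· ∈ B) := by
    unfold B IsNormalAt
    exact defPred
  have hBfin : ∀ᶠ u in cofinite, {y | (u, y) ∈ B}.Finite := by
    have h := finite_setOf_infinite_of_finite hB fun y =>
      eventually_cofinite_isNormalAt_apply hS hfin (.const y)
    filter_upwards [h.compl_mem_cofinite] with u hu using not_infinite.1 hu
  obtain ⟨f, hf, hleast⟩ := exists_defMap_isLeast hB
  filter_upwards [hBfin, eventually_cofinite_isNormalAt_apply hS hfin hf] with u hu hnormal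
  by_contra! hne
  exact (hleast u hu hne).1 hnormal

/-- The set `S`, viewed as a family of sets `{s | (u, s) ∈ S}`, is near `u = u₀` a disjoint union of
graphs of functions that are continuous at `u₀`. Unlike local constancy of the cardinality of
`{s | (u, s) ∈ S}`, this condition is definable uniformly in families. -/
def IsRegularAt (S : Set (M × M)) (u₀ : M) : Prop :=
  (∀ y, IsNormalAt S u₀ y) ∧ (∃ a, ∀ᶠ u in 𝓝 u₀, ∀ s, s ≤ a → (u, s) ∉ S) ∧
    ∃ b, ∀ᶠ u in 𝓝 u₀, ∀ s, b ≤ s → (u, s) ∉ S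

theorem DefPred.isRegularAt {Γ : Type*} [Coordinates M Γ] {P : Γ → M → M → Prop}
    (hP : DefPred L M fun p : Γ × M × M => P p.1 p.2.1 p.2.2) {f : Γ → M} (hf : DefMap L M f) :
    DefPred L M fun g => IsRegularAt {q | P g q.1 q.2} (f g) := by
  have hP' : DefPred L M (· ∈ {p : Γ × M × M | P p.1 p.2.1 p.2.2}) := hP
  have h : DefPred L M fun g =>
      IsRegularAt {q | (g, q) ∈ {p : Γ × M × M | P p.1 p.2.1 p.2.2}} (f g) := by
    unfold IsRegularAt IsNormalAt
    generalize {p : Γ × M × M | P p.1 p.2.1 p.2.2} = T at hP'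
    exact defPred
  exact h

theorem eventually_cofinite_isRegularAt (hS : DefPred L M (· ∈ S))
    (hfin : ∀ u, {y | (u, y) ∈ S}.Finite) : ∀ᶠ u in cofinite, IsRegularAt S u := by
  filter_upwards [eventually_cofinite_forall_isNormalAt hS hfin,
    eventually_cofinite₂_eventually_nhds_iff (L := L) (P := fun u y => ∀ s, s ≤ y → (u, s) ∉ S)
      defPred,
    eventually_cofinite₂_eventually_nhds_iff (L := L) (P := fun u y => ∀ s, y ≤ s → (u, s) ∉ S)
      defPred] with u₀ hnormal hbot htop
  have : Nonempty M := ⟨u₀⟩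
  refine ⟨hnormal, ?_, ?_⟩
  · have hlow : ∀ᶠ a in atBot, ∀ s ∈ {y | (u₀, y) ∈ S}, a < s :=
      (eventually_all_finite (hfin u₀)).2 fun s _ => eventually_lt_atBot s
    obtain ⟨a, ha, hev⟩ := (hlow.and (atBot_le_cofinite hbot)).exists
    exact ⟨a, hev.mono fun u hu => hu.2 fun s hs hsS => (ha s hsS).not_ge hs⟩
  · have hhigh : ∀ᶠ b in atTop, ∀ s ∈ {y | (u₀, y) ∈ S}, s < b :=
      (eventually_all_finite (hfin u₀)).2 fun s _ => eventually_gt_atTop s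
    obtain ⟨b, hb, hev⟩ := (hhigh.and (atTop_le_cofinite htop)).exists
    exact ⟨b, hev.mono fun u hu => hu.2 fun s hs hsS => (hb s hsS).not_ge hs⟩

theorem IsRegularAt.eventually_subset (hS : DefPred L M (· ∈ S)) {u₀ : M} (hreg : IsRegularAt S u₀)
    {O : Set M} (hOdef : DefPred L M (· ∈ O)) (hO : IsOpen O) (hsub : {y | (u₀, y) ∈ S} ⊆ O) :
    ∀ᶠ u in 𝓝 u₀, {y | (u, y) ∈ S} ⊆ O := by
  obtain ⟨hnormal, ⟨a, ha⟩, b, hb⟩ := hreg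
  have hlocal (y : M) : ∃ c d, c < y ∧ y < d ∧
      ∀ᶠ u in 𝓝 u₀, ∀ s, s ∈ Ioo c d → (u, s) ∈ S → s ∈ O := by
    by_cases hy : (u₀, y) ∈ S
    · obtain ⟨c, d, hcd, hsub'⟩ := mem_nhds_iff_exists_Ioo_subset.1 (hO.mem_nhds (hsub hy))
      exact ⟨c, d, hcd.1, hcd.2, .of_forall fun u s hs _ => hsub' hs⟩
    · obtain ⟨c, d, hc, hd, hmiss, -⟩ := hnormal y
      exact ⟨c, d, hc, hd, (hmiss hy).mono fun u hu s hs hsS => absurd hsS (hu s hs)⟩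
  let Q : Set M := {y | ∀ᶠ u in 𝓝 u₀, ∀ s, s ≤ y → (u, s) ∈ S → s ∈ O}
  have hfrontier : frontier Q = ∅ := by
    refine eq_empty_iff_forall_notMem.2 fun y hy => ?_
    obtain ⟨c, d, hc, hd, hev⟩ := hlocal y
    obtain ⟨x, hx, hxQ⟩ := mem_closure_iff_nhds.1 hy.1 _ (Ioo_mem_nhds hc hd)
    refine hy.2 (mem_interior_iff_mem_nhds.2 (mem_of_superset (Ioo_mem_nhds hc hd) fun z hz => ?_))
    filter_upwards [hev, hxQ] with u hu hux s hs hsS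
    rcases le_or_gt s x with h | h
    exacts [hux s h hsS, hu s ⟨hx.1.trans h, hs.trans_lt hz.2⟩ hsS]
  have haQ : a ∈ Q := ha.mono fun u hu s hs hsS => absurd hsS (hu s hs)
  have hbQ : b ∈ Q := (mem_iff_mem_of_disjoint_frontier (L := L) (s := Q) defPred ordConnected_univ
    (hfrontier ▸ disjoint_empty _) (mem_univ a) (mem_univ b)).1 haQ
  filter_upwards [hbQ, hb] with u hu hub s hs
  exact hu s (not_lt.1 fun h => hub s h.le hs) hs

theorem IsRegularAt.eventually_ncard_eq (hS : DefPred L M (· ∈ S)) {u₀ : M}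
    (hreg : IsRegularAt S u₀) (hfin : {y | (u₀, y) ∈ S}.Finite) :
    ∀ᶠ u in 𝓝 u₀, {y | (u, y) ∈ S}.ncard = {y | (u₀, y) ∈ S}.ncard := by
  obtain ⟨U, hU, hdisj⟩ := hfin.t2_separation
  have hlocal (y : M) (hy : (u₀, y) ∈ S) : ∃ c d, y ∈ Ioo c d ∧ Ioo c d ⊆ U y ∧
      ∀ᶠ u in 𝓝 u₀, ∃! s, s ∈ Ioo c d ∧ (u, s) ∈ S := by
    obtain ⟨a, b, ha, hb, -, hunique⟩ := hreg.1 y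
    obtain ⟨c, d, hcd, hsub⟩ := mem_nhds_iff_exists_Ioo_subset.1
      (inter_mem ((hU y).2.mem_nhds (hU y).1) (Ioo_mem_nhds ha hb))
    obtain ⟨c', hc, hc'⟩ := exists_between hcd.1
    obtain ⟨d', hd', hd⟩ := exists_between hcd.2
    have hsub' : Ioo c' d' ⊆ Ioo c d := Ioo_subset_Ioo hc.le hd.le
    exact ⟨c', d', ⟨hc', hd'⟩, fun s hs => (hsub (hsub' hs)).1, hunique hy c' d'
      ⟨(hsub ⟨hc, hc'.trans hcd.2⟩).2.1, hc', hd', (hsub ⟨hcd.1.trans hd', hd⟩).2.2⟩⟩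
  choose! c d hmem hsub hunique using hlocal
  have hOdef : DefPred L M (· ∈ ⋃ y ∈ {y | (u₀, y) ∈ S}, Ioo (c y) (d y)) := by
    have := hfin.to_subtype
    have h : DefPred L M fun s => ∀ y : {y | (u₀, y) ∈ S}, s ∉ Ioo (c y) (d y) :=
      .forall_of_finite fun y => defPred
    exact h.not.congr fun s => by simp [and_left_comm]
  filter_upwards [hreg.eventually_subset hS hOdef (isOpen_biUnion fun _ _ => isOpen_Ioo)
      fun y hy => mem_biUnion hy (hmem y hy), (eventually_all_finite hfin).2 hunique]
    with u hcover hex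
  refine (ncard_congr (fun y hy => (hex y hy).choose) (fun y hy => (hex y hy).choose_spec.1.2)
    (fun y z hy hz hyz => ?_) fun s hs => ?_).symm
  · by_contra hne
    refine disjoint_left.1 (hdisj hy hz hne) (hsub y hy (hex y hy).choose_spec.1.1) ?_
    exact hyz ▸ hsub z hz (hex z hz).choose_spec.1.1
  · obtain ⟨y, hy, hsy⟩ := mem_iUnion₂.1 (hcover hs)
    exact ⟨y, hy, ((hex y hy).choose_spec.2 s ⟨hsy, hs⟩).symm⟩

end OneParameter

/-! ### Uniform finiteness -/

section GapIndex

variable {X : Type*} [LinearOrder X] {E : Set X} {a b : X}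

theorem disjoint_Ico_of_ncard_inter_Iio_eq (hE : E.Finite) (hab : a ≤ b)
    (h : (E ∩ Iio a).ncard = (E ∩ Iio b).ncard) : Disjoint (Ico a b) E := by
  have heq : E ∩ Iio a = E ∩ Iio b := eq_of_subset_of_ncard_le
    (inter_subset_inter_right E (Iio_subset_Iio hab)) h.ge (hE.inter_of_left _)
  refine disjoint_left.2 fun e he heE => not_lt_of_ge he.1 ?_
  exact (heq.symm ▸ (⟨heE, he.2⟩ : e ∈ E ∩ Iio b) : e ∈ E ∩ Iio a).2

theorem eventually_inter_Iio_eq [TopologicalSpace X] [OrderTopology X] (hE : E.Finite)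
    (ha : a ∉ E) : ∀ᶠ u in 𝓝 a, E ∩ Iio u = E ∩ Iio a := by
  have hpoint (e : X) (he : e ∈ E) : ∀ᶠ u in 𝓝 a, (e < u ↔ e < a) := by
    rcases lt_or_gt_of_ne (ne_of_mem_of_not_mem he ha) with hea | hae
    · filter_upwards [Ioi_mem_nhds hea] with u hu using iff_of_true hu hea
    · filter_upwards [Iio_mem_nhds hae] with u hu using iff_of_false hu.not_gt hae.not_gt
  filter_upwards [(eventually_all_finite hE).2 hpoint] with u hu
  exact Set.ext fun e => and_congr_right (hu e)

/-- The fibres of `G` over `Γ` are empty or full-dimensional, and on each of them the cardinality of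
the fibres of `S` is constant. -/
def IsFibrewiseConstant {M Γ : Type*} {q : ℕ} (S : Set ((Γ × (Fin q → M)) × M))
    (G : Set (Γ × (Fin q → M))) : Prop :=
  ∀ z w, (z, w) ∈ G → DimGE q {w | (z, w) ∈ G} q ∧
    ∀ w', (z, w') ∈ G → {y | ((z, w'), y) ∈ S}.ncard = {y | ((z, w), y) ∈ S}.ncard

variable {Γ : Type*} {q : ℕ}

/-- The subset of `G` lying over the `i`-th complementary interval of `E z`, for each `z`, with the
coordinate ranging over that interval moved to the generic variables. -/
def overGap (E : Γ → Set X) (G : Set ((Γ × X) × (Fin q → X))) (i : ℕ) :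
    Set (Γ × (Fin (q + 1) → X)) :=
  {p | (((p.1, p.2 0), vecTail p.2) ∈ G ∧ p.2 0 ∉ E p.1) ∧ (E p.1 ∩ Iio (p.2 0)).ncard = i}

variable [TopologicalSpace X] [OrderTopology X] [DenselyOrdered X] [NoMaxOrder X]

theorem IsFibrewiseConstant.dimGE_overGap {S : Set (((Γ × X) × (Fin q → X)) × X)}
    {G : Set ((Γ × X) × (Fin q → X))} (hconst : IsFibrewiseConstant S G) {E : Γ → Set X}
    (hEfin : ∀ z, (E z).Finite)
    (hopen : ∀ z u w, u ∉ E z → ((z, u), w) ∈ G → ∀ᶠ v in 𝓝 u, ∃ w', ((z, v), w') ∈ G) {i : ℕ}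
    {z : Γ} {w : Fin (q + 1) → X} (hw : (z, w) ∈ overGap E G i) :
    DimGE (q + 1) {w | (z, w) ∈ overGap E G i} (q + 1) := by
  obtain ⟨⟨hwG, hwE⟩, hi⟩ := hw
  have hev : ∀ᶠ v in 𝓝 (w 0), DimGE q {w' | (z, vecCons v w') ∈ overGap E G i} q := by
    filter_upwards [hopen z _ _ hwE hwG, eventually_inter_Iio_eq (hEfin z) hwE,
      (hEfin z).isClosed.isOpen_compl.mem_nhds hwE] with v hv hindex hvE
    obtain ⟨w', hw'⟩ := hv
    exact (hconst (z, v) w' hw').1.mono fun w₁ hw₁ => ⟨⟨hw₁, hvE⟩, hi ▸ congrArg ncard hindex⟩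
  exact dimGE_succ_self.2 (frequently_cofinite_iff_infinite.1
    ((hev.filter_mono nhdsWithin_le_nhds).frequently.filter_mono (nhdsGT_le_cofinite (w 0))))

end GapIndex

section UniformFiniteness

variable {L : Language} {M : Type u} [L.Structure M] {Γ : Type u} [Coordinates M Γ]

theorem DefPred.le_ncard {P : Γ → M → Prop} (hP : DefPred L M fun p : Γ × M => P p.1 p.2)
    (hfin : ∀ g, {y | P g y}.Finite) (c : ℕ) : DefPred L M fun g => c ≤ {y | P g y}.ncard := by
  have h : DefPred L M fun g => ∃ v : Fin c → M,
      (∀ i, P g (v i)) ∧ ∀ i j, v i = v j → i = j := by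
    refine .exists (.and (.forall_of_finite fun i => ?_)
      (.forall_of_finite fun i => .forall_of_finite fun j => defPred))
    exact hP.comp (DefMap.id.fst.prodMk (DefMap.id.snd.apply i))
  refine h.congr fun g => ?_
  have := (hfin g).fintype
  have hcard : c ≤ {y | P g y}.ncard ↔ Nonempty (Fin c ↪ {y | P g y}) := by
    rw [Function.Embedding.nonempty_iff_card_le, Fintype.card_fin, ← Nat.card_eq_fintype_card,
      Nat.card_coe_set_eq]
  rw [hcard]
  constructor
  · rintro ⟨f⟩
    exact ⟨fun i => f i, fun i => (f i).2, fun i j hij => f.injective (Subtype.ext hij)⟩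
  · rintro ⟨v, hv, hinj⟩
    exact ⟨fun i => ⟨v i, hv i⟩, fun i j hij => hinj i j (congrArg Subtype.val hij)⟩

theorem DefPred.ncard_eq {P : Γ → M → Prop} (hP : DefPred L M fun p : Γ × M => P p.1 p.2)
    (hfin : ∀ g, {y | P g y}.Finite) (c : ℕ) : DefPred L M fun g => {y | P g y}.ncard = c :=
  ((hP.le_ncard hfin c).and (hP.le_ncard hfin (c + 1)).not).congr fun g => by omega

/-- Every definable family of finite subsets of `M` indexed by `Γ` has bounded cardinality. -/
def UniformlyFinite (L : Language) (M Γ : Type*) [L.Structure M] [Coordinates M Γ] : Prop :=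
  ∀ S : Set (Γ × M), DefPred L M (· ∈ S) → (∀ g, {y | (g, y) ∈ S}.Finite) →
    ∃ N, ∀ g, {y | (g, y) ∈ S}.ncard ≤ N

theorem UniformlyFinite.of_surjective {Δ : Type u} [Coordinates M Δ] (h : UniformlyFinite L M Δ)
    {f : Δ → Γ} (hf : DefMap L M f) (hsurj : Function.Surjective f) : UniformlyFinite L M Γ := by
  intro S hS hfin
  obtain ⟨N, hN⟩ := h {p | (f p.1, p.2) ∈ S} defPred fun d => hfin (f d)
  exact ⟨N, hsurj.forall.2 hN⟩

theorem UniformlyFinite.exists_ncard_le_of_mem {Δ : Type u} [Coordinates M Δ]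
    (h : UniformlyFinite L M (Γ × Δ)) {S : Set (((Γ × M) × Δ) × M)} (hS : DefPred L M (· ∈ S))
    (hfin : ∀ p, {y | (p, y) ∈ S}.Finite) {E : Γ → Set M}
    (hE : DefPred L M fun p : Γ × M => p.2 ∈ E p.1) (hEfin : ∀ z, (E z).Finite) :
    ∃ N, ∀ z, ∀ u ∈ E z, ∀ w, {y | (((z, u), w), y) ∈ S}.ncard ≤ N := by
  have hunion (z : Γ) (w : Δ) : {y | ∃ u, u ∈ E z ∧ (((z, u), w), y) ∈ S}.Finite := by
    simpa only [← exists_prop, Set.ofPred_exists] using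
      (hEfin z).biUnion fun u _ => hfin ((z, u), w)
  obtain ⟨N, hN⟩ := h {p | ∃ u, u ∈ E p.1.1 ∧ (((p.1.1, u), p.1.2), p.2) ∈ S}
    (.exists (.and (hE.comp (DefMap.id.fst.fst.fst.prodMk DefMap.id.snd)) defPred))
    fun p => hunion p.1 p.2
  refine ⟨N, fun z u hu w => (ncard_le_ncard ?_ (hunion z w)).trans (hN (z, w))⟩
  exact fun y hy => ⟨u, hu, hy⟩

/-- The variant of `UniformlyFinite` in which the cardinality depends only on `z ∈ Γ`, but
witnesses for it are available only generically in `M^q`. -/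
def GenericallyUniformlyFinite (L : Language) (M Γ : Type*) [L.Structure M] [Coordinates M Γ]
    (q : ℕ) : Prop :=
  ∀ (S : Set ((Γ × (Fin q → M)) × M)) (G : Set (Γ × (Fin q → M))), DefPred L M (· ∈ S) →
    DefPred L M (· ∈ G) → (∀ p, {y | (p, y) ∈ S}.Finite) → IsFibrewiseConstant S G →
      ∃ N, ∀ p ∈ G, {y | (p, y) ∈ S}.ncard ≤ N

theorem genericallyUniformlyFinite_of_subsingleton [Subsingleton Γ] {q : ℕ} :
    GenericallyUniformlyFinite L M Γ q := by
  intro S G _ _ _ hconst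
  by_cases h : G.Nonempty
  · obtain ⟨⟨z, w⟩, hw⟩ := h
    refine ⟨{y | ((z, w), y) ∈ S}.ncard, fun ⟨z', w'⟩ hw' => ?_⟩
    obtain rfl := Subsingleton.elim z z'
    exact ((hconst z w hw).2 w' hw').le
  · exact ⟨0, fun p hp => absurd ⟨p, hp⟩ h⟩

theorem GenericallyUniformlyFinite.of_surjective {Δ : Type u} [Coordinates M Δ] {q : ℕ}
    (h : GenericallyUniformlyFinite L M Δ q) {f : Δ → Γ} (hf : DefMap L M f)
    (hsurj : Function.Surjective f) : GenericallyUniformlyFinite L M Γ q := by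
  intro S G hS hG hfin hconst
  obtain ⟨N, hN⟩ := h {p | ((f p.1.1, p.1.2), p.2) ∈ S} {p | (f p.1, p.2) ∈ G} defPred defPred
    (fun p => hfin (f p.1, p.2)) fun d => hconst (f d)
  refine ⟨N, fun ⟨z, w⟩ hw => ?_⟩
  obtain ⟨d, rfl⟩ := hsurj z
  exact hN (d, w) hw

theorem GenericallyUniformlyFinite.uniformlyFinite (h : GenericallyUniformlyFinite L M Γ 0) :
    UniformlyFinite L M Γ := by
  intro S hS hfin
  obtain ⟨N, hN⟩ := h {p | (p.1.1, p.2) ∈ S} Set.univ defPred (.const True)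
    (fun p => hfin p.1) fun z w _ => ⟨dimGE_zero ⟨w, mem_univ _⟩, fun _ _ => rfl⟩
  exact ⟨N, fun z => hN (z, Fin.elim0) (mem_univ _)⟩

variable [LinearOrder M] [TopologicalSpace M] [OrderTopology M] [DenselyOrdered M] [NoMinOrder M]
  [NoMaxOrder M] [TameOrder L M]
variable {q : ℕ} {S : Set ((M × (Fin q → M)) × M)} {G : Set (M × (Fin q → M))}

/-- The points `u` near which the cardinality of the fibre of `S` over `(u, w)`, for generic `w`
with `(u, w) ∈ G`, may vary with `u`. -/
def exceptionalSet (S : Set ((M × (Fin q → M)) × M)) (G : Set (M × (Fin q → M))) : Set M :=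
  {u | DimGE q {w | ¬IsRegularAt {r | ((r.1, w), r.2) ∈ S} u} q ∨
    DimGE q {w | u ∈ frontier {v | (v, w) ∈ G}} q ∨ u ∈ frontier {v | ∃ w, (v, w) ∈ G}}

theorem DefPred.mem_exceptionalSet {S : Set (((Γ × M) × (Fin q → M)) × M)}
    {G : Set ((Γ × M) × (Fin q → M))} (hS : DefPred L M (· ∈ S)) (hG : DefPred L M (· ∈ G)) :
    DefPred L M fun p : Γ × M => p.2 ∈ exceptionalSet {r | (((p.1, r.1.1), r.1.2), r.2) ∈ S}
      {r | ((p.1, r.1), r.2) ∈ G} := by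
  refine .or (.dimGE (.not ?_) q) (.or (.dimGE defPred q) defPred)
  exact DefPred.isRegularAt
    (P := fun (p : (Γ × M) × (Fin q → M)) v y => (((p.1.1, v), p.2), y) ∈ S) defPred
    DefMap.id.fst.snd

theorem finite_exceptionalSet (hS : DefPred L M (· ∈ S)) (hG : DefPred L M (· ∈ G))
    (hfin : ∀ p, {y | (p, y) ∈ S}.Finite) : (exceptionalSet S G).Finite := by
  refine .union ?_ (.union ?_ (TameOrder.finite_frontier (L := L) defPred))
  · refine finite_setOf_dimGE_self (L := L)
      (Z := {p | ¬IsRegularAt {r | ((r.1, p.2), r.2) ∈ S} p.1})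
      (.not (.isRegularAt (P := fun (p : M × (Fin q → M)) v y => ((v, p.2), y) ∈ S) defPred
        DefMap.id.fst)) fun w => ?_
    exact eventually_cofinite.1 (eventually_cofinite_isRegularAt (L := L)
      (S := {r | ((r.1, w), r.2) ∈ S}) defPred fun u => hfin (u, w))
  · exact finite_setOf_dimGE_self (L := L) (Z := {p | p.1 ∈ frontier {v | (v, p.2) ∈ G}})
      defPred fun w => TameOrder.finite_frontier (L := L) (s := {v | (v, w) ∈ G}) defPred

theorem exists_eventually_ncard_eq_of_notMem_exceptionalSet (hS : DefPred L M (· ∈ S))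
    (hfin : ∀ p, {y | (p, y) ∈ S}.Finite) (hconst : IsFibrewiseConstant S G) {u : M}
    {w : Fin q → M} (hu : u ∉ exceptionalSet S G) (huw : (u, w) ∈ G) :
    ∃ w', ∀ᶠ v in 𝓝 u, (v, w') ∈ G ∧
      {y | ((v, w'), y) ∈ S}.ncard = {y | ((u, w), y) ∈ S}.ncard := by
  by_contra hno
  have hbad : DimGE q ({w | ¬IsRegularAt {r | ((r.1, w), r.2) ∈ S} u} ∪
      {w | u ∈ frontier {v | (v, w) ∈ G}}) q := by
    refine (hconst u w huw).1.mono fun w' hw' => ?_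
    by_contra hgood
    obtain ⟨hreg, hfr⟩ := not_or.1 hgood
    refine hno ⟨w', ?_⟩
    filter_upwards [(not_not.1 hreg).eventually_ncard_eq (L := L) defPred (hfin (u, w')),
      notMem_frontier_iff_eventually.1 hfr] with v hcard hmem
    exact ⟨hmem.2 hw', hcard.trans ((hconst u w huw).2 w' hw')⟩
  rcases hbad.union with h | h
  exacts [hu (.inl h), hu (.inr (.inl h))]

theorem frontier_setOf_exists_ncard_eq_subset (hS : DefPred L M (· ∈ S))
    (hfin : ∀ p, {y | (p, y) ∈ S}.Finite) (hconst : IsFibrewiseConstant S G) (c : ℕ) :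
    frontier {v | ∃ w, (v, w) ∈ G ∧ {y | ((v, w), y) ∈ S}.ncard = c} ⊆ exceptionalSet S G := by
  intro u
  contrapose
  intro hu
  rw [notMem_frontier_iff_eventually]
  by_cases hne : ∃ w, (u, w) ∈ G
  · obtain ⟨w, huw⟩ := hne
    obtain ⟨w', hw'⟩ := exists_eventually_ncard_eq_of_notMem_exceptionalSet hS hfin hconst hu huw
    filter_upwards [hw'] with v ⟨hvG, hv⟩
    constructor
    · rintro ⟨w₁, hw₁, hc⟩
      exact ⟨w, huw, by rw [← hv, ← hc, (hconst v w₁ hw₁).2 w' hvG]⟩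
    · rintro ⟨w₁, hw₁, hc⟩
      exact ⟨w', hvG, by rw [hv, ← hc, (hconst u w₁ hw₁).2 w huw]⟩
  · have hfr : u ∉ frontier {v | ∃ w, (v, w) ∈ G} := fun h => hu (.inr (.inr h))
    filter_upwards [notMem_frontier_iff_eventually.1 hfr] with v hv
    exact iff_of_false (fun ⟨w, hw, _⟩ => hne (hv.1 ⟨w, hw⟩)) fun ⟨w, hw, _⟩ => hne ⟨w, hw⟩

theorem ncard_eq_of_disjoint_exceptionalSet (hS : DefPred L M (· ∈ S)) (hG : DefPred L M (· ∈ G))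
    (hfin : ∀ p, {y | (p, y) ∈ S}.Finite) (hconst : IsFibrewiseConstant S G) {u v : M}
    {w w' : Fin q → M} (huv : u ≤ v) (hdisj : Disjoint (Icc u v) (exceptionalSet S G))
    (huw : (u, w) ∈ G) (hvw : (v, w') ∈ G) :
    {y | ((u, w), y) ∈ S}.ncard = {y | ((v, w'), y) ∈ S}.ncard := by
  have hcard := DefPred.ncard_eq (P := fun p y => (p, y) ∈ S) hS hfin {y | ((u, w), y) ∈ S}.ncard
  have hdef : DefPred L M fun v => ∃ w₁, (v, w₁) ∈ G ∧
      {y | ((v, w₁), y) ∈ S}.ncard = {y | ((u, w), y) ∈ S}.ncard :=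
    .exists (hG.and hcard)
  obtain ⟨w₁, hw₁, hc⟩ := mem_of_mem_of_disjoint_frontier hdef huv
    (hdisj.mono_right (frontier_setOf_exists_ncard_eq_subset hS hfin hconst _)) ⟨w, huw, rfl⟩
  rw [← hc, (hconst v w₁ hw₁).2 w' hvw]

theorem DefPred.mem_overGap {E : Γ → Set M} {G : Set ((Γ × M) × (Fin q → M))}
    (hE : DefPred L M fun p : Γ × M => p.2 ∈ E p.1) (hEfin : ∀ z, (E z).Finite)
    (hG : DefPred L M (· ∈ G)) (i : ℕ) : DefPred L M (· ∈ overGap E G i) := by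
  have hindex : DefPred L M fun p : Γ × M => (E p.1 ∩ Iio p.2).ncard = i := by
    refine DefPred.ncard_eq (P := fun (p : Γ × M) y => y ∈ E p.1 ∩ Iio p.2) ?_
      (fun p => (hEfin p.1).inter_of_left _) i
    exact (hE.comp (DefMap.id.fst.fst.prodMk DefMap.id.snd)).and
      (.lt DefMap.id.snd DefMap.id.fst.snd)
  have hmap : DefMap L M fun p : Γ × (Fin (q + 1) → M) => (p.1, p.2 0) :=
    DefMap.id.fst.prodMk (DefMap.id.snd.apply 0)
  have hindex' := hindex.comp hmap
  exact (((hG.comp (hmap.prodMk DefMap.id.snd.vecTail)).and (hE.comp hmap).not).and hindex')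

theorem GenericallyUniformlyFinite.exists_ncard_le_of_notMem
    (h : GenericallyUniformlyFinite L M Γ (q + 1)) {S : Set (((Γ × M) × (Fin q → M)) × M)}
    {G : Set ((Γ × M) × (Fin q → M))} (hS : DefPred L M (· ∈ S)) (hG : DefPred L M (· ∈ G))
    (hfin : ∀ p, {y | (p, y) ∈ S}.Finite) (hconst : IsFibrewiseConstant S G) {E : Γ → Set M}
    (hE : DefPred L M fun p : Γ × M => p.2 ∈ E p.1) (hEfin : ∀ z, (E z).Finite)
    (hopen : ∀ z u w, u ∉ E z → ((z, u), w) ∈ G → ∀ᶠ v in 𝓝 u, ∃ w', ((z, v), w') ∈ G)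
    (hgap : ∀ z u v w w', u ≤ v → Disjoint (Icc u v) (E z) → ((z, u), w) ∈ G → ((z, v), w') ∈ G →
      {y | (((z, u), w), y) ∈ S}.ncard = {y | (((z, v), w'), y) ∈ S}.ncard) (i : ℕ) :
    ∃ N, ∀ z u w, u ∉ E z → (E z ∩ Iio u).ncard = i → ((z, u), w) ∈ G →
      {y | (((z, u), w), y) ∈ S}.ncard ≤ N := by
  have hcard {z : Γ} {w w' : Fin (q + 1) → M} (hle : w 0 ≤ w' 0) (hw : (z, w) ∈ overGap E G i)
      (hw' : (z, w') ∈ overGap E G i) : {y | (((z, w 0), vecTail w), y) ∈ S}.ncard =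
        {y | (((z, w' 0), vecTail w'), y) ∈ S}.ncard := by
    refine hgap z _ _ _ _ hle ?_ hw.1.1 hw'.1.1
    rw [← Ico_insert_right hle, disjoint_insert_left]
    exact ⟨hw'.1.2, disjoint_Ico_of_ncard_inter_Iio_eq (hEfin z) hle (hw.2.trans hw'.2.symm)⟩
  obtain ⟨N, hN⟩ := h {p | (((p.1.1, p.1.2 0), vecTail p.1.2), p.2) ∈ S} (overGap E G i) defPred
    (.mem_overGap hE hEfin hG i) (fun p => hfin ((p.1, p.2 0), vecTail p.2)) fun z w hw =>
      ⟨hconst.dimGE_overGap hEfin hopen hw, fun w' hw' => (le_total (w 0) (w' 0)).elim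
        (fun hle => (hcard hle hw hw').symm) fun hle => hcard hle hw' hw⟩
  exact ⟨N, fun z u w hu hi hw => hN (z, vecCons u w) ⟨⟨hw, hu⟩, hi⟩⟩

/- Outside a finite exceptional set of values of the parameter in `M` the cardinality is locally
constant in it, so over each gap this parameter can be treated as one more generic variable. -/
theorem UniformlyFinite.genericallyUniformlyFinite_prod (hΓ : UniformlyFinite L M Γ)
    (hΓq : UniformlyFinite L M (Γ × (Fin q → M)))
    (hgen : GenericallyUniformlyFinite L M Γ (q + 1)) :
    GenericallyUniformlyFinite L M (Γ × M) q := by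
  intro S G hS hG hfin hconst
  let E (z : Γ) : Set M := exceptionalSet {r | (((z, r.1.1), r.1.2), r.2) ∈ S}
    {r | ((z, r.1), r.2) ∈ G}
  have hE : DefPred L M fun p : Γ × M => p.2 ∈ E p.1 := .mem_exceptionalSet hS hG
  have hEfin (z : Γ) : (E z).Finite :=
    finite_exceptionalSet (L := L) defPred defPred fun p => hfin ((z, p.1), p.2)
  have hconst' (z : Γ) : IsFibrewiseConstant {r | (((z, r.1.1), r.1.2), r.2) ∈ S}
      {r : M × (Fin q → M) | ((z, r.1), r.2) ∈ G} := fun u => hconst (z, u)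
  obtain ⟨N, hN⟩ := hΓ {p | p.2 ∈ E p.1} hE hEfin
  obtain ⟨NE, hNE⟩ := hΓq.exists_ncard_le_of_mem hS hfin hE hEfin
  choose NG hNG using hgen.exists_ncard_le_of_notMem hS hG hfin hconst hE hEfin
    (fun z u w hu hw => by
      obtain ⟨w', hw'⟩ := exists_eventually_ncard_eq_of_notMem_exceptionalSet (L := L) defPred
        (fun p => hfin ((z, p.1), p.2)) (hconst' z) hu hw
      exact hw'.mono fun v hv => ⟨w', hv.1⟩)
    fun z u v w w' huv hdisj hw hw' => ncard_eq_of_disjoint_exceptionalSet (L := L) defPred defPred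
      (fun p => hfin ((z, p.1), p.2)) (hconst' z) huv hdisj hw hw'
  refine ⟨max NE ((Finset.range (N + 1)).sup NG), fun ⟨⟨z, u⟩, w⟩ hw => ?_⟩
  by_cases hu : u ∈ E z
  · exact le_max_of_le_left (hNE z u hu w)
  · refine le_max_of_le_right ((hNG _ z u w hu rfl hw).trans (Finset.le_sup ?_))
    exact Finset.mem_range_succ_iff.2 ((ncard_le_ncard inter_subset_left (hEfin z)).trans (hN z))

theorem genericallyUniformlyFinite_fin {s : ℕ} (ih : ∀ r < s, UniformlyFinite L M (Fin r → M))
    {r q : ℕ} (hrq : r + q = s) : GenericallyUniformlyFinite L M (Fin r → M) q := by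
  induction r generalizing q with
  | zero => exact genericallyUniformlyFinite_of_subsingleton
  | succ r ihr =>
    have hsplit : UniformlyFinite L M ((Fin r → M) × (Fin q → M)) :=
      (ih (r + q) (by omega)).of_surjective
        (f := fun v => (fun i => v (Fin.castAdd q i), fun i => v (Fin.natAdd r i)))
        (.prodMk (.pi fun i => DefMap.id.apply _) (.pi fun i => DefMap.id.apply _))
        (Fin.appendEquiv r q).symm.surjective
    exact ((ih r (by omega)).genericallyUniformlyFinite_prod hsplit (ihr (by omega))).of_surjective
      (f := fun p => vecCons p.2 p.1) (DefMap.id.snd.vecCons DefMap.id.fst)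
      fun v => ⟨(vecTail v, v 0), Matrix.cons_head_tail v⟩

theorem uniformlyFinite_fin (s : ℕ) : UniformlyFinite L M (Fin s → M) := by
  induction s using Nat.strong_induction_on with
  | _ s ih => exact (genericallyUniformlyFinite_fin ih rfl).uniformlyFinite

theorem uniformlyFinite (L : Language) (M Γ : Type u) [L.Structure M] [LinearOrder M]
    [TopologicalSpace M] [OrderTopology M] [DenselyOrdered M] [NoMinOrder M] [NoMaxOrder M]
    [TameOrder L M] [Coordinates M Γ] : UniformlyFinite L M Γ := by
  let e := Finite.equivFin (Coordinates.index M Γ)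
  refine (uniformlyFinite_fin _).of_surjective
    (f := fun v => Coordinates.equiv.symm fun j => v (e j)) (fun j => ?_)
    fun g => ⟨fun i => Coordinates.equiv g (e.symm i), by simp⟩
  simp only [Equiv.apply_symm_apply]
  exact DefinableFun.proj L

end UniformFiniteness

/-! ### O-minimal structures are tame -/

section Tame

theorem isFinUnionPointsIntervals_induction {M : Type*} [LinearOrder M] {Q : Set M → Prop}
    (empty : Q ∅) (union : ∀ s t, Q s → Q t → Q (s ∪ t)) (singleton : ∀ a, Q {a})
    (interval : ∀ (l : WithBot M) (r : WithTop M),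
      Q {x : M | l < (x : WithBot M) ∧ (x : WithTop M) < r})
    {s : Set M} (hs : IsFinUnionPointsIntervals s) : Q s := by
  classical
  obtain ⟨P, I, rfl⟩ := hs
  refine union _ _ ?_ ?_
  · induction P using Finset.induction_on with
    | empty => simpa using empty
    | insert a P _ ih => simpa only [Finset.coe_insert, insert_eq] using union _ _ (singleton a) ih
  · induction I using Finset.induction_on with
    | empty => simpa using empty
    | insert p I _ ih =>
      rw [Finset.set_biUnion_insert]
      exact union _ _ (interval p.1 p.2) ih

variable {M : Type*} [LinearOrder M] {s : Set M}

theorem finite_frontier_of_isFinUnionPointsIntervals [TopologicalSpace M] [OrderTopology M]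
    [DenselyOrdered M] [NoMinOrder M] [NoMaxOrder M] (hs : IsFinUnionPointsIntervals s) :
    (frontier s).Finite := by
  refine isFinUnionPointsIntervals_induction (Q := fun s => (frontier s).Finite) (by simp)
    (fun s t hs ht => ?union)
    (fun a => ?singleton) (fun l r => ?interval) hs
  case union =>
    exact (hs.union ht).subset ((frontier_union_subset s t).trans
      (union_subset_union inter_subset_left inter_subset_right))
  case singleton => exact (finite_singleton a).subset isClosed_singleton.frontier_subset
  case interval =>
    refine ((?_ : (frontier {x : M | l < x}).Finite).union
      (?_ : (frontier {x : M | (x : WithTop M) < r}).Finite)).subset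
      ((frontier_inter_subset _ _).trans (union_subset_union inter_subset_left inter_subset_right))
    · cases l with
      | bot => simp
      | coe l =>
        simp only [WithBot.coe_lt_coe]
        exact (finite_singleton l).subset (frontier_Ioi (a := l)).subset
    · cases r with
      | top => simp
      | coe r =>
        simp only [WithTop.coe_lt_coe]
        exact (finite_singleton r).subset (frontier_Iio (a := r)).subset

theorem exists_isLUB_of_isFinUnionPointsIntervals [DenselyOrdered M] [NoMaxOrder M]
    (hs : IsFinUnionPointsIntervals s) : s.Nonempty → BddAbove s → ∃ c, IsLUB s c := by
  refine isFinUnionPointsIntervals_induction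
    (Q := fun s => s.Nonempty → BddAbove s → ∃ c, IsLUB s c)
    (by simp) (fun s t hs ht => ?union)
    (fun a => ?singleton) (fun l r => ?interval) hs
  case union =>
    intro hne hbdd
    obtain ⟨hbs, hbt⟩ := bddAbove_union.1 hbdd
    rcases s.eq_empty_or_nonempty with rfl | hsne
    · simp only [empty_union] at hne ⊢
      exact ht hne hbt
    rcases t.eq_empty_or_nonempty with rfl | htne
    · simpa only [union_empty] using hs hsne hbs
    obtain ⟨c, hc⟩ := hs hsne hbs
    obtain ⟨d, hd⟩ := ht htne hbt
    exact ⟨_, hc.union hd⟩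
  case singleton => exact fun _ _ => ⟨a, isLUB_singleton⟩
  case interval =>
    rintro ⟨x, hlx, hxr⟩ hbdd
    have hl (y : M) (hy : x < y) : l < y := hlx.trans (WithBot.coe_lt_coe.2 hy)
    cases r with
    | top =>
      have hsub : Ioi x ⊆ {y : M | l < y ∧ (y : WithTop M) < ⊤} :=
        fun y hy => ⟨hl y hy, WithTop.coe_lt_top y⟩
      exact absurd (hbdd.mono hsub) (not_bddAbove_Ioi x)
    | coe r =>
      have hxr : x < r := WithTop.coe_lt_coe.1 hxr
      refine ⟨r, fun y hy => (WithTop.coe_lt_coe.1 hy.2).le, fun w hw => ?_⟩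
      exact (isLUB_Ioo hxr).2 fun y hy => hw ⟨hl y hy.1, WithTop.coe_lt_coe.2 hy.2⟩

theorem definable₁_iff_defPred {L : Language} {M : Type*} [L.Structure M] {s : Set M} :
    (univ : Set M).Definable₁ L s ↔ DefPred L M (· ∈ s) :=
  ⟨Definable.preimage_comp fun _ : Fin 1 => (), Definable.preimage_comp fun _ : Unit => (0 : Fin 1)⟩

theorem tameOrder_of_isOMinimal {L : Language} [L.Structure M] [TopologicalSpace M]
    [OrderTopology M] [DenselyOrdered M] [NoMinOrder M] [NoMaxOrder M] (hM : IsOMinimal L M) :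
    TameOrder L M where
  definable_lt := Definable.preimage_comp (β := Unit ⊕ Unit) ![Sum.inl (), Sum.inr ()]
    (hM.definable_lt.mono (empty_subset Set.univ))
  finite_frontier hs :=
    finite_frontier_of_isFinUnionPointsIntervals (hM.tame _ (definable₁_iff_defPred.2 hs))
  exists_isLUB hs :=
    exists_isLUB_of_isFinUnionPointsIntervals (hM.tame _ (definable₁_iff_defPred.2 hs))

end Tame

/-! ### Families of bounded cardinality -/

section Cardinality

variable {α β : Type u} {κ : Cardinal.{u}}

theorem mk_union_le_of_le {s t : Set α} (hκ : ℵ₀ ≤ κ) (hs : #s ≤ κ) (ht : #t ≤ κ) :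
    #(s ∪ t : Set α) ≤ κ :=
  (mk_union_le s t).trans (add_le_of_le hκ hs ht)

theorem mk_biUnion_le_of_le {s : Set α} {f : α → Set β} (hκ : ℵ₀ ≤ κ) (hs : #s ≤ κ)
    (hf : ∀ a ∈ s, #(f a) ≤ κ) : #(⋃ a ∈ s, f a) ≤ κ :=
  (mk_biUnion_le f s).trans (mul_le_of_le hκ hs (ciSup_le' fun a => hf a a.2))

theorem mk_range_le_of_determined {γ δ : Type u} {f : α → β} {g : α → γ} {k : α → δ}
    (hκ : ℵ₀ ≤ κ) (hf : #(range f) ≤ κ) (hg : #(range g) ≤ κ)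
    (hk : ∀ a b, f a = f b → g a = g b → k a = k b) : #(range k) ≤ κ := by
  have hfg : #(range fun a => (f a, g a)) ≤ κ := by
    refine (mk_le_mk_of_subset (t := range f ×ˢ range g) ?_).trans ?_
    · exact range_subset_iff.2 fun a => ⟨mem_range_self a, mem_range_self a⟩
    · exact mk_setProd _ _ ▸ mul_le_of_le hκ hf hg
  have hsurj : Function.Surjective fun x : range fun a => (f a, g a) =>
      (⟨k x.2.choose, mem_range_self _⟩ : range k) := by
    rintro ⟨_, a, rfl⟩
    have ha : ∃ a', (f a', g a') = (f a, g a) := ⟨a, rfl⟩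
    obtain ⟨hfa, hga⟩ := Prod.mk.inj ha.choose_spec
    exact ⟨⟨_, ha⟩, Subtype.ext (hk _ _ hfa hga)⟩
  exact (mk_le_of_surjective hsurj).trans hfg

theorem mk_setOf_forall_mem_le {A : Set α} (hκ : ℵ₀ ≤ κ) (hA : #A ≤ κ) (n : ℕ) :
    #{v : Fin n → α | ∀ i, v i ∈ A} ≤ κ := by
  let e : {v : Fin n → α | ∀ i, v i ∈ A} ↪ (Fin n → A) :=
    ⟨fun v i => ⟨v.1 i, v.2 i⟩, fun v w h => Subtype.ext (funext fun i =>
      congrArg Subtype.val (congrFun h i))⟩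
  refine (mk_le_of_injective e.injective).trans ?_
  calc #(Fin n → A) = #A ^ n := by simp
    _ ≤ κ ^ n := by gcongr
    _ ≤ κ := power_nat_le hκ

end Cardinality

section ConvexTraces

variable {L : Language} {M : Type u} [L.Structure M] [LinearOrder M] [TopologicalSpace M]
  [OrderTopology M] [DenselyOrdered M] [NoMinOrder M] [NoMaxOrder M] [TameOrder L M]
variable {A : Set M} {κ : Cardinal.{u}}

theorem exists_inter_eq_of_isUpperSet {U : Set M} (hA : DefPred L M (· ∈ A))
    (hU : DefPred L M (· ∈ U)) (hup : IsUpperSet U) :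
    U ∩ A = ∅ ∨ U ∩ A = A ∨ ∃ e ∈ A ∪ frontier A, U ∩ A = Ici e ∩ A ∨ U ∩ A = Ioi e ∩ A := by
  rcases (U ∩ A).eq_empty_or_nonempty with hempty | hne
  · exact .inl hempty
  by_cases hbdd : BddBelow (U ∩ A)
  swap
  · refine .inr (.inl (inter_eq_right.2 fun x _ => ?_))
    obtain ⟨y, hy, hyx⟩ := not_bddBelow_iff.1 hbdd x
    exact hup hyx.le hy.1
  obtain ⟨e, he⟩ := exists_isGLB (hU.and hA) hne hbdd
  have heA : e ∈ A ∪ frontier A := by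
    rw [← closure_eq_self_union_frontier]
    exact closure_mono inter_subset_right (he.mem_closure hne)
  refine .inr (.inr ⟨e, heA, ?_⟩)
  by_cases heU : e ∈ U
  · refine .inl (Subset.antisymm (fun x hx => ⟨he.1 hx, hx.2⟩) fun x hx => ⟨hup hx.1 heU, hx.2⟩)
  · refine .inr (Subset.antisymm (fun x hx => ⟨(he.1 hx).lt_of_ne ?_, hx.2⟩) fun x hx => ?_)
    · rintro rfl
      exact heU hx.1
    · obtain ⟨y, hy, -, hyx⟩ := he.exists_between hx.1
      exact ⟨hup hyx.le hy.1, hx.2⟩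

theorem mk_isUpperSet_inter_le (hκ : ℵ₀ ≤ κ) (hA : DefPred L M (· ∈ A)) (hAκ : #A ≤ κ) :
    #{s | ∃ U, DefPred L M (· ∈ U) ∧ IsUpperSet U ∧ U ∩ A = s} ≤ κ := by
  have hB : #(A ∪ frontier A : Set M) ≤ κ :=
    mk_union_le_of_le hκ hAκ ((TameOrder.finite_frontier hA).lt_aleph0.le.trans hκ)
  have hray (f : M → Set M) : #(f '' (A ∪ frontier A)) ≤ κ := mk_image_le.trans hB
  have hpair : #({∅, A} : Set (Set M)) ≤ κ := (toFinite {∅, A}).lt_aleph0.le.trans hκ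
  refine (mk_le_mk_of_subset ?_).trans (mk_union_le_of_le hκ hpair
    (mk_union_le_of_le hκ (hray fun e => Ici e ∩ A) (hray fun e => Ioi e ∩ A)))
  rintro s ⟨U, hU, hup, rfl⟩
  rcases exists_inter_eq_of_isUpperSet hA hU hup with h | h | ⟨e, he, h | h⟩
  · exact .inl (.inl h)
  · exact .inl (.inr h)
  · exact .inr (.inl ⟨e, he, h.symm⟩)
  · exact .inr (.inr ⟨e, he, h.symm⟩)

theorem mk_ordConnected_inter_le (hκ : ℵ₀ ≤ κ) (hA : DefPred L M (· ∈ A)) (hAκ : #A ≤ κ) :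
    #{s | ∃ T, DefPred L M (· ∈ T) ∧ T.OrdConnected ∧ T ∩ A = s} ≤ κ := by
  have hup := mk_isUpperSet_inter_le hκ hA hAκ
  refine (mk_le_mk_of_subset ?_).trans
    (mk_biUnion_le_of_le hκ hup fun s _ => (mk_image_le (f := fun t => s \ t)).trans hup)
  rintro _ ⟨T, hT, hconn, rfl⟩
  have hupT : DefPred L M (· ∈ (upperClosure T : Set M)) := by
    simp only [SetLike.mem_coe, mem_upperClosure]
    exact defPred
  have hlowT : DefPred L M (· ∈ (lowerClosure T : Set M)ᶜ) := by
    simp only [mem_compl_iff, SetLike.mem_coe, mem_lowerClosure]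
    exact defPred
  refine mem_biUnion ⟨_, hupT, (upperClosure T).upper, rfl⟩
    ⟨_, ⟨_, hlowT, (lowerClosure T).lower.compl, rfl⟩, ?_⟩
  conv_rhs => rw [← hconn.upperClosure_inter_lowerClosure]
  ext x
  simp only [Set.mem_sdiff, mem_inter_iff, mem_compl_iff]
  tauto

end ConvexTraces

/-! ### Counting branches of definable trees -/

theorem infinite_of_interleaved {α : Type*} {r : α → α → Prop} [IsLinearOrder α r] {I B : Set α}
    (hI : I.Nonempty) (hsucc : ∀ b ∈ I, ∃ b' ∈ I, r b b' ∧ b ≠ b')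
    (hB : ∀ a ∈ I, ∃ β ∈ B, r a β ∧ ∃ b ∈ I, r β b) : B.Infinite := by
  intro hfin
  suffices h : ∃ a ∈ I, ∀ β ∈ B, r a β → ∀ b ∈ I, ¬r β b by
    obtain ⟨a, ha, hmax⟩ := h
    obtain ⟨β, hβ, haβ, b, hb, hβb⟩ := hB a ha
    exact hmax β hβ haβ b hb hβb
  clear hB
  induction B, hfin using Set.Finite.induction_on with
  | empty => exact hI.imp fun a ha => ⟨ha, by simp⟩
  | @insert β B _ _ ih =>
    obtain ⟨a, ha, hmax⟩ := ih
    by_cases hβ : ∃ b ∈ I, r β b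
    swap
    · exact ⟨a, ha, forall_mem_insert.2 ⟨fun _ b hb hβb => hβ ⟨b, hb, hβb⟩, hmax⟩⟩
    obtain ⟨b, hb, hβb⟩ := hβ
    obtain ⟨b', hb', hbb', hne⟩ := hsucc b hb
    have hb'β : ¬r b' β := fun h => hne (antisymm_of r hbb' (trans_of r h hβb))
    rcases total_of r a b' with hab | hab
    · exact ⟨b', hb', forall_mem_insert.2
        ⟨fun h => absurd h hb'β, fun γ hγ h => hmax γ hγ (trans_of r hab h)⟩⟩
    · exact ⟨a, ha, forall_mem_insert.2 ⟨fun h => absurd (trans_of r hab h) hb'β, hmax⟩⟩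

theorem exists_forall_dimGE_and_not_dimGE_succ {M α : Type*} {n : ℕ} {s : Set α}
    {Z : α → Set (Fin n → M)} (hs : s.Nonempty) (hZ : ∀ x ∈ s, (Z x).Nonempty) :
    ∃ e, (∃ x ∈ s, ¬DimGE n (Z x) (e + 1)) ∧ ∀ x ∈ s, DimGE n (Z x) e := by
  classical
  have hex : ∃ e, ∃ x ∈ s, ¬DimGE n (Z x) (e + 1) :=
    ⟨n, hs.choose, hs.choose_spec, fun h => n.not_succ_le_self h.le⟩
  refine ⟨Nat.find hex, Nat.find_spec hex, fun x hx => ?_⟩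
  cases hfind : Nat.find hex with
  | zero => exact dimGE_zero (hZ x hx)
  | succ e =>
    by_contra hdim
    exact Nat.find_min hex (hfind ▸ e.lt_succ_self) ⟨x, hx, hdim⟩

section Tree

variable {L : Language} {M : Type u} [L.Structure M]

/-- A definable tree whose levels are indexed by `I`, ordered by `r`. The branch `c` passes at
level `b` through the node `H b c`; nodes are nonempty sets shrinking along each branch, nodes of
one level are equal or disjoint, and distinct branches eventually separate. -/
structure IsDefinableTree (L : Language) {M : Type u} [L.Structure M] {ι : Type*} {k : ℕ}
    (I : Set M) (r : M → M → Prop) (H : M → ι → Set (Fin k → M)) : Prop where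
  nonempty {b : M} (hb : b ∈ I) (c : ι) : (H b c).Nonempty
  anti {b b' : M} (h : r b b') (c : ι) : H b' c ⊆ H b c
  eq_of_inter {b : M} {c c' : ι} (h : (H b c ∩ H b c').Nonempty) : H b c = H b c'
  exists_disjoint {c c' : ι} (h : c ≠ c') : ∃ b ∈ I, Disjoint (H b c) (H b c')
  defPred (c : ι) : DefPred L M fun p : M × (Fin k → M) => p.2 ∈ H p.1 c
  exists_succ {b : M} (hb : b ∈ I) : ∃ b' ∈ I, r b b' ∧ b ≠ b'

namespace IsDefinableTree

variable {ι : Type u} {k : ℕ} {I : Set M} {r : M → M → Prop}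
  {H : M → ι → Set (Fin k → M)} {κ : Cardinal.{u}}

theorem mk_setOf_mk_le_le (h : IsDefinableTree L I r H) (hκ : ℵ₀ ≤ κ) (hI : #I ≤ κ)
    {X : Set (Fin k → M)} (hX : #X ≤ κ) (hHX : ∀ b c, H b c ⊆ X) :
    #{c | ∃ a ∈ I, #{c' | H a c' = H a c} ≤ κ} ≤ κ := by
  have hnode (a : M) (y : Fin k → M) : #{c | y ∈ H a c ∧ #{c' | y ∈ H a c'} ≤ κ} ≤ κ := by
    by_cases hy : #{c' | y ∈ H a c'} ≤ κ
    · exact (mk_le_mk_of_subset fun c hc => hc.1).trans hy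
    · simp [hy]
  refine (mk_le_mk_of_subset ?_).trans (mk_biUnion_le_of_le hκ hI fun a _ =>
    mk_biUnion_le_of_le hκ hX fun y _ => hnode a y)
  rintro c ⟨a, ha, hc⟩
  obtain ⟨y, hy⟩ := h.nonempty ha c
  have hle : #{c' | y ∈ H a c'} ≤ κ :=
    (mk_le_mk_of_subset fun c' hc' => h.eq_of_inter ⟨y, hc', hy⟩).trans hc
  exact mem_biUnion ha (mem_biUnion (hHX a c hy) ⟨hy, hle⟩)

variable [LinearOrder M] [TopologicalSpace M] [OrderTopology M] [DenselyOrdered M] [NoMinOrder M]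
  [NoMaxOrder M] [TameOrder L M] [IsLinearOrder M r]

theorem exists_subset_mem_frontier (h : IsDefinableTree L I r H)
    (hr : ∀ a b, {x | r a x ∧ r x b}.OrdConnected) {a a' : M} (ha' : a' ∈ I) (haa' : r a a')
    {c c' : ι} (hne : c ≠ c') (heq : H a' c' = H a' c) :
    ∃ β, r a' β ∧ ∃ b ∈ I, r β b ∧ H b c' ⊆ {w | w ∈ H a c ∧ β ∈ frontier {x | w ∈ H x c}} := by
  obtain ⟨b, hb, hdisj⟩ := h.exists_disjoint hne
  let D := {x | (H x c ∩ H x c').Nonempty}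
  have hD : DefPred L M (· ∈ D) :=
    have hc := h.defPred c
    have hc' := h.defPred c'
    OMinimal.defPred
  have hDb {x : M} (hx : x ∈ D) : r x b := by
    refine (total_of r x b).resolve_right fun hbx => ?_
    obtain ⟨y, hyc, hyc'⟩ := hx
    exact disjoint_left.1 hdisj (h.anti hbx c hyc) (h.anti hbx c' hyc')
  have ha'D : a' ∈ D := by
    obtain ⟨y, hy⟩ := h.nonempty ha' c
    exact ⟨y, hy, heq ▸ hy⟩
  have hbD : b ∉ D := not_nonempty_iff_eq_empty.2 (disjoint_iff_inter_eq_empty.1 hdisj)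
  have hndisj : ¬Disjoint {x | r a' x ∧ r x b} (frontier D) := fun hfr =>
    hbD ((mem_iff_mem_of_disjoint_frontier hD (hr a' b) hfr ⟨refl_of r a', hDb ha'D⟩
      ⟨hDb ha'D, refl_of r b⟩).1 ha'D)
  obtain ⟨β, ⟨ha'β, hβb⟩, hβ⟩ := not_disjoint_iff.1 hndisj
  refine ⟨β, ha'β, b, hb, hβb, fun y hy => ⟨?_, ?_⟩⟩
  · exact h.anti haa' c (heq ▸ h.anti (trans_of r ha'β hβb) c' hy)
  · convert hβ using 2
    ext x
    refine ⟨fun hyx => ?_, fun hx => ?_⟩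
    · refine ⟨y, hyx, h.anti ((total_of r x b).resolve_right fun hbx => ?_) c' hy⟩
      exact disjoint_left.1 hdisj (h.anti hbx c hyx) hy
    · exact (h.eq_of_inter hx).superset (h.anti (hDb hx) c' hy)

theorem dimGE_succ_of_forall_exists (h : IsDefinableTree L I r H)
    (hr : ∀ a b, {x | r a x ∧ r x b}.OrdConnected) {a : M} (ha : a ∈ I) {c : ι} {e : ℕ}
    (hsplit : ∀ a' ∈ I, r a a' → ∃ c', c ≠ c' ∧ H a' c' = H a' c ∧ ∀ b ∈ I, DimGE k (H b c') e) :
    DimGE k (H a c) (e + 1) := by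
  let Z : Set (M × (Fin k → M)) := {p | p.2 ∈ H a c ∧ p.1 ∈ frontier {x | p.2 ∈ H x c}}
  have hHc := h.defPred c
  have hHac : DefPred L M (· ∈ H a c) := hHc.comp ((DefMap.const a).prodMk .id)
  have hHc' : DefPred L M fun q : (M × (Fin k → M)) × M => q.1.2 ∈ H q.2 c :=
    hHc.comp (DefMap.id.snd.prodMk DefMap.id.fst.snd)
  have hZ : DefPred L M (· ∈ Z) := OMinimal.defPred
  have hfin (w : Fin k → M) : {b | (b, w) ∈ Z}.Finite :=
    (TameOrder.finite_frontier (hHc.comp (DefMap.id.prodMk (.const w)))).subset fun b hb => hb.2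
  suffices hinf : {β | DimGE k {w | (β, w) ∈ Z} e}.Infinite from
    (DimGE.exists_of_finite hZ hfin hinf).mono fun w ⟨_, hw⟩ => hw.1
  refine infinite_of_interleaved (r := r) ⟨a, ha⟩ (fun b hb => h.exists_succ hb) fun a₁ ha₁ => ?_
  obtain ⟨a', ha', haa', ha₁a'⟩ : ∃ a' ∈ I, r a a' ∧ r a₁ a' := by
    rcases total_of r a a₁ with haa₁ | ha₁a
    exacts [⟨a₁, ha₁, haa₁, refl_of r a₁⟩, ⟨a, ha, refl_of r a, ha₁a⟩]
  obtain ⟨c', hne, heq, hdim⟩ := hsplit a' ha' haa'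
  obtain ⟨β, ha'β, b, hb, hβb, hsub⟩ := h.exists_subset_mem_frontier hr ha' haa' hne heq
  exact ⟨β, (hdim b hb).mono hsub, trans_of r ha₁a' ha'β, b, hb, hβb⟩

theorem mk_le (h : IsDefinableTree L I r H) (hr : ∀ a b, {x | r a x ∧ r x b}.OrdConnected)
    (hκ : ℵ₀ ≤ κ) (hI : #I ≤ κ) {X : Set (Fin k → M)} (hX : #X ≤ κ) (hHX : ∀ b c, H b c ⊆ X) :
    #ι ≤ κ := by
  rcases I.eq_empty_or_nonempty with rfl | ⟨a₀, ha₀⟩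
  · have : Subsingleton ι := ⟨fun c c' => by_contra fun hne => by
      obtain ⟨b, hb, -⟩ := h.exists_disjoint hne
      exact hb⟩
    exact (le_one_iff_subsingleton.2 this).trans (one_le_aleph0.trans hκ)
  set thin : Set ι := {c | ∃ a ∈ I, #{c' | H a c' = H a c} ≤ κ}
  have hthinκ : #thin ≤ κ := h.mk_setOf_mk_le_le hκ hI hX hHX
  by_cases hthick : ∃ c, c ∉ thin
  swap
  · push Not at hthick
    rwa [eq_univ_of_forall hthick, mk_univ] at hthinκ
  obtain ⟨c₀, hc₀⟩ := hthick
  obtain ⟨e, ⟨⟨a, c⟩, ⟨ha, hc⟩, hlt⟩, hge⟩ := exists_forall_dimGE_and_not_dimGE_succ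
    (s := I ×ˢ thinᶜ) (Z := fun p => H p.1 p.2) ⟨(a₀, c₀), ha₀, hc₀⟩
    fun p hp => h.nonempty hp.1 p.2
  refine absurd (h.dimGE_succ_of_forall_exists hr ha fun a' ha' _ => ?_) hlt
  by_contra! hnone
  refine hc ⟨a', ha', (mk_le_mk_of_subset fun c' hc' => ?_).trans
    (mk_union_le_of_le hκ hthinκ ((mk_singleton c).trans_le (one_le_aleph0.trans hκ)))⟩
  by_contra hc'thin
  rw [mem_union, not_or] at hc'thin
  obtain ⟨b, hb, hdim⟩ := hnone c' (Ne.symm hc'thin.2) hc'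
  exact hdim (hge (b, c') ⟨hb, hc'thin.1⟩)

end IsDefinableTree

end Tree

/-! ### Initial segments of definable preorders -/

section Preorder

variable {E M : Type*} {X : Set E} {R : E → E → Prop} {π : E → M} {C C' : Set E} {S S' : Set M}

/-- `C` is an initial segment of `X` with respect to the relation `R`. -/
structure IsInitialIn (X : Set E) (R : E → E → Prop) (C : Set E) : Prop where
  subset : C ⊆ X
  mem_of_rel {x c : E} (hx : x ∈ X) (hc : c ∈ C) (h : R x c) : x ∈ C

/-- The points of `C` lying over `S` along `π` are cofinal in `C` with respect to `R`. -/
def IsCofinalOver (π : E → M) (R : E → E → Prop) (C : Set E) (S : Set M) : Prop :=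
  ∀ c ∈ C, ∃ y ∈ C, π y ∈ S ∧ R c y

/-- The points of `X` that lie in the same cut as `C` among the points of `X` over `S`: above
those in `C` and below those outside. -/
def gap (X : Set E) (R : E → E → Prop) (π : E → M) (S : Set M) (C : Set E) : Set E :=
  {y | y ∈ X ∧ ∀ x, x ∈ X ∧ π x ∈ S → (x ∈ C → ¬R y x) ∧ (x ∉ C → ¬R x y)}

theorem IsCofinalOver.mono (h : IsCofinalOver π R C S) (hS : S ⊆ S') : IsCofinalOver π R C S' :=
  fun c hc => (h c hc).imp fun _ hy => ⟨hy.1, hS hy.2.1, hy.2.2⟩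

theorem gap_anti (hS : S ⊆ S') : gap X R π S' C ⊆ gap X R π S C :=
  fun _ hy => ⟨hy.1, fun x hx => hy.2 x ⟨hx.1, hS hx.2⟩⟩

theorem gap_nonempty (hC : IsInitialIn X R C) (hS : ¬IsCofinalOver π R C S) :
    (gap X R π S C).Nonempty := by
  unfold IsCofinalOver at hS
  push Not at hS
  obtain ⟨c, hc, hcS⟩ := hS
  exact ⟨c, hC.subset hc, fun x hx =>
    ⟨fun hxC => hcS x hxC hx.2, fun hxC h => hxC (hC.mem_of_rel hx.1 hc h)⟩⟩

variable [Std.Total R]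

theorem mem_iff_not_rel_of_mem_gap {x y : E} (hy : y ∈ gap X R π S C) (hx : x ∈ X)
    (hxS : π x ∈ S) : x ∈ C ↔ ¬R y x :=
  ⟨(hy.2 x ⟨hx, hxS⟩).1, fun h => by_contra fun hxC =>
    (hy.2 x ⟨hx, hxS⟩).2 hxC ((total_of R x y).resolve_right h)⟩

theorem gap_eq_of_inter_nonempty (h : (gap X R π S C ∩ gap X R π S C').Nonempty) :
    gap X R π S C = gap X R π S C' := by
  obtain ⟨y, hyC, hyC'⟩ := h
  have heq (x : E) (hx : x ∈ X ∧ π x ∈ S) : x ∈ C ↔ x ∈ C' :=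
    (mem_iff_not_rel_of_mem_gap hyC hx.1 hx.2).trans
      (mem_iff_not_rel_of_mem_gap hyC' hx.1 hx.2).symm
  ext z
  refine and_congr_right fun _ => forall₂_congr fun x hx => ?_
  rw [heq x hx]

theorem IsCofinalOver.or_of_union [IsTrans E R] (h : IsCofinalOver π R C (S ∪ S')) :
    IsCofinalOver π R C S ∨ IsCofinalOver π R C S' := by
  by_contra! hn
  unfold IsCofinalOver at hn
  push Not at hn
  obtain ⟨⟨c, hc, hcS⟩, c', hc', hcS'⟩ := hn
  obtain ⟨d, hd, hcd, hc'd⟩ : ∃ d ∈ C, R c d ∧ R c' d := by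
    rcases total_of R c c' with hcc' | hc'c
    exacts [⟨c', hc', hcc', refl_of R c'⟩, ⟨c, hc, refl_of R c, hc'c⟩]
  obtain ⟨y, hy, hyS | hyS', hdy⟩ := h d hd
  exacts [hcS y hy hyS (trans_of R hcd hdy), hcS' y hy hyS' (trans_of R hc'd hdy)]

theorem exists_disjoint_gap (hC : IsInitialIn X R C) (hC' : IsInitialIn X R C') (hne : C ≠ C')
    (hI : IsCofinalOver π R C S) (hI' : IsCofinalOver π R C' S) :
    ∃ i ∈ S, ∀ T : Set M, i ∈ T → Disjoint (gap X R π T C) (gap X R π T C') := by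
  wlog hsub : ¬C ⊆ C' generalizing C C'
  · obtain ⟨i, hi, hdisj⟩ := this hC' hC hne.symm hI' hI
      fun h => hne ((not_not.1 hsub).antisymm h)
    exact ⟨i, hi, fun T hT => (hdisj T hT).symm⟩
  obtain ⟨c, hc, hcC'⟩ := not_subset.1 hsub
  obtain ⟨y, hy, hyS, hcy⟩ := hI c hc
  have hyC' : y ∉ C' := fun h => hcC' (hC'.mem_of_rel (hC.subset hc) h hcy)
  refine ⟨π y, hyS, fun T hT => disjoint_left.2 fun w hw hw' => ?_⟩
  exact hyC' ((mem_iff_not_rel_of_mem_gap hw' (hC.subset hy) hT).2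
    ((mem_iff_not_rel_of_mem_gap hw (hC.subset hy) hT).1 hy))

end Preorder

section InitialSegments

variable {L : Language} {M : Type u} [L.Structure M] [LinearOrder M] [TopologicalSpace M]
  [OrderTopology M] [DenselyOrdered M] [NoMinOrder M] [NoMaxOrder M] [TameOrder L M]
  {κ : Cardinal.{u}}

theorem mk_setOf_isCofinalOver_le {k : ℕ} {X : Set (Fin k → M)}
    {R : (Fin k → M) → (Fin k → M) → Prop} [Std.Total R] {π : (Fin k → M) → M} {I : Set M}
    {r : M → M → Prop} [IsLinearOrder M r] (hκ : ℵ₀ ≤ κ) (hX : DefPred L M (· ∈ X))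
    (hXκ : #X ≤ κ) (hR : DefPred L M fun p : (Fin k → M) × (Fin k → M) => R p.1 p.2)
    (hπ : DefMap L M π) (hI : DefPred L M (· ∈ I)) (hIκ : #I ≤ κ)
    (hr : DefPred L M fun p : M × M => r p.1 p.2)
    (hconn : ∀ a b, {x | r a x ∧ r x b}.OrdConnected) :
    #{C | DefPred L M (· ∈ C) ∧ IsInitialIn X R C ∧ IsCofinalOver π R C I ∧
      ∀ b ∈ I, ¬IsCofinalOver π R C {x | x ∈ I ∧ r x b}} ≤ κ := by
  set 𝒞 : Set (Set (Fin k → M)) := {C | DefPred L M (· ∈ C) ∧ IsInitialIn X R C ∧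
    IsCofinalOver π R C I ∧ ∀ b ∈ I, ¬IsCofinalOver π R C {x | x ∈ I ∧ r x b}}
  rcases 𝒞.eq_empty_or_nonempty with hempty | ⟨C₀, hC₀⟩
  · simp [hempty]
  have htree : IsDefinableTree L I r fun b (C : 𝒞) => gap X R π {x | x ∈ I ∧ r x b} C.1 := by
    refine ⟨fun hb C => gap_nonempty C.2.2.1 (C.2.2.2.2 _ hb), fun h C => ?_,
      gap_eq_of_inter_nonempty, fun {C C'} hne => ?_, fun C => ?_, fun {b} hb => ?_⟩
    · exact gap_anti fun x hx => ⟨hx.1, trans_of r hx.2 h⟩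
    · obtain ⟨i, hi, hdisj⟩ := exists_disjoint_gap C.2.2.1 C'.2.2.1 (Subtype.coe_ne_coe.2 hne)
        C.2.2.2.1 C'.2.2.2.1
      exact ⟨i, hi, hdisj _ ⟨hi, refl_of r i⟩⟩
    · have hC := C.2.1
      unfold gap
      exact defPred
    · obtain ⟨x, hx, hxb⟩ : ∃ x ∈ I, ¬r x b := by
        by_contra! hall
        exact hC₀.2.2.2 b hb (hC₀.2.2.1.mono fun x hx => ⟨hx, hall x hx⟩)
      exact ⟨x, hx, (total_of r b x).resolve_right hxb, fun h => hxb (h ▸ refl_of r b)⟩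
  exact htree.mk_le hconn hκ hIκ hXκ fun b C y hy => hy.1

variable {E : Type*} {R : E → E → Prop} [Std.Total R] [IsTrans E R] {π : E → M} {C : Set E}

theorem exists_ordConnected_disjoint_of_finite {B : Set M} (hB : B.Finite)
    (hpt : ∀ a, ¬IsCofinalOver π R C {a}) : ∃ T : Set M, DefPred L M (· ∈ T) ∧ T.OrdConnected ∧
      IsCofinalOver π R C T ∧ Disjoint T B := by
  induction B, hB using Set.Finite.induction_on with
  | empty => exact ⟨Set.univ, .const _, ordConnected_univ,
      fun c hc => ⟨c, hc, trivial, refl_of R c⟩, disjoint_empty _⟩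
  | @insert b B _ _ ih =>
    obtain ⟨T, hT, hconn, hcof, hdisj⟩ := ih
    have hsplit : IsCofinalOver π R C ((T ∩ Iio b ∪ T ∩ Ioi b) ∪ {b}) := hcof.mono fun x hx => by
      rcases lt_trichotomy x b with h | h | h
      exacts [.inl (.inl ⟨hx, h⟩), .inr h, .inl (.inr ⟨hx, h⟩)]
    rcases (hsplit.or_of_union.resolve_right (hpt b)).or_of_union with h | h
    · exact ⟨_, defPred, hconn.inter ordConnected_Iio, h,
        disjoint_insert_right.2 ⟨fun hb => lt_irrefl b hb.2, hdisj.mono_left inter_subset_left⟩⟩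
    · exact ⟨_, defPred, hconn.inter ordConnected_Ioi, h,
        disjoint_insert_right.2 ⟨fun hb => lt_irrefl b hb.2, hdisj.mono_left inter_subset_left⟩⟩

variable [Coordinates M E]

theorem not_isCofinalOver_Icc (hR : DefPred L M fun p : E × E => R p.1 p.2) (hπ : DefMap L M π)
    (hC : DefPred L M (· ∈ C)) (hpt : ∀ a, ¬IsCofinalOver π R C {a}) {p q : M}
    (hgood : ∀ x ∈ Icc p q, ∃ a b, a < x ∧ x < b ∧ ¬IsCofinalOver π R C (Ioo a b)) :
    ¬IsCofinalOver π R C (Icc p q) := by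
  rcases lt_or_ge q p with hqp | hpq
  · exact fun h => hpt p (h.mono (by simp [hqp]))
  have hs : DefPred L M (· ∈ {t | IsCofinalOver π R C (Icc p t)}) := by
    unfold IsCofinalOver
    exact defPred
  have hp : ¬IsCofinalOver π R C (Icc p p) := Icc_self p ▸ hpt p
  refine fun hq => hp ((mem_iff_mem_of_disjoint_frontier hs ordConnected_Icc
    (disjoint_left.2 fun t ht => ?_) ⟨le_rfl, hpq⟩ ⟨hpq, le_rfl⟩).2 hq)
  obtain ⟨a, b, hat, htb, hab⟩ := hgood t ht
  have hext (t₁ t₂ : M) (h₁ : a < t₁) (h₂ : t₂ < b) (h : IsCofinalOver π R C (Icc p t₂)) :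
      IsCofinalOver π R C (Icc p t₁) := by
    refine ((h.mono (S' := Icc p t₁ ∪ Ioo a b) fun x hx => ?_).or_of_union).resolve_right hab
    rcases le_or_gt x t₁ with hxt | hxt
    exacts [.inl ⟨hx.1, hxt⟩, .inr ⟨h₁.trans hxt, hx.2.trans_lt h₂⟩]
  rw [notMem_frontier_iff_eventually]
  filter_upwards [Ioo_mem_nhds hat htb] with t' ht'
  exact ⟨hext t t' hat ht'.2, hext t' t ht'.1 htb⟩

theorem finite_setOf_forall_isCofinalOver_Ioo (hR : DefPred L M fun p : E × E => R p.1 p.2)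
    (hπ : DefMap L M π) (hC : DefPred L M (· ∈ C)) (hpt : ∀ a, ¬IsCofinalOver π R C {a}) :
    {x | ∀ a b, a < x → x < b → IsCofinalOver π R C (Ioo a b)}.Finite := by
  by_contra hinf
  have hbad : DefPred L M (· ∈ {x | ∀ a b, a < x → x < b → IsCofinalOver π R C (Ioo a b)}) := by
    unfold IsCofinalOver
    exact defPred
  obtain ⟨α, β, hαβ, hsub⟩ := exists_Ioo_subset_of_infinite hbad hinf
  have hlarge {a b : M} (hab : a < b) (h : Ioo a b ⊆ Ioo α β) : IsCofinalOver π R C (Ioo a b) := by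
    obtain ⟨x, hax, hxb⟩ := exists_between hab
    exact hsub (h ⟨hax, hxb⟩) a b hax hxb
  let B : Set (M × M) := {p | p.1 ∈ Ioo α β ∧ p.2 ∈ Ioo α β ∧
    ∀ c, c ∈ C → (∃ y, y ∈ C ∧ π y = p.1 ∧ R c y) → ∃ y, y ∈ C ∧ π y = p.2 ∧ R c y}
  have hB : DefPred L M (· ∈ B) := defPred
  have hfin (y : M) : {x | (x, y) ∈ B}.Finite := by
    by_contra hinf
    obtain ⟨a, b, hab, hsub⟩ := exists_Ioo_subset_of_infinite
      (hB.comp (DefMap.id.prodMk (.const y))) hinf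
    refine hpt y fun c hc => ?_
    obtain ⟨z, hz, hzab, hcz⟩ := hlarge hab (fun x hx => (hsub hx).1) c hc
    obtain ⟨z', hz', hz'y, hcz'⟩ := (hsub hzab).2.2 c hc ⟨z, hz, rfl, hcz⟩
    exact ⟨z', hz', hz'y, hcz'⟩
  have hswap (x y : M) (hx : x ∈ Ioo α β) (hy : y ∈ Ioo α β) (hyx : (y, x) ∉ B) : (x, y) ∈ B := by
    refine ⟨hx, hy, fun c _ ⟨z, hz, hzx, hcz⟩ => by_contra fun hcy => hyx
      ⟨hy, hx, fun c' _ ⟨z', hz', hz'y, hc'z'⟩ => ?_⟩⟩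
    have hc'c : R c' c := (total_of R c c').resolve_left fun h => hcy
      ⟨z', hz', hz'y, trans_of R h hc'z'⟩
    exact ⟨z, hz, hzx, trans_of R hc'c hcz⟩
  have hcol (x : M) (hx : x ∈ Ioo α β) : {y | (x, y) ∈ B}.Infinite :=
    ((Ioo_infinite hαβ).sdiff (hfin x)).mono fun y hy => hswap x y hx hy.1 hy.2
  obtain ⟨y, hy⟩ :=
    (infinite_setOf_infinite_swap hB ((Ioo_infinite hαβ).mono hcol)).nonempty
  exact hy (hfin y)

theorem exists_ordConnected_isCofinalOver (hR : DefPred L M fun p : E × E => R p.1 p.2)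
    (hπ : DefMap L M π) (hC : DefPred L M (· ∈ C)) (hpt : ∀ a, ¬IsCofinalOver π R C {a}) :
    ∃ T : Set M, DefPred L M (· ∈ T) ∧ T.OrdConnected ∧ IsCofinalOver π R C T ∧
      ((∀ b ∈ T, ¬IsCofinalOver π R C {x | x ∈ T ∧ x ≤ b}) ∨
        ∀ b ∈ T, ¬IsCofinalOver π R C {x | x ∈ T ∧ x ≥ b}) := by
  obtain ⟨T, hT, hconn, hcof, hdisj⟩ := exists_ordConnected_disjoint_of_finite (L := L)
    (finite_setOf_forall_isCofinalOver_Ioo hR hπ hC hpt) hpt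
  have hIcc {p q : M} (hp : p ∈ T) (hq : q ∈ T) : ¬IsCofinalOver π R C (Icc p q) := by
    refine not_isCofinalOver_Icc hR hπ hC hpt fun x hx => ?_
    have hx' := disjoint_left.1 hdisj (hconn.out hp hq hx)
    simpa only [Set.mem_ofPred_eq, not_forall, exists_prop] using hx'
  rcases T.eq_empty_or_nonempty with rfl | ⟨c, hc⟩
  · exact ⟨∅, hT, hconn, hcof, .inl fun b hb => hb.elim⟩
  have hsplit : IsCofinalOver π R C (T ∩ Ici c ∪ T ∩ Iic c) := by
    rwa [← inter_union_distrib_left, union_comm, Iic_union_Ici, inter_univ]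
  rcases hsplit.or_of_union with h | h
  · exact ⟨_, defPred, hconn.inter ordConnected_Ici, h,
      .inl fun b hb hb' => hIcc hc hb.1 (hb'.mono fun x hx => ⟨hx.1.2, hx.2⟩)⟩
  · exact ⟨_, defPred, hconn.inter ordConnected_Iic, h,
      .inr fun b hb hb' => hIcc hb.1 hc (hb'.mono fun x hx => ⟨hx.2, hx.1.2⟩)⟩

end InitialSegments

section Counting

variable {L : Language} {M : Type u} [L.Structure M] {A : Set M} {κ : Cardinal.{u}} {n : ℕ}
  {R : (Fin (n + 1) → M) → (Fin (n + 1) → M) → Prop} {C : Set (Fin (n + 1) → M)}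

theorem exists_slice_of_isCofinalOver_singleton (hCdef : DefPred L M (· ∈ C))
    (hC : IsInitialIn {v | ∀ i, v i ∈ A} R C) (hne : C.Nonempty) {a : M}
    (ha : IsCofinalOver (· 0) R C {a}) :
    a ∈ A ∧ ∃ D, (DefPred L M (· ∈ D) ∧
      IsInitialIn {w | ∀ i, w i ∈ A} (fun w w' => R (vecCons a w) (vecCons a w')) D) ∧
      {x | (∀ i, x i ∈ A) ∧ ∃ w ∈ D, R x (vecCons a w)} = C := by
  have haA : a ∈ A := by
    obtain ⟨c, hc⟩ := hne
    obtain ⟨y, hy, rfl, -⟩ := ha c hc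
    exact hC.subset hy 0
  refine ⟨haA, {w | vecCons a w ∈ C}, ⟨defPred, fun w hw i => hC.subset hw i.succ,
    fun {w w'} hw hw' h => hC.mem_of_rel (Fin.cases haA hw) hw' h⟩, Subset.antisymm ?_ ?_⟩
  · rintro x ⟨hx, w, hw, h⟩
    exact hC.mem_of_rel hx hw h
  · intro x hx
    obtain ⟨y, hy, rfl, h⟩ := ha x hx
    have hyc : vecCons (y 0) (vecTail y) = y := Matrix.cons_head_tail y
    exact ⟨hC.subset hx, vecTail y, by rwa [Set.mem_ofPred_eq, hyc], by rwa [hyc]⟩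

theorem mk_setOf_exists_isCofinalOver_singleton_le (hκ : ℵ₀ ≤ κ) (hAκ : #A ≤ κ)
    (hslice : ∀ a, #{D | DefPred L M (· ∈ D) ∧
      IsInitialIn {w | ∀ i, w i ∈ A} (fun w w' => R (vecCons a w) (vecCons a w')) D} ≤ κ) :
    #{C | DefPred L M (· ∈ C) ∧ IsInitialIn {v | ∀ i, v i ∈ A} R C ∧ C.Nonempty ∧
      ∃ a, IsCofinalOver (· 0) R C {a}} ≤ κ := by
  have hslices : #(⋃ a ∈ A, (fun D => {x | (∀ i, x i ∈ A) ∧ ∃ w ∈ D, R x (vecCons a w)}) ''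
      {D | DefPred L M (· ∈ D) ∧
        IsInitialIn {w | ∀ i, w i ∈ A} (fun w w' => R (vecCons a w) (vecCons a w')) D}) ≤ κ :=
    mk_biUnion_le_of_le hκ hAκ fun a _ => mk_image_le.trans (hslice a)
  refine (mk_le_mk_of_subset ?_).trans hslices
  rintro C ⟨hCdef, hC, hne, a, ha⟩
  obtain ⟨haA, hD⟩ := exists_slice_of_isCofinalOver_singleton hCdef hC hne ha
  exact mem_biUnion haA hD

variable [LinearOrder M] [TopologicalSpace M] [OrderTopology M] [DenselyOrdered M] [NoMinOrder M]
  [NoMaxOrder M] [TameOrder L M]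

theorem exists_trace_isCofinalOver [Std.Total R] [IsTrans _ R]
    (hR : DefPred L M fun p : (Fin (n + 1) → M) × (Fin (n + 1) → M) => R p.1 p.2)
    (hCdef : DefPred L M (· ∈ C)) (hC : IsInitialIn {v | ∀ i, v i ∈ A} R C)
    (hpt : ¬∃ a, IsCofinalOver (· 0) R C {a}) :
    ∃ T, DefPred L M (· ∈ T) ∧ T.OrdConnected ∧ IsCofinalOver (· 0) R C (T ∩ A) ∧
      ((∀ b ∈ T ∩ A, ¬IsCofinalOver (· 0) R C {x | x ∈ T ∩ A ∧ x ≤ b}) ∨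
        ∀ b ∈ T ∩ A, ¬IsCofinalOver (· 0) R C {x | x ∈ T ∩ A ∧ x ≥ b}) := by
  obtain ⟨T, hT, hconn, hcof, hend⟩ :=
    exists_ordConnected_isCofinalOver hR (DefMap.id.apply 0) hCdef (not_exists.1 hpt)
  refine ⟨T, hT, hconn, fun c hc => ?_, hend.imp ?_ ?_⟩
  · obtain ⟨y, hy, hyT, hcy⟩ := hcof c hc
    exact ⟨y, hy, ⟨hyT, hC.subset hy 0⟩, hcy⟩
  all_goals exact fun h b hb hb' => h b hb.1 (hb'.mono fun x hx => ⟨hx.1.1, hx.2⟩)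

theorem mk_setOf_exists_trace_isCofinalOver_le [Std.Total R] (hκ : ℵ₀ ≤ κ)
    (hA : DefPred L M (· ∈ A)) (hAκ : #A ≤ κ)
    (hR : DefPred L M fun p : (Fin (n + 1) → M) × (Fin (n + 1) → M) => R p.1 p.2)
    (r : M → M → Prop) [IsLinearOrder M r] (hr : DefPred L M fun p : M × M => r p.1 p.2)
    (hconn : ∀ a b, {x | r a x ∧ r x b}.OrdConnected) :
    #{C | DefPred L M (· ∈ C) ∧ IsInitialIn {v | ∀ i, v i ∈ A} R C ∧
      ∃ T, DefPred L M (· ∈ T) ∧ T.OrdConnected ∧ IsCofinalOver (· 0) R C (T ∩ A) ∧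
        ∀ b ∈ T ∩ A, ¬IsCofinalOver (· 0) R C {x | x ∈ T ∩ A ∧ r x b}} ≤ κ := by
  have hXdef : DefPred L M (· ∈ {v : Fin (n + 1) → M | ∀ i, v i ∈ A}) :=
    .forall_of_finite fun i => hA.mem (DefMap.id.apply i)
  have htraces : #(⋃ I ∈ {I | ∃ T, DefPred L M (· ∈ T) ∧ T.OrdConnected ∧ T ∩ A = I},
      {C | DefPred L M (· ∈ C) ∧ IsInitialIn {v | ∀ i, v i ∈ A} R C ∧ IsCofinalOver (· 0) R C I ∧
        ∀ b ∈ I, ¬IsCofinalOver (· 0) R C {x | x ∈ I ∧ r x b}}) ≤ κ := by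
    refine mk_biUnion_le_of_le hκ (mk_ordConnected_inter_le hκ hA hAκ) ?_
    rintro _ ⟨T, hT, -, rfl⟩
    exact mk_setOf_isCofinalOver_le hκ hXdef (mk_setOf_forall_mem_le hκ hAκ _) hR
      (DefMap.id.apply 0) (hT.and hA) ((mk_le_mk_of_subset inter_subset_right).trans hAκ) hr hconn
  refine (mk_le_mk_of_subset ?_).trans htraces
  rintro C ⟨hCdef, hC, T, hT, hTconn, hcof, hend⟩
  exact mem_biUnion ⟨T, hT, hTconn, rfl⟩ ⟨hCdef, hC, hcof, hend⟩

theorem mk_setOf_isInitialIn_le (hκ : ℵ₀ ≤ κ) (hA : DefPred L M (· ∈ A)) (hAκ : #A ≤ κ) (n : ℕ)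
    (R : (Fin n → M) → (Fin n → M) → Prop) [Std.Total R] [IsTrans _ R]
    (hR : DefPred L M fun p : (Fin n → M) × (Fin n → M) => R p.1 p.2) :
    #{C | DefPred L M (· ∈ C) ∧ IsInitialIn {v | ∀ i, v i ∈ A} R C} ≤ κ := by
  induction n with
  | zero => exact (toFinite _).lt_aleph0.le.trans hκ
  | succ n ih =>
    have hslice (a : M) : #{D | DefPred L M (· ∈ D) ∧
        IsInitialIn {w | ∀ i, w i ∈ A} (fun w w' => R (vecCons a w) (vecCons a w')) D} ≤ κ := by
      have : Std.Total fun w w' : Fin n → M => R (vecCons a w) (vecCons a w') :=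
        ⟨fun w w' => total_of R _ _⟩
      have : IsTrans _ fun w w' : Fin n → M => R (vecCons a w) (vecCons a w') :=
        ⟨fun w w' w'' => trans_of R⟩
      exact ih _ defPred
    have hIcc (a b : M) : {x | x ≤ a ∧ b ≤ x}.OrdConnected := by
      simpa only [and_comm] using! ordConnected_Icc (a := b) (b := a)
    have hempty : #({∅} : Set (Set (Fin (n + 1) → M))) ≤ κ := (toFinite _).lt_aleph0.le.trans hκ
    refine (mk_le_mk_of_subset ?_).trans (mk_union_le_of_le hκ
      (mk_union_le_of_le hκ hempty (mk_setOf_exists_isCofinalOver_singleton_le hκ hAκ hslice))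
      (mk_union_le_of_le hκ
        (mk_setOf_exists_trace_isCofinalOver_le hκ hA hAκ hR (· ≤ ·) defPred
          fun a b => ordConnected_Icc)
        (mk_setOf_exists_trace_isCofinalOver_le hκ hA hAκ hR (· ≥ ·) defPred hIcc)))
    rintro C ⟨hCdef, hC⟩
    rcases C.eq_empty_or_nonempty with rfl | hne
    · exact .inl (.inl rfl)
    by_cases hpt : ∃ a, IsCofinalOver (· 0) R C {a}
    · exact .inl (.inr ⟨hCdef, hC, hne, hpt⟩)
    obtain ⟨T, hT, hconn, hcof, hle | hge⟩ := exists_trace_isCofinalOver hR hCdef hC hpt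
    exacts [.inr (.inl ⟨hCdef, hC, T, hT, hconn, hcof, hle⟩),
      .inr (.inr ⟨hCdef, hC, T, hT, hconn, hcof, hge⟩)]

end Counting

/-! ### Definable ultrafilters and their traces -/

section DefUltrafilter

variable {L : Language} {M : Type u} [L.Structure M] {Γ Δ : Type u} [Coordinates M Γ]
  [Coordinates M Δ] {κ : Cardinal.{u}} {A : Set M}

/-- A definable ultrafilter on the Boolean algebra of definable subsets of `Γ`, that is, a
definable type over `M` in the coordinates of `Γ`. Nothing is required of `mem` on sets that are
not definable. -/
structure DefUltrafilter (L : Language) (M : Type u) [L.Structure M] (Γ : Type u)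
    [Coordinates M Γ] where
  mem : Set Γ → Prop
  univ_mem : mem Set.univ
  compl_mem_iff {s : Set Γ} : DefPred L M (· ∈ s) → (mem sᶜ ↔ ¬mem s)
  mem_of_subset {s t : Set Γ} : DefPred L M (· ∈ s) → DefPred L M (· ∈ t) → s ⊆ t → mem s → mem t
  inter_mem {s t : Set Γ} : DefPred L M (· ∈ s) → DefPred L M (· ∈ t) → mem s → mem t →
    mem (s ∩ t)
  defPred_mem {n : ℕ} {S : Set (Γ × (Fin n → M))} : DefPred L M (· ∈ S) →
    DefPred L M fun b => mem {x | (x, b) ∈ S}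

namespace DefUltrafilter

theorem mem_congr (p : DefUltrafilter L M Γ) {s t T : Set Γ} (hs : DefPred L M (· ∈ s))
    (ht : DefPred L M (· ∈ t)) (hT : DefPred L M (· ∈ T)) (hpT : p.mem T)
    (h : ∀ x ∈ T, x ∈ s ↔ x ∈ t) : p.mem s ↔ p.mem t :=
  ⟨fun hps => p.mem_of_subset (hs.and hT) ht (fun x hx => (h x hx.2).1 hx.1)
      (p.inter_mem hs hT hps hpT),
    fun hpt => p.mem_of_subset (ht.and hT) hs (fun x hx => (h x hx.2).2 hx.1)
      (p.inter_mem ht hT hpt hpT)⟩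

/-- The image of a definable ultrafilter under a definable map. -/
def map {g : Γ → Δ} (hg : DefMap L M g) (p : DefUltrafilter L M Γ) : DefUltrafilter L M Δ where
  mem s := p.mem (g ⁻¹' s)
  univ_mem := p.univ_mem
  compl_mem_iff hs := p.compl_mem_iff (hs.mem hg)
  mem_of_subset hs ht hst := p.mem_of_subset (hs.mem hg) (ht.mem hg) (preimage_mono hst)
  inter_mem hs ht := p.inter_mem (hs.mem hg) (ht.mem hg)
  defPred_mem hS := p.defPred_mem (hS.mem ((hg.comp DefMap.id.fst).prodMk DefMap.id.snd))

end DefUltrafilter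

/-- The parameters `b` from `A` whose fibre `{x | (x, b) ∈ S}` belongs to `p`. For `S` defined by
a formula `φ(x; y)` this is the restriction `p|_{φ,A}`. -/
def trace (A : Set M) {n : ℕ} (S : Set (Γ × (Fin n → M))) (p : DefUltrafilter L M Γ) :
    Set (Fin n → M) :=
  {b | (∀ i, b i ∈ A) ∧ p.mem {x | (x, b) ∈ S}}

variable {n : ℕ} {S S' T : Set (Γ × (Fin n → M))}

theorem defPred_fibre (hS : DefPred L M (· ∈ S)) (b : Fin n → M) :
    DefPred L M (· ∈ {x | (x, b) ∈ S}) :=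
  defPred

theorem defPred_mem_trace (hA : DefPred L M (· ∈ A)) (hS : DefPred L M (· ∈ S))
    (p : DefUltrafilter L M Γ) : DefPred L M (· ∈ trace A S p) :=
  (DefPred.forall_of_finite fun i => hA.comp (DefMap.id.apply i)).and (p.defPred_mem hS)

theorem trace_ite (hS : DefPred L M (· ∈ S)) (hS' : DefPred L M (· ∈ S'))
    (hT : DefPred L M (· ∈ T)) (p : DefUltrafilter L M Γ) :
    trace A (T.ite S S') p = (trace A T p).ite (trace A S p) (trace A S' p) := by
  have hite : DefPred L M (· ∈ T.ite S S') := (hS.and hT).or (hS'.and hT.not)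
  ext b
  by_cases hpT : p.mem {x | (x, b) ∈ T}
  · have hiff := p.mem_congr (defPred_fibre hite b) (defPred_fibre hS b) (defPred_fibre hT b) hpT
      fun x (hx : (x, b) ∈ T) => by simp [Set.ite, hx]
    have htrace : b ∈ trace A (T.ite S S') p ↔ b ∈ trace A S p := and_congr_right fun _ => hiff
    rw [htrace]
    simp only [Set.ite, trace, mem_union, mem_inter_iff, Set.mem_sdiff, Set.mem_ofPred_eq]
    tauto
  · have hiff := p.mem_congr (defPred_fibre hite b) (defPred_fibre hS' b) (defPred_fibre hT b).not
      ((p.compl_mem_iff (defPred_fibre hT b)).2 hpT)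
      fun x (hx : (x, b) ∉ T) => by simp [Set.ite, hx]
    have htrace : b ∈ trace A (T.ite S S') p ↔ b ∈ trace A S' p := and_congr_right fun _ => hiff
    rw [htrace]
    simp only [Set.ite, trace, mem_union, mem_inter_iff, Set.mem_sdiff, Set.mem_ofPred_eq]
    tauto

theorem mk_range_trace_ite_le (hκ : ℵ₀ ≤ κ) (hS : DefPred L M (· ∈ S)) (hS' : DefPred L M (· ∈ S'))
    (hT : DefPred L M (· ∈ T)) (hTκ : #(range (trace (L := L) A T)) ≤ κ)
    (hSκ : #(range (trace (L := L) A S)) ≤ κ) (hSκ' : #(range (trace (L := L) A S')) ≤ κ) :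
    #(range (trace (L := L) A (T.ite S S'))) ≤ κ := by
  have hpair : #(range fun p => (trace (L := L) A S p, trace A S' p)) ≤ κ :=
    mk_range_le_of_determined hκ hSκ hSκ' fun _ _ h h' => Prod.ext h h'
  refine mk_range_le_of_determined hκ hTκ hpair fun p q hpq hpq' => ?_
  obtain ⟨h, h'⟩ := Prod.mk.inj hpq'
  rw [trace_ite hS hS' hT, trace_ite hS hS' hT, hpq, h, h']

variable (L) in
/-- The conclusion of the theorem for definable types in the coordinates of `Γ`: along every
definable family they have at most `κ` traces on `A`. -/
def FewTraces (A : Set M) (κ : Cardinal.{u}) (Γ : Type u) [Coordinates M Γ] : Prop :=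
  ∀ (n : ℕ) (S : Set (Γ × (Fin n → M))), DefPred L M (· ∈ S) → #(range (trace (L := L) A S)) ≤ κ

theorem fewTraces_of_unique [Unique Γ] (hκ : 1 ≤ κ) : FewTraces L A κ Γ := fun n S _ => by
  refine (mk_le_one_iff_set_subsingleton.2 ?_).trans hκ
  have htrace (p : DefUltrafilter L M Γ) :
      trace A S p = {b | (∀ i, b i ∈ A) ∧ (default, b) ∈ S} := by
    have hempty : ¬p.mem ∅ := (p.compl_mem_iff (s := ∅) (DefPred.const False)).1
      (compl_empty ▸ p.univ_mem)
    have hmem (s : Set Γ) : p.mem s ↔ default ∈ s := by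
      rcases Subsingleton.eq_empty_or_singleton (subsingleton_of_subsingleton (s := s))
        with rfl | ⟨x, rfl⟩
      · simpa using hempty
      · rw [Unique.eq_default x, ← univ_unique]
        exact iff_of_true p.univ_mem (mem_univ _)
    ext b
    exact and_congr_right fun _ => hmem _
  rintro _ ⟨p, rfl⟩ _ ⟨q, rfl⟩
  rw [htrace, htrace]

theorem FewTraces.mk_range_trace_comp_le (h : FewTraces L A κ Δ) {g : Γ → Δ} (hg : DefMap L M g)
    {S : Set (Δ × (Fin n → M))} (hS : DefPred L M (· ∈ S)) :
    #(range (trace (L := L) A {q : Γ × (Fin n → M) | (g q.1, q.2) ∈ S})) ≤ κ :=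
  (mk_le_mk_of_subset (t := range (trace A S))
    (range_subset_iff.2 fun p => ⟨DefUltrafilter.map hg p, rfl⟩)).trans (h n S hS)

theorem FewTraces.of_leftInverse (h : FewTraces L A κ Δ) {g : Γ → Δ} {g' : Δ → Γ}
    (hg : DefMap L M g) (hg' : DefMap L M g') (hinv : Function.LeftInverse g' g) :
    FewTraces L A κ Γ := fun n S hS => by
  have hS' : DefPred L M (· ∈ {q : Δ × (Fin n → M) | (g' q.1, q.2) ∈ S}) := defPred
  simpa [hinv _] using h.mk_range_trace_comp_le hg hS'

end DefUltrafilter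

/-! ### Adding one variable -/

section AddVariable

variable {L : Language} {M : Type u} [L.Structure M] [LinearOrder M] {Γ : Type u}
  [Coordinates M Γ] {n : ℕ} {f : Γ × (Fin n → M) → M} {A : Set M}

/-- The comparison, at a generic point of `q`, of the members of a family of functions on `Γ`
with parameters `b` and `b'`. -/
def GermLE (q : DefUltrafilter L M Γ) (f : Γ × (Fin n → M) → M) (b b' : Fin n → M) : Prop :=
  q.mem {x | f (x, b) ≤ f (x, b')}

/-- The family whose trace records the relation `GermLE`, indexed by concatenated parameters. -/
def pairLE (f : Γ × (Fin n → M) → M) : Set (Γ × (Fin (n + n) → M)) :=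
  {z | f (z.1, z.2 ∘ Fin.castAdd n) ≤ f (z.1, z.2 ∘ Fin.natAdd n)}

theorem germLE_iff_mem_pairLE {q : DefUltrafilter L M Γ} {b b' : Fin n → M} :
    GermLE q f b b' ↔ q.mem {x | (x, Fin.append b b') ∈ pairLE f} := by
  have hl : Fin.append b b' ∘ Fin.castAdd n = b := funext (Fin.append_left b b')
  have hr : Fin.append b b' ∘ Fin.natAdd n = b' := funext (Fin.append_right b b')
  simp only [GermLE, pairLE, Set.mem_ofPred_eq, hl, hr]

theorem germLE_iff_append_mem_trace {q : DefUltrafilter L M Γ} {b b' : Fin n → M}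
    (hb : ∀ i, b i ∈ A) (hb' : ∀ i, b' i ∈ A) :
    GermLE q f b b' ↔ Fin.append b b' ∈ trace A (pairLE f) q := by
  refine germLE_iff_mem_pairLE.trans (iff_and_self.2 fun _ => Fin.addCases ?_ ?_)
  · simpa only [Fin.append_left] using hb
  · simpa only [Fin.append_right] using hb'

theorem IsInitialIn.of_trace_pairLE_eq {q q' : DefUltrafilter L M Γ}
    {C : Set (Fin n → M)} (hC : IsInitialIn {v | ∀ i, v i ∈ A} (GermLE q f) C)
    (h : trace A (pairLE f) q = trace A (pairLE f) q') :
    IsInitialIn {v | ∀ i, v i ∈ A} (GermLE q' f) C where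
  subset := hC.subset
  mem_of_rel hx hc hxc := by
    have hcA := hC.subset hc
    rw [germLE_iff_append_mem_trace hx hcA, ← h, ← germLE_iff_append_mem_trace hx hcA] at hxc
    exact hC.mem_of_rel hx hc hxc

variable [DefinableOrder L M]

theorem defPred_mem_pairLE (hf : DefMap L M f) : DefPred L M (· ∈ pairLE f) :=
  DefPred.le (hf.comp (DefMap.id.fst.prodMk (.pi fun i => DefMap.id.snd.apply (Fin.castAdd n i))))
    (hf.comp (DefMap.id.fst.prodMk (.pi fun i => DefMap.id.snd.apply (Fin.natAdd n i))))

theorem defPred_germLE (hf : DefMap L M f) (q : DefUltrafilter L M Γ) :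
    DefPred L M fun p : (Fin n → M) × (Fin n → M) => GermLE q f p.1 p.2 :=
  ((q.defPred_mem (defPred_mem_pairLE hf)).comp (.append DefMap.id.fst DefMap.id.snd)).congr
    fun _ => germLE_iff_mem_pairLE

theorem germLE_total (hf : DefMap L M f) (q : DefUltrafilter L M Γ) : Std.Total (GermLE q f) where
  total b b' := by
    have hle (b b' : Fin n → M) : DefPred L M (· ∈ {x | f (x, b) ≤ f (x, b')}) := defPred
    refine or_iff_not_imp_left.2 fun h => ?_
    exact q.mem_of_subset (hle b b').not (hle b' b) (fun x hx => (lt_of_not_ge hx).le)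
      ((q.compl_mem_iff (hle b b')).2 h)

theorem germLE_trans (hf : DefMap L M f) (q : DefUltrafilter L M Γ) : IsTrans _ (GermLE q f) where
  trans a b c hab hbc := by
    have hle (b b' : Fin n → M) : DefPred L M (· ∈ {x | f (x, b) ≤ f (x, b')}) := defPred
    exact q.mem_of_subset ((hle a b).and (hle b c)) (hle a c) (fun x hx => hx.1.trans hx.2)
      (q.inter_mem (hle a b) (hle b c) hab hbc)

theorem isInitialIn_trace_cut (hf : DefMap L M f) {Q : M → M → Prop}
    (hQ : DefPred L M fun p : M × M => Q p.1 p.2)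
    (hQmono : ∀ ⦃x y z⦄, x ≤ y → Q y z → Q x z) (p : DefUltrafilter L M (M × Γ)) :
    IsInitialIn {v | ∀ i, v i ∈ A} (GermLE (p.map DefMap.id.snd) f)
      (trace A {z : (M × Γ) × (Fin n → M) | Q (f (z.1.2, z.2)) z.1.1} p) where
  subset _ hb := hb.1
  mem_of_rel {b c} hb hc hbc := by
    have hcut (b : Fin n → M) : DefPred L M (· ∈ {w : M × Γ | Q (f (w.2, b)) w.1}) := defPred
    have hle : DefPred L M (· ∈ {w : M × Γ | f (w.2, b) ≤ f (w.2, c)}) := defPred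
    exact ⟨hb, p.mem_of_subset (hle.and (hcut c)) (hcut b) (fun w hw => hQmono hw.1 hw.2)
      (p.inter_mem hle (hcut c) hbc hc.2)⟩

end AddVariable

section AddVariableTame

variable {L : Language} {M : Type u} [L.Structure M] [LinearOrder M] [TopologicalSpace M]
  [OrderTopology M] [DenselyOrdered M] [NoMinOrder M] [NoMaxOrder M] [TameOrder L M]
variable {κ : Cardinal.{u}} {A : Set M} {Γ : Type u} [Coordinates M Γ] {n : ℕ}

variable {f : Γ × (Fin n → M) → M} {Q : M → M → Prop}

theorem FewTraces.mk_range_trace_cut_le (h : FewTraces L A κ Γ) (hκ : ℵ₀ ≤ κ)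
    (hA : DefPred L M (· ∈ A)) (hAκ : #A ≤ κ) (hf : DefMap L M f)
    (hQ : DefPred L M fun p : M × M => Q p.1 p.2) (hQmono : ∀ ⦃x y z⦄, x ≤ y → Q y z → Q x z) :
    #(range (trace (L := L) A {z : (M × Γ) × (Fin n → M) | Q (f (z.1.2, z.2)) z.1.1})) ≤ κ := by
  have hcut : DefPred L M (· ∈ {z : (M × Γ) × (Fin n → M) | Q (f (z.1.2, z.2)) z.1.1}) := defPred
  let initials (D : Set (Fin (n + n) → M)) : Set (Set (Fin n → M)) :=
    {C | ∃ q : DefUltrafilter L M Γ, trace A (pairLE f) q = D ∧ DefPred L M (· ∈ C) ∧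
      IsInitialIn {v | ∀ i, v i ∈ A} (GermLE q f) C}
  have hinitials (D) (hD : D ∈ range (trace (L := L) A (pairLE f))) : #(initials D) ≤ κ := by
    obtain ⟨q, rfl⟩ := hD
    have := germLE_total hf q
    have := germLE_trans hf q
    refine (mk_le_mk_of_subset ?_).trans
      (mk_setOf_isInitialIn_le hκ hA hAκ n (GermLE q f) (defPred_germLE hf q))
    rintro C ⟨q', hq', hCdef, hC⟩
    exact ⟨hCdef, hC.of_trace_pairLE_eq hq'⟩
  refine (mk_le_mk_of_subset (range_subset_iff.2 fun p => ?_)).trans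
    (mk_biUnion_le_of_le hκ (h _ _ (defPred_mem_pairLE hf)) hinitials)
  exact mem_biUnion (mem_range_self (p.map DefMap.id.snd))
    ⟨_, rfl, defPred_mem_trace hA hcut p, isInitialIn_trace_cut hf hQ hQmono p⟩

theorem mem_iff_eventually_atBot_of_disjoint_frontier {s : Set M} {t : M}
    (hs : DefPred L M (· ∈ s)) (h : Disjoint (Iic t) (frontier s)) :
    t ∈ s ↔ ∀ᶠ y in atBot, y ∈ s := by
  have hiff (y : M) (hy : y ≤ t) : t ∈ s ↔ y ∈ s :=
    mem_iff_mem_of_disjoint_frontier hs ordConnected_Iic h self_mem_Iic hy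
  have : Nonempty M := ⟨t⟩
  exact ⟨fun ht => (eventually_le_atBot t).mono fun y hy => (hiff y hy).1 ht, fun hev =>
    have ⟨y, hys, hy⟩ := (hev.and (eventually_le_atBot t)).exists
    (hiff y hy).2 hys⟩

/-- `s` with its part on `Iic a` replaced by the germ of `s` to the right of `a`. -/
def flattenBelow (a : M) (s : Set M) : Set M :=
  {t | a < t ∧ t ∈ s ∨ t ≤ a ∧ ∀ᶠ y in 𝓝[>] a, y ∈ s}

theorem frontier_flattenBelow_subset {a : M} {s : Set M} (hs : DefPred L M (· ∈ s)) :
    frontier (flattenBelow a s) ⊆ frontier s \ {a} := by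
  intro t
  contrapose
  intro ht
  rw [notMem_frontier_iff_eventually]
  have hle (y : M) (hy : y ≤ a) : y ∈ flattenBelow a s ↔ ∀ᶠ y in 𝓝[>] a, y ∈ s := by
    simp [flattenBelow, hy]
  have hgt (y : M) (hy : a < y) : y ∈ flattenBelow a s ↔ y ∈ s := by simp [flattenBelow, hy]
  rcases lt_trichotomy t a with hta | rfl | hta
  · filter_upwards [Iio_mem_nhds hta] with y hy
    rw [hle y (le_of_lt hy), hle t hta.le]
  · refine eventually_nhds_iff_nhdsLT_nhdsGT.2 ⟨?_, Iff.rfl, ?_⟩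
    · filter_upwards [self_mem_nhdsWithin] with y hy
      rw [hle y (le_of_lt hy), hle t le_rfl]
    · rw [hle t le_rfl]
      rcases eventually_nhdsGT_mem_or_notMem hs t with h | h
      · filter_upwards [self_mem_nhdsWithin, h] with y hy hys
        exact ((hgt y hy).trans (iff_true_intro hys)).trans (iff_true_intro h).symm
      · have hn : ¬∀ᶠ y in 𝓝[>] t, y ∈ s := fun h' => (h.and h').exists.elim fun y hy => hy.1 hy.2
        filter_upwards [self_mem_nhdsWithin, h] with y hy hys
        exact ((hgt y hy).trans (iff_false_intro hys)).trans (iff_false_intro hn).symm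
  · have hts : t ∉ frontier s := fun h => ht ⟨h, hta.ne'⟩
    filter_upwards [Ioi_mem_nhds hta, notMem_frontier_iff_eventually.1 hts] with y hy hys
    rw [hgt y hy, hgt t hta, hys]

theorem ncard_frontier_flattenBelow_le {a : M} {s : Set M} {N : ℕ} (hs : DefPred L M (· ∈ s))
    (ha : (frontier s).Nonempty → IsLeast (frontier s) a) (hN : (frontier s).ncard ≤ N + 1) :
    (frontier (flattenBelow a s)).ncard ≤ N := by
  have hfin := TameOrder.finite_frontier hs
  refine (ncard_le_ncard (frontier_flattenBelow_subset hs) hfin.sdiff).trans ?_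
  rcases (frontier s).eq_empty_or_nonempty with hempty | hne
  · simp [hempty]
  · rw [ncard_sdiff_singleton_of_mem (ha hne).1]
    exact Nat.sub_le_of_le_add hN

theorem mem_iff_mem_ite_flattenBelow {a : M} {s : Set M} (hs : DefPred L M (· ∈ s))
    (ha : (frontier s).Nonempty → IsLeast (frontier s) a) (t : M) :
    t ∈ s ↔ t ∈ (Ioi a).ite (flattenBelow a s)
      ((Ici a).ite {_t | a ∈ s} {_t | ∀ᶠ y in atBot, y ∈ s}) := by
  rcases lt_trichotomy t a with hta | rfl | hta
  · have hdisj : Disjoint (Iic t) (frontier s) := disjoint_left.2 fun y hyt hy =>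
      (((ha ⟨y, hy⟩).2 hy).trans hyt).not_gt hta
    simp [Set.ite, hta.not_gt, hta.not_ge, mem_iff_eventually_atBot_of_disjoint_frontier hs hdisj]
  · simp [Set.ite]
  · simp [Set.ite, hta, flattenBelow]

theorem FewTraces.mk_range_trace_eventually_atBot_le [Nonempty M] (h : FewTraces L A κ Γ)
    {S : Set ((M × Γ) × (Fin n → M))} (hS : DefPred L M (· ∈ S)) :
    #(range (trace (L := L) A
      {w : (M × Γ) × (Fin n → M) | ∀ᶠ y in atBot, ((y, w.1.2), w.2) ∈ S})) ≤ κ :=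
  h.mk_range_trace_comp_le DefMap.id.snd
    (S := {z : Γ × (Fin n → M) | ∀ᶠ y in atBot, ((y, z.1), z.2) ∈ S}) defPred

theorem FewTraces.mk_range_trace_le_of_flattenBelow [Nonempty M] (h : FewTraces L A κ Γ)
    (hκ : ℵ₀ ≤ κ) (hA : DefPred L M (· ∈ A)) (hAκ : #A ≤ κ) {S S' : Set ((M × Γ) × (Fin n → M))}
    (hS : DefPred L M (· ∈ S)) (hS' : DefPred L M (· ∈ S')) (hf : DefMap L M f)
    (hmin : ∀ z, (frontier {t | ((t, z.1), z.2) ∈ S}).Nonempty →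
      IsLeast (frontier {t | ((t, z.1), z.2) ∈ S}) (f z))
    (hflat : ∀ z t, ((t, z.1), z.2) ∈ S' ↔ t ∈ flattenBelow (f z) {t | ((t, z.1), z.2) ∈ S})
    (hκ' : #(range (trace (L := L) A S')) ≤ κ) : #(range (trace (L := L) A S)) ≤ κ := by
  let Gt : Set ((M × Γ) × (Fin n → M)) := {w | f (w.1.2, w.2) < w.1.1}
  let Ge : Set ((M × Γ) × (Fin n → M)) := {w | f (w.1.2, w.2) ≤ w.1.1}
  let At : Set ((M × Γ) × (Fin n → M)) := {w | ((f (w.1.2, w.2), w.1.2), w.2) ∈ S}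
  let Low : Set ((M × Γ) × (Fin n → M)) := {w | ∀ᶠ y in atBot, ((y, w.1.2), w.2) ∈ S}
  have hGt : DefPred L M (· ∈ Gt) := defPred
  have hGe : DefPred L M (· ∈ Ge) := defPred
  have hAt : DefPred L M (· ∈ At) := defPred
  have hLow : DefPred L M (· ∈ Low) := defPred
  have hGtκ : #(range (trace (L := L) A Gt)) ≤ κ :=
    h.mk_range_trace_cut_le hκ hA hAκ hf (Q := (· < ·)) defPred fun _ _ _ => lt_of_le_of_lt
  have hGeκ : #(range (trace (L := L) A Ge)) ≤ κ :=
    h.mk_range_trace_cut_le hκ hA hAκ hf (Q := (· ≤ ·)) defPred fun _ _ _ => le_trans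
  have hAtκ : #(range (trace (L := L) A At)) ≤ κ :=
    h.mk_range_trace_comp_le DefMap.id.snd
      (S := {z : Γ × (Fin n → M) | ((f z, z.1), z.2) ∈ S}) defPred
  have hLowκ : #(range (trace (L := L) A Low)) ≤ κ := h.mk_range_trace_eventually_atBot_le hS
  have hGeite : DefPred L M (· ∈ Ge.ite At Low) := (hAt.and hGe).or (hLow.and hGe.not)
  have hS_eq : S = Gt.ite S' (Ge.ite At Low) := Set.ext fun ⟨⟨t, g⟩, b⟩ => by
    have hslice : DefPred L M (· ∈ {t | ((t, g), b) ∈ S}) := defPred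
    refine (mem_iff_mem_ite_flattenBelow hslice (hmin (g, b)) t).trans ?_
    simp only [Set.ite, mem_union, mem_inter_iff, Set.mem_sdiff, ← hflat (g, b)]
    rfl
  rw [hS_eq]
  exact mk_range_trace_ite_le hκ hS' hGeite hGt hGtκ hκ'
    (mk_range_trace_ite_le hκ hAt hLow hGe hGeκ hAtκ hLowκ)

theorem FewTraces.mk_range_trace_le_of_ncard_frontier_le [Nonempty M] (h : FewTraces L A κ Γ)
    (hκ : ℵ₀ ≤ κ) (hA : DefPred L M (· ∈ A)) (hAκ : #A ≤ κ) (N : ℕ)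
    {S : Set ((M × Γ) × (Fin n → M))} (hS : DefPred L M (· ∈ S))
    (hN : ∀ z : Γ × (Fin n → M), (frontier {t | ((t, z.1), z.2) ∈ S}).ncard ≤ N) :
    #(range (trace (L := L) A S)) ≤ κ := by
  induction N generalizing S with
  | zero =>
    have hS_eq : S = {w | ∀ᶠ y in atBot, ((y, w.1.2), w.2) ∈ S} := Set.ext fun w => by
      have hslice : DefPred L M (· ∈ {t | ((t, w.1.2), w.2) ∈ S}) := defPred
      refine mem_iff_eventually_atBot_of_disjoint_frontier hslice ?_
      have hempty := Nat.le_zero.1 (hN (w.1.2, w.2))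
      rw [(ncard_eq_zero (TameOrder.finite_frontier hslice)).1 hempty]
      exact disjoint_empty _
    rw [hS_eq]
    exact h.mk_range_trace_eventually_atBot_le hS
  | succ N ih =>
    have hslice (z : Γ × (Fin n → M)) : DefPred L M (· ∈ {t | ((t, z.1), z.2) ∈ S}) := defPred
    obtain ⟨f, hf, hleast⟩ := exists_defMap_isLeast (L := L)
      (B := {w : (Γ × (Fin n → M)) × M | w.2 ∈ frontier {t | ((t, w.1.1), w.1.2) ∈ S}}) defPred
    have hmin (z : Γ × (Fin n → M)) (hne : (frontier {t | ((t, z.1), z.2) ∈ S}).Nonempty) :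
        IsLeast (frontier {t | ((t, z.1), z.2) ∈ S}) (f z) :=
      hleast z (TameOrder.finite_frontier (hslice z)) hne
    let S' : Set ((M × Γ) × (Fin n → M)) :=
      {w | w.1.1 ∈ flattenBelow (f (w.1.2, w.2)) {t | ((t, w.1.2), w.2) ∈ S}}
    have hS' : DefPred L M (· ∈ S') := by
      simp only [S', flattenBelow]
      exact defPred
    have hN' (z : Γ × (Fin n → M)) : (frontier {t | ((t, z.1), z.2) ∈ S'}).ncard ≤ N := by
      change (frontier (flattenBelow (f z) {t | ((t, z.1), z.2) ∈ S})).ncard ≤ N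
      exact ncard_frontier_flattenBelow_le (hslice z) (hmin z) (hN z)
    exact h.mk_range_trace_le_of_flattenBelow hκ hA hAκ hS hS' hf hmin (fun _ _ => Iff.rfl)
      (ih hS' hN')

theorem FewTraces.prod [Nonempty M] (h : FewTraces L A κ Γ) (hκ : ℵ₀ ≤ κ)
    (hA : DefPred L M (· ∈ A)) (hAκ : #A ≤ κ) : FewTraces L A κ (M × Γ) := fun n S hS => by
  have hslice (z : Γ × (Fin n → M)) : DefPred L M (· ∈ {t | ((t, z.1), z.2) ∈ S}) := defPred
  obtain ⟨N, hN⟩ := uniformlyFinite L M (Γ × (Fin n → M))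
    {w | w.2 ∈ frontier {t | ((t, w.1.1), w.1.2) ∈ S}} defPred
    fun z => TameOrder.finite_frontier (hslice z)
  exact h.mk_range_trace_le_of_ncard_frontier_le hκ hA hAκ N hS hN

theorem fewTraces_fin [Nonempty M] (hκ : ℵ₀ ≤ κ) (hA : DefPred L M (· ∈ A)) (hAκ : #A ≤ κ) :
    ∀ m : ℕ, FewTraces L A κ (Fin m → M)
  | 0 => fewTraces_of_unique (one_le_aleph0.trans hκ)
  | m + 1 => ((fewTraces_fin hκ hA hAκ m).prod hκ hA hAκ).of_leftInverse
      (g := fun v => (v 0, vecTail v)) (g' := fun q => vecCons q.1 q.2)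
      ((DefMap.id.apply 0).prodMk DefMap.id.vecTail) (.vecCons DefMap.id.fst DefMap.id.snd)
      fun v => Matrix.cons_head_tail v

end AddVariableTame

/-! ### Definable types as definable ultrafilters -/

section Formulas

variable {L : Language} {M : Type*} [L.Structure M] {ι : Type*}

theorem definable_univ_iff_exists_formula {s : Set (ι → M)} :
    (Set.univ : Set M).Definable L s ↔
      ∃ (k : ℕ) (φ : L.Formula (ι ⊕ Fin k)) (c : Fin k → M),
        s = {x | φ.Realize (Sum.elim x c)} := by
  constructor
  · intro h
    obtain ⟨B, -, hB⟩ := definable_iff_finitely_definable.1 h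
    obtain ⟨φ, rfl⟩ := definable_iff_exists_formula_sum.1 hB
    let e := Finite.equivFin (B : Set M)
    refine ⟨_, φ.relabel (Sum.elim (Sum.inr ∘ e) Sum.inl), (↑) ∘ e.symm, ?_⟩
    simp only [Formula.realize_relabel, Sum.comp_elim, ← Function.comp_assoc, Sum.elim_comp_inr,
      Sum.elim_comp_inl]
    simp [Function.comp_assoc]
  · rintro ⟨k, φ, c, rfl⟩
    refine definable_iff_exists_formula_sum.2
      ⟨φ.relabel (Sum.elim Sum.inr fun i => Sum.inl ⟨c i, mem_univ _⟩), ?_⟩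
    simp only [Formula.realize_relabel, Sum.comp_elim, Sum.elim_comp_inr]
    rfl

variable {m n : ℕ}

/-- The formula `φ(x; b)` over `M`, from which `paramSentence φ b` is obtained by turning `x` into
constants. -/
noncomputable def instantiate (φ : L.Formula (Fin m ⊕ Fin n)) (b : Fin n → M) :
    L[[M]].Formula (Fin m) :=
  ((L.lhomWithConstants M).onFormula φ).subst (Sum.elim Term.var fun j => (L.con (b j)).term)

theorem realize_instantiate (φ : L.Formula (Fin m ⊕ Fin n)) (b : Fin n → M) (x : Fin m → M) :
    (instantiate φ b).Realize x ↔ φ.Realize (Sum.elim x b) := by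
  have hval : (fun i => (Sum.elim Term.var (fun j => (L.con (b j)).term) i :
      L[[M]].Term (Fin m)).realize x) = Sum.elim x b := by
    funext i
    rcases i with i | j
    · rfl
    · exact Term.realize_constants
  unfold instantiate Formula.Realize
  rw [BoundedFormula.realize_subst, hval]
  exact LHom.realize_onFormula _ φ

theorem exists_formula_of_defPred {s : Set (Fin m → M)} (hs : DefPred L M (· ∈ s)) :
    ∃ F : L[[M]].Formula (Fin m), s = {x | F.Realize x} := by
  obtain ⟨k, φ, c, h⟩ := definable_univ_iff_exists_formula.1 hs
  exact ⟨instantiate φ c,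
    Set.ext fun x => (Set.ext_iff.1 h x).trans (realize_instantiate φ c x).symm⟩

end Formulas

section Types

variable {L : Language} {M : Type*} [L.Structure M] {m n : ℕ}
  (p : (L[[M]].completeTheory M).CompleteType (Fin m)) {F G : L[[M]].Formula (Fin m)}

theorem equivSentence_mem_of_imp (h : ∀ x : Fin m → M, F.Realize x → G.Realize x)
    (hF : Formula.equivSentence F ∈ p) : Formula.equivSentence G ∈ p := by
  obtain ⟨N, v, rfl⟩ := Theory.exists_modelType_is_realized_in _ p
  rw [Theory.CompleteType.formula_mem_typeOf] at hF ⊢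
  let σ : L[[M]].Sentence := Formula.iAlls (α := Empty) (Fin m) ((F.imp G).relabel Sum.inr)
  have hσM : M ⊨ σ := by
    simpa [σ, Sentence.Realize, Function.comp_def] using h
  have hσN : N ⊨ σ := N.is_model.realize_of_mem σ hσM
  simp only [σ, Sentence.Realize, Formula.realize_iAlls, Formula.realize_relabel,
    Formula.realize_imp] at hσN
  exact hσN v hF

theorem equivSentence_not_mem_iff :
    Formula.equivSentence F.not ∈ p ↔ Formula.equivSentence F ∉ p := by
  obtain ⟨N, v, rfl⟩ := Theory.exists_modelType_is_realized_in _ p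
  simp only [Theory.CompleteType.formula_mem_typeOf, Formula.realize_not]

theorem equivSentence_inf_mem_iff : Formula.equivSentence (F ⊓ G) ∈ p ↔
    Formula.equivSentence F ∈ p ∧ Formula.equivSentence G ∈ p := by
  obtain ⟨N, v, rfl⟩ := Theory.exists_modelType_is_realized_in _ p
  simp only [Theory.CompleteType.formula_mem_typeOf, Formula.realize_inf]

theorem equivSentence_top_mem : Formula.equivSentence (⊤ : L[[M]].Formula (Fin m)) ∈ p := by
  obtain ⟨N, v, rfl⟩ := Theory.exists_modelType_is_realized_in _ p
  exact Theory.CompleteType.formula_mem_typeOf.2 (Formula.realize_top.2 trivial)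

/-- `s` is defined by some formula that belongs to the type `p`. -/
def TypeMem (s : Set (Fin m → M)) : Prop :=
  ∃ F : L[[M]].Formula (Fin m), s = {x | F.Realize x} ∧ Formula.equivSentence F ∈ p

theorem typeMem_setOf_realize_iff :
    TypeMem p {x | F.Realize x} ↔ Formula.equivSentence F ∈ p :=
  ⟨fun ⟨_, h, hG⟩ => equivSentence_mem_of_imp p (fun x hx => (Set.ext_iff.1 h x).2 hx) hG,
    fun h => ⟨F, rfl, h⟩⟩

theorem typeMem_setOf_realize_sum_elim_iff (φ : L.Formula (Fin m ⊕ Fin n)) (b : Fin n → M) :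
    TypeMem p {x | φ.Realize (Sum.elim x b)} ↔ paramSentence φ b ∈ p := by
  simp only [← realize_instantiate]
  exact typeMem_setOf_realize_iff p

theorem defPred_typeMem {p : (L[[M]].completeTheory M).CompleteType (Fin m)}
    (hp : IsDefinableType p) {S : Set ((Fin m → M) × (Fin n → M))} (hS : DefPred L M (· ∈ S)) :
    DefPred L M fun b : Fin n → M => TypeMem p {x | (x, b) ∈ S} := by
  obtain ⟨k, φ, c, hφ⟩ := definable_univ_iff_exists_formula.1 hS
  let φ' : L.Formula (Fin m ⊕ Fin (n + k)) := φ.relabel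
    (Sum.elim (Sum.map id (Fin.castAdd k)) (Sum.inr ∘ Fin.natAdd n))
  have hφ' (b : Fin n → M) :
      {x | (x, b) ∈ S} = {x | φ'.Realize (Sum.elim x (Fin.append b c))} := by
    ext x
    refine (Set.ext_iff.1 hφ (Sum.elim x b)).trans ?_
    have hval : Sum.elim (Sum.elim x b) c = Sum.elim x (Fin.append b c) ∘
        Sum.elim (Sum.map id (Fin.castAdd k)) (Sum.inr ∘ Fin.natAdd n) := by
      funext i
      rcases i with (i | i) | i <;> simp
    exact (iff_of_eq (congrArg φ.Realize hval)).trans Formula.realize_relabel.symm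
  obtain ⟨l, ψ, d, hψ⟩ := hp (n + k) φ'
  have hdef : DefPred L M fun b : Fin (n + k) → M => paramSentence φ' b ∈ p :=
    definable_univ_iff_exists_formula.2 ⟨l, ψ, d, hψ⟩
  refine (hdef.comp (DefMap.append DefMap.id (DefMap.const c))).congr fun b => ?_
  rw [hφ' b, typeMem_setOf_realize_sum_elim_iff]

end Types

variable {L : Language} {M : Type u} [L.Structure M] {m n : ℕ}
  {p : (L[[M]].completeTheory M).CompleteType (Fin m)}

/-- The definable ultrafilter of the sets defined by the formulas of a definable type. -/
def DefUltrafilter.ofType (hp : IsDefinableType p) : DefUltrafilter L M (Fin m → M) where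
  mem := TypeMem p
  univ_mem := ⟨⊤, by simp, equivSentence_top_mem p⟩
  compl_mem_iff hs := by
    obtain ⟨F, rfl⟩ := exists_formula_of_defPred hs
    rw [typeMem_setOf_realize_iff, ← equivSentence_not_mem_iff, ← typeMem_setOf_realize_iff]
    rfl
  mem_of_subset hs ht hst := by
    obtain ⟨F, rfl⟩ := exists_formula_of_defPred hs
    obtain ⟨G, rfl⟩ := exists_formula_of_defPred ht
    rw [typeMem_setOf_realize_iff, typeMem_setOf_realize_iff]
    exact equivSentence_mem_of_imp p hst
  inter_mem hs ht hps hpt := by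
    obtain ⟨F, rfl⟩ := exists_formula_of_defPred hs
    obtain ⟨G, rfl⟩ := exists_formula_of_defPred ht
    rw [typeMem_setOf_realize_iff] at hps hpt
    exact ⟨F ⊓ G, by ext; simp, (equivSentence_inf_mem_iff p).2 ⟨hps, hpt⟩⟩
  defPred_mem := defPred_typeMem hp

theorem restrictTo_eq_image_trace (hp : IsDefinableType p) (A : Set M)
    (φ : L.Formula (Fin m ⊕ Fin n)) :
    restrictTo A φ p = paramSentence φ ''
      trace A {z | φ.Realize (Sum.elim z.1 z.2)} (DefUltrafilter.ofType hp) := by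
  ext σ
  constructor
  · rintro ⟨b, hb, rfl, hbp⟩
    exact ⟨b, ⟨hb, (typeMem_setOf_realize_sum_elim_iff p φ b).2 hbp⟩, rfl⟩
  · rintro ⟨b, ⟨hb, hbp⟩, rfl⟩
    exact ⟨b, hb, rfl, (typeMem_setOf_realize_sum_elim_iff p φ b).1 hbp⟩

theorem defPred_realize_sum_elim (φ : L.Formula (Fin m ⊕ Fin n)) :
    DefPred L M fun z : (Fin m → M) × (Fin n → M) => φ.Realize (Sum.elim z.1 z.2) := by
  have hdef : (Set.univ : Set M).Definable L {w : Fin m ⊕ Fin n → M | φ.Realize w} :=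
    (empty_definable_iff.2 ⟨φ, rfl⟩).mono (empty_subset _)
  refine (congrArg (Set.univ.Definable L) (Set.ext fun w => ?_)).mp hdef
  exact iff_of_eq (congrArg φ.Realize (Sum.elim_comp_inl_inr w).symm)

end OMinimal

/-- If `M` is o-minimal, `A ⊆ M` is an infinite definable set and `φ(x;y)` is a formula, then
the set `{p|_{φ,A} : p ∈ S_x^def(M)}` of restrictions of definable types over `M` has
cardinality at most `|A|`. -/
theorem card_restrictions_of_definable_types_le {L : FirstOrder.Language.{u, u}} {M : Type u}
    [L.Structure M] [LinearOrder M] (hM : IsOMinimal L M) (A : Set M)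
    (hAdef : (Set.univ : Set M).Definable₁ L A) (hAinf : A.Infinite)
    {m n : ℕ} (φ : L.Formula (Fin m ⊕ Fin n)) :
    #{q : Set ((L[[M]])[[Fin m]].Sentence) |
        ∃ p : (L[[M]].completeTheory M).CompleteType (Fin m),
          IsDefinableType p ∧ q = restrictTo A φ p} ≤ #A := by
  have := hM.denselyOrdered
  have := hM.noMinOrder
  have := hM.noMaxOrder
  have : Nonempty M := hAinf.nonempty.to_type
  let _ : TopologicalSpace M := Preorder.topology M
  have : OrderTopology M := ⟨rfl⟩
  have : OMinimal.TameOrder L M := OMinimal.tameOrder_of_isOMinimal hM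
  have hκ : ℵ₀ ≤ #A := infinite_coe_iff.2 hAinf |> infinite_iff.1
  have htraces := OMinimal.fewTraces_fin hκ (OMinimal.definable₁_iff_defPred.1 hAdef) le_rfl m n
    {z | φ.Realize (Sum.elim z.1 z.2)} (OMinimal.defPred_realize_sum_elim φ)
  refine (mk_le_mk_of_subset ?_).trans ((mk_image_le (f := (paramSentence φ '' ·))).trans htraces)
  rintro _ ⟨p, hp, rfl⟩
  exact ⟨_, mem_range_self (OMinimal.DefUltrafilter.ofType hp),
    (OMinimal.restrictTo_eq_image_trace hp A φ).symm⟩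
end

section
/- Let M be an o-minimal structure and let (A, τ) be an infinite topological space definable in M. Then the topological weight of (A, τ) is at most |A|, i.e. τ has a basis of cardinality at most |A|. -/
open FirstOrder FirstOrder.Language Set Cardinal Filter Topology

universe u

/-- A topological space `(A, t)` is definable in the structure `M` when `A ⊆ M^n` is a
definable set and the topology `t` admits a definable basis, i.e. a basis of the form
`{ψ(A;b) : b ∈ S}` for some formula `ψ(x;y)` and definable set `S ⊆ M^|y|`. -/
def IsDefinableTopSpace (L : FirstOrder.Language) {M : Type*} [L.Structure M] {n : ℕ}
    (A : Set (Fin n → M)) (t : TopologicalSpace A) : Prop :=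
  (Set.univ : Set M).Definable L A ∧
  ∃ (k : ℕ) (ψ : L.Formula (Fin n ⊕ Fin k)) (S : Set (Fin k → M)),
    (Set.univ : Set M).Definable L S ∧
    @TopologicalSpace.IsTopologicalBasis A t
      ((fun b => {x : A | ψ.Realize (Sum.elim (x : Fin n → M) b)}) '' S)

/-!
The sets `{x ∈ A | R x b}` cut out of `A` by a definable relation `R` number at most `|A|`; this is
proved by induction on the length of `b = (z, y)`. For fixed `y`, let `D` be the union over `x ∈ A`
of the frontiers of the definable sets `Q x = {z | R x (z, y)} ⊆ M`. If `z` lies on the frontier of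
some `Q x`, it is the `i`-th point of that frontier for some `i`. If `z ∉ D`, each `Q x` is
constant on the piece of `z` in the decomposition of `M` by the finite set `frontier D`, so `z` may
be replaced by any point of that piece. In both cases `z` is replaced by a description definable
from `y` and one of `|A| · ℵ₀` many labels. A finite space has its minimal neighbourhoods as a
basis.
-/

theorem notMem_frontier_iff_eventually {X : Type*} [TopologicalSpace X] {s : Set X} {e : X} :
    e ∉ frontier s ↔ ∀ᶠ u in 𝓝 e, (u ∈ s ↔ e ∈ s) := by
  by_cases he : e ∈ s
  · simp only [he, iff_true]
    exact (mem_interior_iff_notMem_frontier he).symm.trans mem_interior_iff_mem_nhds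
  · rw [← frontier_compl, ← mem_interior_iff_notMem_frontier he, mem_interior_iff_mem_nhds]
    simp only [he, iff_false]
    rfl

theorem exists_isTopologicalBasis_mk_le {X : Type*} [TopologicalSpace X] [AlexandrovDiscrete X] :
    ∃ B : Set (Set X), TopologicalSpace.IsTopologicalBasis B ∧ #B ≤ #X := by
  refine ⟨range fun x => nhdsKer {x},
    TopologicalSpace.isTopologicalBasis_of_isOpen_of_nhds ?_ ?_, mk_range_le⟩
  · rintro _ ⟨x, rfl⟩
    exact isOpen_nhdsKer
  · intro x U hx hU
    exact ⟨_, ⟨x, rfl⟩, subset_nhdsKer rfl, nhdsKer_minimal (singleton_subset_iff.2 hx) hU⟩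

section ConstantOff

variable {M : Type*} [LinearOrder M]

/-- Membership in `s` does not change along any closed interval that misses `E`. For finite `E`
this is a form of o-minimal tameness that is evidently closed under boolean operations. -/
def IsConstantOff (s E : Set M) : Prop :=
  ∀ ⦃x y⦄, Disjoint (uIcc x y) E → (x ∈ s ↔ y ∈ s)

namespace IsConstantOff

variable {s t E E' : Set M}

theorem mono (h : IsConstantOff s E) (hE : E ⊆ E') : IsConstantOff s E' :=
  fun _ _ hxy => h (hxy.mono_right hE)

theorem self (s : Set M) : IsConstantOff s s := fun _ _ hxy =>
  iff_of_false (disjoint_left.1 hxy left_mem_uIcc) (disjoint_left.1 hxy right_mem_uIcc)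

theorem union (hs : IsConstantOff s E) (ht : IsConstantOff t E') :
    IsConstantOff (s ∪ t) (E ∪ E') := fun _ _ hxy =>
  or_congr (hs (disjoint_union_right.1 hxy).1) (ht (disjoint_union_right.1 hxy).2)

theorem inter (hs : IsConstantOff s E) (ht : IsConstantOff t E') :
    IsConstantOff (s ∩ t) (E ∪ E') := fun _ _ hxy =>
  and_congr (hs (disjoint_union_right.1 hxy).1) (ht (disjoint_union_right.1 hxy).2)

theorem iUnion {ι : Sort*} {s E : ι → Set M} (h : ∀ i, IsConstantOff (s i) (E i)) :
    IsConstantOff (⋃ i, s i) (⋃ i, E i) := fun x y hxy => by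
  simpa only [mem_iUnion] using exists_congr fun i => h i (disjoint_iUnion_right.1 hxy i)

end IsConstantOff

theorem isConstantOff_setOf_lt_coe (a : WithBot M) :
    IsConstantOff {x : M | a < x} ((↑) ⁻¹' {a}) := fun x y hxy => by
  induction a using WithBot.recBotCoe with
  | bot => simp
  | coe a =>
    have ha : a ∉ uIcc x y := disjoint_right.1 hxy rfl
    rw [mem_uIcc] at ha
    simp only [mem_ofPred_eq, WithBot.coe_lt_coe]
    grind

theorem isConstantOff_setOf_coe_lt (a : WithTop M) :
    IsConstantOff {x : M | (x : WithTop M) < a} ((↑) ⁻¹' {a}) := fun x y hxy => by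
  induction a using WithTop.recTopCoe with
  | top => simp
  | coe a =>
    have ha : a ∉ uIcc x y := disjoint_right.1 hxy rfl
    rw [mem_uIcc] at ha
    simp only [mem_ofPred_eq, WithTop.coe_lt_coe]
    grind

theorem IsFinUnionPointsIntervals.exists_finite_isConstantOff {s : Set M}
    (hs : IsFinUnionPointsIntervals s) : ∃ E : Set M, E.Finite ∧ IsConstantOff s E := by
  obtain ⟨P, I, rfl⟩ := hs
  refine ⟨_, P.finite_toSet.union (I.finite_toSet.biUnion fun p _ => .union ?_ ?_),
    (IsConstantOff.self _).union (.iUnion fun p => .iUnion fun _ =>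
      (isConstantOff_setOf_lt_coe p.1).inter (isConstantOff_setOf_coe_lt p.2))⟩
  · exact (finite_singleton p.1).preimage WithBot.coe_injective.injOn
  · exact (finite_singleton p.2).preimage WithTop.coe_injective.injOn

section Frontier

variable [TopologicalSpace M] {s E : Set M} {e : M}

namespace IsConstantOff

variable [OrderTopology M]

theorem frontier_subset (h : IsConstantOff s E) (hE : E.Finite) : frontier s ⊆ E := by
  intro p hp
  by_contra hpE
  obtain ⟨a, b, hp_mem, hnhds, hsub⟩ :=
    exists_Icc_mem_subset_of_mem_nhds (hE.isClosed.isOpen_compl.mem_nhds hpE)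
  refine notMem_frontier_iff_eventually.2 ?_ hp
  filter_upwards [hnhds] with u hu
  exact h (disjoint_left.2 fun q hq => hsub (ordConnected_Icc.uIcc_subset hu hp_mem hq))

variable [DenselyOrdered M]

theorem mem_iff_of_notMem_frontier (h : IsConstantOff s E) (he : e ∉ frontier s) {x : M}
    (hxe : Disjoint (uIcc x e) (E \ {e})) : x ∈ s ↔ e ∈ s := by
  have hnear := notMem_frontier_iff_eventually.1 he
  suffices x ≠ e → ∃ u, (u ∈ s ↔ e ∈ s) ∧ uIcc x u ⊆ uIcc x e \ {e} by
    rcases eq_or_ne x e with rfl | hne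
    · rfl
    obtain ⟨u, hu, hsub⟩ := this hne
    exact (h (disjoint_left.2 fun q hq hqE =>
      disjoint_left.1 hxe (hsub hq).1 ⟨hqE, (hsub hq).2⟩)).trans hu
  intro hne
  rcases hne.lt_or_gt with hlt | hgt
  · have : (𝓝[<] e).NeBot := nhdsLT_neBot_of_exists_lt ⟨x, hlt⟩
    obtain ⟨u, hu, hxu, hue⟩ :=
      ((hnear.filter_mono nhdsWithin_le_nhds).and (Ioo_mem_nhdsLT hlt)).exists
    refine ⟨u, hu, fun q hq => ?_⟩
    rw [uIcc_of_le hxu.le] at hq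
    rw [uIcc_of_le hlt.le]
    exact ⟨⟨hq.1, hq.2.trans hue.le⟩, (hq.2.trans_lt hue).ne⟩
  · have : (𝓝[>] e).NeBot := nhdsGT_neBot_of_exists_gt ⟨x, hgt⟩
    obtain ⟨u, hu, heu, hux⟩ :=
      ((hnear.filter_mono nhdsWithin_le_nhds).and (Ioo_mem_nhdsGT hgt)).exists
    refine ⟨u, hu, fun q hq => ?_⟩
    rw [uIcc_of_ge hux.le] at hq
    rw [uIcc_of_ge hgt.le]
    exact ⟨⟨heu.le.trans hq.1, hq.2⟩, (heu.trans_le hq.1).ne'⟩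

theorem sdiff_singleton (h : IsConstantOff s E) (he : e ∉ frontier s) :
    IsConstantOff s (E \ {e}) := by
  intro x y hxy
  by_cases hmem : e ∈ uIcc x y
  · have hx := hxy.mono_left (uIcc_subset_uIcc left_mem_uIcc hmem)
    have hy := hxy.mono_left (uIcc_subset_uIcc right_mem_uIcc hmem)
    exact (h.mem_iff_of_notMem_frontier he hx).trans (h.mem_iff_of_notMem_frontier he hy).symm
  · exact h (disjoint_left.2 fun q hq hqE =>
      disjoint_left.1 hxy hq ⟨hqE, fun hqe => hmem (hqe ▸ hq)⟩)

theorem frontier_of_finite (h : IsConstantOff s E) (hE : E.Finite) :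
    IsConstantOff s (frontier s) := by
  suffices ∀ D : Set M, D.Finite → Disjoint D (frontier s) → IsConstantOff s (E \ D) from
    (this (E \ frontier s) hE.sdiff disjoint_sdiff_left).mono (by simp [sdiff_sdiff_right_self])
  intro D hD
  induction D, hD using Set.Finite.induction_on with
  | empty => simpa using h
  | @insert e D _ _ ih =>
    intro hdisj
    rw [disjoint_insert_left] at hdisj
    rw [← union_singleton, ← Set.sdiff_sdiff]
    exact (ih hdisj.2).sdiff_singleton hdisj.1

end IsConstantOff

end Frontier

end ConstantOff

section OrderCell

variable {M : Type*} [LinearOrder M] {F : Set M} {i : ℕ} {p : Prop} {z z' : M}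

/-- The pieces into which a finite set `F` decomposes the line: the points of `F` (`p` true) and
the open gaps between them (`p` false), both labelled by the number `i` of points of `F` to their
left. -/
def orderCell (F : Set M) (i : ℕ) (p : Prop) : Set M :=
  {z | (F ∩ Iio z).encard = i ∧ (z ∈ F ↔ p)}

theorem exists_mem_orderCell (hF : F.Finite) (z : M) : ∃ i, z ∈ orderCell F i (z ∈ F) :=
  (hF.inter_of_left _).exists_encard_eq_coe.imp fun _ hi => ⟨hi, Iff.rfl⟩

theorem disjoint_uIcc_of_mem_orderCell (hz : z ∈ orderCell F i p) (hz' : z' ∈ orderCell F i p)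
    (hne : z ≠ z') : Disjoint (uIcc z z') F := by
  wlog hlt : z < z' generalizing z z'
  · rw [uIcc_comm]
    exact this hz' hz hne.symm (hne.lt_or_gt.resolve_left hlt)
  have hsame : F ∩ Iio z = F ∩ Iio z' :=
    (finite_of_encard_eq_coe hz.1).eq_of_subset_of_encard_le
      (inter_subset_inter_right _ (Iio_subset_Iio hlt.le)) (hz'.1.trans hz.1.symm).le
  have hnone : ∀ q ∈ F, z ≤ q → ¬ q < z' := fun q hqF hzq hqz' =>
    hzq.not_gt (hsame.ge ⟨hqF, hqz'⟩).2
  rw [uIcc_of_le hlt.le, disjoint_left]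
  intro q hq hqF
  obtain rfl : q = z' := hq.2.eq_of_not_lt (hnone q hqF hq.1)
  exact hnone z (hz.2.2 (hz'.2.1 hqF)) le_rfl hlt

theorem eq_of_mem_orderCell (hz : z ∈ orderCell F i p) (hz' : z' ∈ orderCell F i p)
    (hzF : z ∈ F) : z = z' := by
  by_contra hne
  exact disjoint_left.1 (disjoint_uIcc_of_mem_orderCell hz hz' hne) left_mem_uIcc hzF

theorem succ_le_encard_inter_Iio_iff :
    ((i + 1 : ℕ) : ℕ∞) ≤ (F ∩ Iio z).encard ↔
      ∃ d, d ∈ F ∧ d < z ∧ (i : ℕ∞) ≤ (F ∩ Iio d).encard := by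
  constructor
  · intro h
    obtain ⟨T, hTF, hT⟩ := exists_subset_encard_eq h
    have hTne : T.Nonempty := nonempty_of_encard_ne_zero (by rw [hT]; simp)
    obtain ⟨d, hdT, hmax⟩ := exists_max_image T id (finite_of_encard_eq_coe hT) hTne
    have hsub : T ⊆ insert d (F ∩ Iio d) := fun q hq =>
      (hmax q hq).eq_or_lt.imp id fun hlt => ⟨(hTF hq).1, hlt⟩
    have hcard := (encard_le_encard hsub).trans (encard_insert_le _ _)
    rw [hT, Nat.cast_succ] at hcard
    exact ⟨d, (hTF hdT).1, (hTF hdT).2, (ENat.add_le_add_iff_right ENat.one_ne_top).1 hcard⟩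
  · rintro ⟨d, hdF, hdz, hi⟩
    have hsub : insert d (F ∩ Iio d) ⊆ F ∩ Iio z :=
      insert_subset ⟨hdF, hdz⟩ (inter_subset_inter_right _ (Iio_subset_Iio hdz.le))
    calc ((i + 1 : ℕ) : ℕ∞) ≤ (F ∩ Iio d).encard + 1 := by
          rw [Nat.cast_succ]; gcongr
      _ = (insert d (F ∩ Iio d)).encard := (encard_insert_of_notMem (by simp)).symm
      _ ≤ (F ∩ Iio z).encard := encard_le_encard hsub

end OrderCell

section DefinableFamily

variable {L : FirstOrder.Language} {M : Type*} [L.Structure M] {C : Set M} {α β : Type*}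

theorem definable_exists {R : (α → M) → M → Prop}
    (h : C.Definable L {w : Option α → M | R (w ∘ some) (w none)}) :
    C.Definable L {v | ∃ z, R v z} := by
  have := (h.preimage_comp (fun o : Option α => o.elim (Sum.inr ()) Sum.inl)).exists_of_finite
  convert this using 1
  ext v
  exact ⟨fun ⟨z, hz⟩ => ⟨fun _ => z, hz⟩, fun ⟨u, hu⟩ => ⟨u (), hu⟩⟩

theorem definable_lt_apply [LT M] (hlt : C.Definable L {x : Fin 2 → M | x 0 < x 1}) (i j : α) :
    C.Definable L {w : α → M | w i < w j} :=
  hlt.preimage_comp ![i, j]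

variable (L C) in
/-- The family `X v` of subsets of `M`, indexed by tuples `v`, is definable over `C`. The member
`z` of `X v` is stored in the coordinate `none`. -/
def DefinableFamily (X : (α → M) → Set M) : Prop :=
  C.Definable L {w : Option α → M | w none ∈ X (w ∘ some)}

namespace DefinableFamily

variable {X Y : (α → M) → Set M}

theorem definable_apply_mem (hX : DefinableFamily L C X) (f : α → β) (z : β) :
    C.Definable L {w : β → M | w z ∈ X (w ∘ f)} :=
  Definable.preimage_comp (fun o : Option α => o.elim z f) hX

theorem comp (hX : DefinableFamily L C X) (f : α → β) :
    DefinableFamily L C fun v : β → M => X (v ∘ f) :=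
  hX.definable_apply_mem (some ∘ f) none

theorem compl (hX : DefinableFamily L C X) : DefinableFamily L C fun v => (X v)ᶜ :=
  Definable.compl hX

theorem inter (hX : DefinableFamily L C X) (hY : DefinableFamily L C Y) :
    DefinableFamily L C fun v => X v ∩ Y v :=
  Definable.inter hX hY

theorem definable_nonempty (hX : DefinableFamily L C X) :
    C.Definable L {v | (X v).Nonempty} :=
  definable_exists hX

theorem definable_mem [Finite α] (hX : DefinableFamily L C X) {f : (β → M) → α → M}
    {g : (β → M) → M} (hf : C.DefinableMap L f) (hg : C.DefinableFun L g) :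
    C.Definable L {w | g w ∈ X (f w)} := by
  have hF : C.DefinableMap L fun w (o : Option α) => o.elim (g w) (f w) := by
    rintro (_ | a)
    exacts [hg, hf a]
  exact Definable.preimage_map hF hX

theorem definable₁ [Finite α] (hX : DefinableFamily L univ X) (v : α → M) :
    (univ : Set M).Definable₁ L (X v) :=
  hX.definable_mem (fun a => L.definableFun_const _ (mem_univ (v a))) (.proj L)

theorem specialize [Finite α] [Finite β] {X : (α ⊕ β → M) → Set M}
    (hX : DefinableFamily L univ X) (x : α → M) :
    DefinableFamily L univ fun y => X (Sum.elim x y) := by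
  refine hX.definable_mem (f := fun w => Sum.elim x (w ∘ some)) ?_ (.proj L)
  rintro (a | b)
  exacts [L.definableFun_const _ (mem_univ _), .proj L]

section Order

variable [LinearOrder M]

theorem le_encard_inter_Iio (hX : DefinableFamily L C X)
    (hlt : C.Definable L {x : Fin 2 → M | x 0 < x 1}) (i : ℕ) :
    DefinableFamily L C fun v => {z | (i : ℕ∞) ≤ (X v ∩ Iio z).encard} := by
  induction i with
  | zero => simp [DefinableFamily]
  | succ i ih =>
    simp only [succ_le_encard_inter_Iio_iff]
    exact definable_exists ((hX.definable_apply_mem (some ∘ some) none).inter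
      ((definable_lt_apply hlt none (some none)).inter
        (ih.definable_apply_mem (some ∘ some) none)))

theorem orderCell (hX : DefinableFamily L C X)
    (hlt : C.Definable L {x : Fin 2 → M | x 0 < x 1}) (i : ℕ) (p : Prop) :
    DefinableFamily L C fun v => orderCell (X v) i p := by
  have hcard : DefinableFamily L C fun v => {z | (X v ∩ Iio z).encard = i} := by
    have heq (m : ℕ∞) : m = i ↔ (i : ℕ∞) ≤ m ∧ ¬ ((i + 1 : ℕ) : ℕ∞) ≤ m := by
      rw [Nat.cast_succ, not_le, ENat.lt_add_one_iff (ENat.natCast_ne_top i), le_antisymm_iff,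
        and_comm]
    simp only [heq]
    exact (hX.le_encard_inter_Iio hlt i).inter (hX.le_encard_inter_Iio hlt (i + 1)).compl
  by_cases hp : p
  · simp only [_root_.orderCell, hp, iff_true]
    exact hcard.inter hX
  · simp only [_root_.orderCell, hp, iff_false]
    exact hcard.inter hX.compl

variable [TopologicalSpace M] [OrderTopology M] [NoMinOrder M] [NoMaxOrder M]

theorem closure (hX : DefinableFamily L C X)
    (hlt : C.Definable L {x : Fin 2 → M | x 0 < x 1}) :
    DefinableFamily L C fun v => closure (X v) := by
  have hcompl : DefinableFamily L C fun v => {z | ∃ a, ∃ b, (a < z ∧ z < b) ∧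
      ¬ ∃ u, (a < u ∧ u < b) ∧ u ∈ X v} :=
    definable_exists <| definable_exists <|
      ((definable_lt_apply hlt (some none) (some (some none))).inter
        (definable_lt_apply hlt (some (some none)) none)).inter <|
      .compl <| definable_exists <|
      ((definable_lt_apply hlt (some (some none)) none).inter
        (definable_lt_apply hlt none (some none))).inter <|
      hX.definable_apply_mem (some ∘ some ∘ some ∘ some) none
  convert hcompl.compl using 2 with v
  ext z
  rw [mem_closure_iff_nhds_basis (nhds_basis_Ioo z)]
  simp only [Prod.forall, mem_Ioo, mem_compl_iff, mem_ofPred_eq]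
  grind

theorem frontier (hX : DefinableFamily L C X)
    (hlt : C.Definable L {x : Fin 2 → M | x 0 < x 1}) :
    DefinableFamily L C fun v => frontier (X v) := by
  simpa only [frontier_eq_closure_inter_closure]
    using (hX.closure hlt).inter (hX.compl.closure hlt)

end Order

end DefinableFamily

theorem definableFamily_firstParam {k : ℕ} {R : Set (α ⊕ Fin (k + 1) → M)}
    (hR : C.Definable L R) : DefinableFamily L C fun v : α ⊕ Fin k → M =>
      {z | Sum.elim (v ∘ Sum.inl) (Fin.cons z (v ∘ Sum.inr)) ∈ R} := by
  unfold DefinableFamily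
  convert hR.preimage_comp
    (Sum.elim (some ∘ Sum.inl) (Fin.cons none (some ∘ Sum.inr)) : _ → Option (α ⊕ Fin k)) using 1
  ext w
  simp only [mem_ofPred_eq, mem_preimage, Sum.comp_elim, Function.comp_assoc, Fin.comp_cons]

end DefinableFamily

section OMinimal

variable {L : FirstOrder.Language} {M : Type*} [L.Structure M] [LinearOrder M]

namespace IsOMinimal

theorem definable_lt_of_params (hM : IsOMinimal L M) (C : Set M) :
    C.Definable L {x : Fin 2 → M | x 0 < x 1} :=
  hM.definable_lt.mono (empty_subset C)

variable [TopologicalSpace M] [OrderTopology M] {s : Set M}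

theorem finite_frontier (hM : IsOMinimal L M) (hs : (univ : Set M).Definable₁ L s) :
    (frontier s).Finite := by
  obtain ⟨E, hE, hsE⟩ := (hM.tame s hs).exists_finite_isConstantOff
  exact hE.subset (hsE.frontier_subset hE)

theorem isConstantOff_frontier (hM : IsOMinimal L M) (hs : (univ : Set M).Definable₁ L s) :
    IsConstantOff s (frontier s) := by
  have := hM.denselyOrdered
  obtain ⟨E, hE, hsE⟩ := (hM.tame s hs).exists_finite_isConstantOff
  exact hsE.frontier_of_finite hE

end IsOMinimal

section CutPoints

variable [TopologicalSpace M] {α β : Type*} {A : Set (α → M)} {Q : (α ⊕ β → M) → Set M}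

/-- The parameters `z` at which membership in some `Q (x, y)`, `x ∈ A`, may change. -/
def criticalSet (A : Set (α → M)) (Q : (α ⊕ β → M) → Set M) (y : β → M) : Set M :=
  ⋃ x ∈ A, frontier (Q (Sum.elim x y))

/-- The finite sets whose cells suffice to describe, up to the trace on `A`, every parameter `z` of
`Q`: the frontiers of the individual sets `Q (x, y)`, and that of `criticalSet A Q y`. -/
def cutPoints (A : Set (α → M)) (Q : (α ⊕ β → M) → Set M) : Option A → (β → M) → Set M
  | some x, y => frontier (Q (Sum.elim x y))
  | none, y => frontier (criticalSet A Q y)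

variable [OrderTopology M] [Finite α]

theorem definableFamily_criticalSet (hM : IsOMinimal L M) (hA : (univ : Set M).Definable L A)
    (hQ : DefinableFamily L univ Q) : DefinableFamily L univ (criticalSet A Q) := by
  have := hM.noMinOrder
  have := hM.noMaxOrder
  have hpair : (univ : Set M).Definable L {w : Option β ⊕ α → M | w ∘ Sum.inr ∈ A ∧
      w (Sum.inl none) ∈ frontier (Q (w ∘ Sum.elim Sum.inr (Sum.inl ∘ some)))} :=
    (hA.preimage_comp Sum.inr).inter
      ((hQ.frontier (hM.definable_lt_of_params _)).definable_apply_mem _ _)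
  unfold DefinableFamily
  convert hpair.exists_of_finite using 1
  ext w
  simp [criticalSet, Sum.comp_elim, ← Function.comp_assoc]

variable [Finite β]

theorem definableFamily_cutPoints (hM : IsOMinimal L M) (hA : (univ : Set M).Definable L A)
    (hQ : DefinableFamily L univ Q) (o : Option A) :
    DefinableFamily L univ (cutPoints A Q o) := by
  have := hM.noMinOrder
  have := hM.noMaxOrder
  have hlt := hM.definable_lt_of_params univ
  cases o with
  | none => exact (definableFamily_criticalSet hM hA hQ).frontier hlt
  | some x => exact (hQ.specialize x).frontier hlt

theorem finite_cutPoints (hM : IsOMinimal L M) (hA : (univ : Set M).Definable L A)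
    (hQ : DefinableFamily L univ Q) (o : Option A) (y : β → M) : (cutPoints A Q o y).Finite := by
  cases o with
  | none => exact hM.finite_frontier ((definableFamily_criticalSet hM hA hQ).definable₁ y)
  | some x => exact hM.finite_frontier (hQ.definable₁ (Sum.elim x y))

theorem mem_iff_of_disjoint_frontier_criticalSet (hM : IsOMinimal L M)
    (hA : (univ : Set M).Definable L A) (hQ : DefinableFamily L univ Q) {y : β → M} {z z' : M}
    (hz : z ∉ criticalSet A Q y) (hdisj : Disjoint (uIcc z z') (frontier (criticalSet A Q y)))
    {x : α → M} (hx : x ∈ A) : z ∈ Q (Sum.elim x y) ↔ z' ∈ Q (Sum.elim x y) := by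
  have hconst := hM.isConstantOff_frontier ((definableFamily_criticalSet hM hA hQ).definable₁ y)
  refine hM.isConstantOff_frontier (hQ.definable₁ _) (disjoint_left.2 fun q hq hqQ => hz ?_)
  have hq_crit : q ∈ criticalSet A Q y := mem_biUnion hx hqQ
  exact (hconst (hdisj.mono_left (uIcc_subset_uIcc left_mem_uIcc hq))).2 hq_crit

theorem exists_orderCell_cutPoints (hM : IsOMinimal L M) (hA : (univ : Set M).Definable L A)
    (hQ : DefinableFamily L univ Q) (y : β → M) (z : M) :
    ∃ o i p, z ∈ orderCell (cutPoints A Q o y) i p ∧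
      ∀ z' ∈ orderCell (cutPoints A Q o y) i p, ∀ x ∈ A,
        z ∈ Q (Sum.elim x y) ↔ z' ∈ Q (Sum.elim x y) := by
  by_cases hz : z ∈ criticalSet A Q y
  · obtain ⟨x₀, hx₀, hzx₀⟩ := mem_iUnion₂.1 hz
    obtain ⟨i, hi⟩ := exists_mem_orderCell (finite_cutPoints hM hA hQ (some ⟨x₀, hx₀⟩) y) z
    refine ⟨_, i, _, hi, fun z' hz' x _ => ?_⟩
    rw [eq_of_mem_orderCell hi hz' hzx₀]
  · obtain ⟨i, hi⟩ := exists_mem_orderCell (finite_cutPoints hM hA hQ none y) z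
    refine ⟨_, i, _, hi, fun z' hz' x hx => ?_⟩
    rcases eq_or_ne z z' with rfl | hne
    · rfl
    · exact mem_iff_of_disjoint_frontier_criticalSet hM hA hQ hz
        (disjoint_uIcc_of_mem_orderCell hi hz' hne) hx

end CutPoints

section Counting

variable {α β : Type*}

/-- The member with parameter `b` of the family of subsets of `A` given by the relation `R`. -/
def tupleFiber (A : Set (α → M)) (R : Set (α ⊕ β → M)) (b : β → M) : Set A :=
  {x | Sum.elim (x : α → M) b ∈ R}

theorem exists_relations_with_fewer_params (hM : IsOMinimal L M) [Finite α] {A : Set (α → M)}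
    (hA : (univ : Set M).Definable L A) {k : ℕ} {R : Set (α ⊕ Fin (k + 1) → M)}
    (hR : (univ : Set M).Definable L R) :
    ∃ T : Option A × ℕ × Prop → Set (α ⊕ Fin k → M), (∀ j, (univ : Set M).Definable L (T j)) ∧
      range (tupleFiber A R) ⊆ ⋃ j, range (tupleFiber A (T j)) := by
  let : TopologicalSpace M := Preorder.topology M
  have : OrderTopology M := ⟨rfl⟩
  let Q (v : α ⊕ Fin k → M) : Set M :=
    {z | Sum.elim (v ∘ Sum.inl) (Fin.cons z (v ∘ Sum.inr)) ∈ R}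
  have hQ : DefinableFamily L univ Q := definableFamily_firstParam hR
  refine ⟨fun (o, i, p) => {v | (orderCell (cutPoints A Q o (v ∘ Sum.inr)) i p ∩ Q v).Nonempty},
    fun (o, i, p) => ?_, ?_⟩
  · have hcell := (definableFamily_cutPoints hM hA hQ o).orderCell (hM.definable_lt_of_params _) i p
    exact ((hcell.comp Sum.inr).inter hQ).definable_nonempty
  · rintro _ ⟨b, rfl⟩
    obtain ⟨z, y, rfl⟩ : ∃ z y, b = Fin.cons z y := ⟨_, _, (Fin.cons_self_tail b).symm⟩
    obtain ⟨o, i, p, hz, hcell⟩ := exists_orderCell_cutPoints hM hA hQ y z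
    refine mem_iUnion.2 ⟨(o, i, p), y, Set.ext fun x => ⟨?_, fun hx => ⟨z, hz, hx⟩⟩⟩
    rintro ⟨z', hz', hx⟩
    exact (hcell z' hz' x x.2).2 hx

theorem mk_range_tupleFiber_le (hM : IsOMinimal L M) [Finite α] {A : Set (α → M)}
    (hA : (univ : Set M).Definable L A) (hAinf : A.Infinite) {k : ℕ}
    {R : Set (α ⊕ Fin k → M)} (hR : (univ : Set M).Definable L R) :
    #(range (tupleFiber A R)) ≤ #A := by
  have hA_card : ℵ₀ ≤ #A := infinite_iff.1 hAinf.to_subtype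
  induction k with
  | zero =>
    have hone : #(range (tupleFiber A R)) ≤ 1 :=
      mk_le_one_iff_set_subsingleton.2 (subsingleton_range _)
    exact hone.trans (one_le_aleph0.trans hA_card)
  | succ k ih =>
    obtain ⟨T, hT, hsub⟩ := exists_relations_with_fewer_params hM hA hR
    have hlabels : #(Option A × ℕ × Prop) ≤ #A := by
      rw [mk_prod, mk_option, lift_id'.{0}]
      exact mul_le_of_le hA_card (add_le_of_le hA_card le_rfl (one_le_aleph0.trans hA_card))
        ((lift_le_aleph0.2 mk_le_aleph0).trans hA_card)
    calc #(range (tupleFiber A R)) ≤ #(⋃ j, range (tupleFiber A (T j))) := mk_le_mk_of_subset hsub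
      _ ≤ #(Option A × ℕ × Prop) * ⨆ j, #(range (tupleFiber A (T j))) := mk_iUnion_le _
      _ ≤ #A := mul_le_of_le hA_card hlabels (ciSup_le' fun j => ih (hT j))

end Counting

theorem weight_le_of_definable_top_space_general (hM : IsOMinimal L M) {α : Type*} [Finite α]
    {A : Set (α → M)} (hA : (univ : Set M).Definable L A) (t : TopologicalSpace A) {k : ℕ}
    {R : Set (α ⊕ Fin k → M)} (hR : (univ : Set M).Definable L R) {B₀ : Set (Set A)}
    (hB₀ : TopologicalSpace.IsTopologicalBasis B₀) (hB₀R : B₀ ⊆ range (tupleFiber A R)) :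
    ∃ B : Set (Set A), TopologicalSpace.IsTopologicalBasis B ∧ #B ≤ #A := by
  rcases A.finite_or_infinite with hfin | hinf
  · have := hfin.to_subtype
    exact exists_isTopologicalBasis_mk_le
  · exact ⟨B₀, hB₀, (mk_le_mk_of_subset hB₀R).trans (mk_range_tupleFiber_le hM hA hinf hR)⟩

end OMinimal

/-- An infinite topological space definable in an o-minimal structure has weight at most
`|A|`: its topology admits a basis of cardinality at most `|A|`. -/
theorem weight_le_of_definable_top_space {L : FirstOrder.Language.{u, u}} {M : Type u}
    [L.Structure M] [LinearOrder M] (hM : IsOMinimal L M) {n : ℕ} (A : Set (Fin n → M))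
    (t : TopologicalSpace A) (h : IsDefinableTopSpace L A t) (hAinf : A.Infinite) :
    ∃ B : Set (Set A), @TopologicalSpace.IsTopologicalBasis A t B ∧ #B ≤ #A := by
  obtain ⟨hA, k, ψ, S, -, hB⟩ := h
  have hψ : (∅ : Set M).Definable L (Set.ofPred ψ.Realize) := empty_definable_iff.2 ⟨ψ, rfl⟩
  exact weight_le_of_definable_top_space_general hM hA t (hψ.mono (empty_subset _)) hB
    (image_subset_range _ _)
end
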